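/- arXiv:1302.2638 — 4 statements merged into one kernel-verified Lean document; each statement's English description precedes it below -/
import Mathlib

section
/- Let n be a positive integer and let α ≥ 0 be a real number. For G drawn from the induced real Ginibre ensemble of size 2n with parameter α, and for every complex number z, ⟨det(z·I − G)·Tr(G)⟩ = −2(n+α)·z^{2n−1}. Consequently the odd-degree skew orthogonal polynomial Q_{2n+1}(z) := z·⟨det(z·I − G)⟩ + ⟨det(z·I − G)·Tr(G)⟩ equals z^{2n+1} − 2(n+α)·z^{2n−1}. -/
open MeasureTheory Matrix

/-- The (unnormalized) density of the induced real Ginibre ensemble of size `N`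
with parameter `α`: `det(G Gᵀ)^α exp(-Tr(G Gᵀ)/2)`. -/
noncomputable def inducedRealGinibreWeight (N : ℕ) (α : ℝ) (g : Fin N → Fin N → ℝ) : ℝ :=
  (Matrix.of g * (Matrix.of g)ᵀ).det ^ α *
    Real.exp (-(Matrix.of g * (Matrix.of g)ᵀ).trace / 2)

section
variable {ι : Type*} [Fintype ι] [DecidableEq ι]

theorem Matrix.sum_det_rows {κ : Type*} [Fintype κ] [DecidableEq κ] (M : ι → κ → ι → ℂ) :
    ∑ ε : ι → κ, (Matrix.of fun i => M i (ε i)).det = (Matrix.of fun i => ∑ s, M i s).det :=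
  ((Matrix.detRowAlternating (n := ι) (R := ℂ)).toMultilinearMap.map_sum M).symm

theorem Matrix.sum_det_sub_diagonal_units_mul (z : ℂ) (A : Matrix ι ι ℂ) :
    ∑ ε : ι → ℤˣ, (z • (1 : Matrix ι ι ℂ)
      - Matrix.diagonal (fun i => ((ε i : ℤ) : ℂ)) * A).det
      = 2 ^ Fintype.card ι * z ^ Fintype.card ι := by
  have h := Matrix.sum_det_rows (ι := ι) (κ := ℤˣ)
    fun i s j => (z • (1 : Matrix ι ι ℂ)) i j - ((s : ℤ) : ℂ) * A i j
  have h2 : (Matrix.of fun i => ∑ s : ℤˣ,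
      (fun j => (z • (1 : Matrix ι ι ℂ)) i j - ((s : ℤ) : ℂ) * A i j))
      = (2 * z) • (1 : Matrix ι ι ℂ) := by
    ext i j
    simp [UnitsInt.univ]
    ring
  rw [h2, Matrix.det_smul, Matrix.det_one, mul_one, mul_pow] at h
  rw [← h]
  refine Finset.sum_congr rfl fun ε _ => congrArg _ ?_
  ext i j
  simp [Matrix.diagonal_mul]

theorem Matrix.det_updateRow_smul_one (z : ℂ) (i : ι) (b : ι → ℂ) :
    ((z • (1 : Matrix ι ι ℂ)).updateRow i b).det = z ^ (Fintype.card ι - 1) * b i := by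
  rw [← Matrix.cramer_transpose_apply, Matrix.cramer_eq_adjugate_mulVec, Matrix.transpose_smul,
    Matrix.transpose_one, Matrix.adjugate_smul]
  simp [Matrix.smul_mulVec]

theorem Matrix.sum_det_sub_diagonal_units_mul_mul_trace (z : ℂ) (A : Matrix ι ι ℂ) :
    ∑ ε : ι → ℤˣ, (z • (1 : Matrix ι ι ℂ)
      - Matrix.diagonal (fun i => ((ε i : ℤ) : ℂ)) * A).det
        * (Matrix.diagonal (fun i => ((ε i : ℤ) : ℂ)) * A).trace
      = -(2 ^ Fintype.card ι * z ^ (Fintype.card ι - 1) * ∑ i, A i i ^ 2) := by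
  simp only [Matrix.trace, Matrix.diag_apply, Finset.mul_sum, Matrix.diagonal_mul]
  rw [Finset.sum_comm, ← Finset.sum_neg_distrib]
  refine Finset.sum_congr rfl fun k _ => ?_
  have h := Matrix.sum_det_rows (ι := ι) (κ := ℤˣ)
    fun i s j => (if i = k then ((s : ℤ) : ℂ) else 1) *
      ((z • (1 : Matrix ι ι ℂ)) i j - ((s : ℤ) : ℂ) * A i j)
  have h2 : (Matrix.of fun i => ∑ s : ℤˣ,
      (fun j => (if i = k then ((s : ℤ) : ℂ) else 1) *
      ((z • (1 : Matrix ι ι ℂ)) i j - ((s : ℤ) : ℂ) * A i j)))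
      = (2 : ℂ) • (z • (1 : Matrix ι ι ℂ)).updateRow k (fun j => -A k j) := by
    ext i j
    by_cases hi : i = k
    · subst hi
      simp [UnitsInt.univ]
      ring
    · simp [UnitsInt.univ, hi, Matrix.updateRow_apply]
      ring
  rw [h2, Matrix.det_smul, Matrix.det_updateRow_smul_one] at h
  have h3 : ∀ ε : ι → ℤˣ, (Matrix.of fun i => (fun j => (if i = k then ((ε i : ℤ) : ℂ) else 1) *
      ((z • (1 : Matrix ι ι ℂ)) i j - ((ε i : ℤ) : ℂ) * A i j))).det
      = ((ε k : ℤ) : ℂ) * (z • (1 : Matrix ι ι ℂ)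
      - Matrix.diagonal (fun i => ((ε i : ℤ) : ℂ)) * A).det := by
    intro ε
    have := Matrix.det_mul_column (fun i => if i = k then ((ε i : ℤ) : ℂ) else 1)
      (z • (1 : Matrix ι ι ℂ) - Matrix.diagonal (fun i => ((ε i : ℤ) : ℂ)) * A)
    rw [Finset.prod_ite_eq' Finset.univ k] at this
    simpa [Matrix.diagonal_mul] using this
  simp only [h3] at h
  rw [show -(2 ^ Fintype.card ι * z ^ (Fintype.card ι - 1) * A k k ^ 2)
    = (2 ^ Fintype.card ι * (z ^ (Fintype.card ι - 1) * -A k k)) * A k k by ring, ← h,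
    Finset.sum_mul]
  refine Finset.sum_congr rfl fun ε _ => by ring
end


/-- Continuous functions of at most exponential growth. -/
def HasExpGrowth {V 𝕜 : Type*} [NormedAddCommGroup V] [NormedField 𝕜] (f : V → 𝕜) : Prop :=
  Continuous f ∧ ∃ a : ℝ, 0 ≤ a ∧ ∀ v, ‖f v‖ ≤ Real.exp (a * (1 + ‖v‖))

namespace HasExpGrowth
variable {V 𝕜 : Type*} [NormedAddCommGroup V] [NormedField 𝕜] {f g : V → 𝕜}

theorem const (c : 𝕜) : HasExpGrowth (fun _ : V => c) := by
  refine ⟨continuous_const, ‖c‖, norm_nonneg c, fun v => ?_⟩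
  have h1 := Real.add_one_le_exp (‖c‖ * (1 + ‖v‖))
  nlinarith [mul_nonneg (norm_nonneg c) (norm_nonneg v)]

theorem mul (hf : HasExpGrowth f) (hg : HasExpGrowth g) : HasExpGrowth fun v => f v * g v := by
  obtain ⟨hf, a, ha, hfa⟩ := hf
  obtain ⟨hg, b, hb, hgb⟩ := hg
  refine ⟨hf.mul hg, a + b, by positivity, fun v => ?_⟩
  rw [norm_mul, add_mul, Real.exp_add]
  exact mul_le_mul (hfa v) (hgb v) (norm_nonneg _) (Real.exp_nonneg _)

theorem add (hf : HasExpGrowth f) (hg : HasExpGrowth g) : HasExpGrowth fun v => f v + g v := by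
  obtain ⟨hf, a, ha, hfa⟩ := hf
  obtain ⟨hg, b, hb, hgb⟩ := hg
  refine ⟨hf.add hg, 1 + (a + b), by positivity, fun v => ?_⟩
  have hv := norm_nonneg v
  have h1 : ‖f v‖ ≤ Real.exp ((a + b) * (1 + ‖v‖)) :=
    (hfa v).trans (Real.exp_le_exp.2 (by nlinarith))
  have h2 : ‖g v‖ ≤ Real.exp ((a + b) * (1 + ‖v‖)) :=
    (hgb v).trans (Real.exp_le_exp.2 (by nlinarith))
  have h3 : (2 : ℝ) ≤ Real.exp (1 + ‖v‖) := by linarith [Real.add_one_le_exp (1 + ‖v‖)]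
  rw [add_mul 1, one_mul, Real.exp_add]
  have := norm_add_le (f v) (g v)
  nlinarith [Real.exp_pos ((a + b) * (1 + ‖v‖))]

theorem sum {κ : Type*} (s : Finset κ) {F : κ → V → 𝕜} (h : ∀ k, HasExpGrowth (F k)) :
    HasExpGrowth fun v => ∑ k ∈ s, F k v := by
  classical
  induction s using Finset.induction_on with
  | empty => simpa using const 0
  | insert k s hk ih => simpa [Finset.sum_insert hk] using (h k).add ih

theorem prod {κ : Type*} (s : Finset κ) {F : κ → V → 𝕜} (h : ∀ k, HasExpGrowth (F k)) :
    HasExpGrowth fun v => ∏ k ∈ s, F k v := by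
  classical
  induction s using Finset.induction_on with
  | empty => simpa using const 1
  | insert k s hk ih => simpa [Finset.prod_insert hk] using (h k).mul ih

theorem pow (hf : HasExpGrowth f) (k : ℕ) : HasExpGrowth fun v => f v ^ k := by
  simpa using prod (Finset.range k) fun _ => hf

theorem det {ι : Type*} [Fintype ι] [DecidableEq ι] {M : V → Matrix ι ι 𝕜}
    (h : ∀ i j, HasExpGrowth fun v => M v i j) : HasExpGrowth fun v => (M v).det := by
  simp only [Matrix.det_apply']
  exact sum _ fun σ => (const _).mul (prod _ fun i => h _ _)

theorem rpow {f : V → ℝ} (hf : HasExpGrowth f) {α : ℝ} (hα : 0 ≤ α) :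
    HasExpGrowth fun v => f v ^ α := by
  obtain ⟨hf, a, ha, hfa⟩ := hf
  refine ⟨hf.rpow_const fun _ => Or.inr hα, a * α, by positivity, fun v => ?_⟩
  calc ‖f v ^ α‖ ≤ ‖f v‖ ^ α := by simpa using Real.abs_rpow_le_abs_rpow (f v) α
    _ ≤ Real.exp (a * (1 + ‖v‖)) ^ α := Real.rpow_le_rpow (norm_nonneg _) (hfa v) hα
    _ = Real.exp (a * α * (1 + ‖v‖)) := by rw [← Real.exp_mul]; ring_nf

theorem ofReal {f : V → ℝ} (hf : HasExpGrowth f) : HasExpGrowth fun v => (f v : ℂ) := by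
  obtain ⟨hf, a, ha, hfa⟩ := hf
  exact ⟨Complex.continuous_ofReal.comp hf, a, ha, fun v => by simpa using hfa v⟩

theorem entry {ι κ : Type*} [Fintype ι] [Fintype κ] (i : ι) (j : κ) :
    HasExpGrowth fun v : ι → κ → ℝ => v i j := by
  refine ⟨by fun_prop, 1, zero_le_one, fun v => ?_⟩
  have h1 : ‖v i j‖ ≤ ‖v‖ := (norm_le_pi_norm (v i) j).trans (norm_le_pi_norm v i)
  linarith [Real.add_one_le_exp (1 * (1 + ‖v‖))]

end HasExpGrowth

section
variable {ι κ : Type*} [Fintype ι] [Fintype κ]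

theorem integrable_exp_neg_mul_sum_sq {c : ℝ} (hc : 0 < c) :
    Integrable fun g : ι → κ → ℝ => Real.exp (-c * ∑ i, ∑ j, g i j ^ 2) := by
  simp only [Finset.mul_sum, Real.exp_sum]
  exact Integrable.fintype_prod (f := fun _ (x : κ → ℝ) => ∏ j, Real.exp (-c * x j ^ 2))
    fun _ => Integrable.fintype_prod (f := fun _ (x : ℝ) => Real.exp (-c * x ^ 2))
      fun _ => integrable_exp_neg_mul_sq hc

theorem sq_norm_le_sum_sq (g : ι → κ → ℝ) : ‖g‖ ^ 2 ≤ ∑ i, ∑ j, g i j ^ 2 := by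
  have h0 : 0 ≤ ∑ i, ∑ j, g i j ^ 2 := by positivity
  rw [← Real.le_sqrt (norm_nonneg _) h0]
  refine (pi_norm_le_iff_of_nonneg (Real.sqrt_nonneg _)).2 fun i =>
    (pi_norm_le_iff_of_nonneg (Real.sqrt_nonneg _)).2 fun j => ?_
  rw [Real.norm_eq_abs]
  refine Real.abs_le_sqrt ?_
  calc g i j ^ 2 ≤ ∑ j, g i j ^ 2 :=
        Finset.single_le_sum (f := fun j => g i j ^ 2) (fun _ _ => sq_nonneg _) (Finset.mem_univ j)
    _ ≤ _ := Finset.single_le_sum (f := fun i => ∑ j, g i j ^ 2)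
        (fun _ _ => by positivity) (Finset.mem_univ i)

theorem HasExpGrowth.integrable_mul_exp {f : (ι → κ → ℝ) → ℝ} (hf : HasExpGrowth f)
    {c : ℝ} (hc : 0 < c) :
    Integrable fun g => f g * Real.exp (-c * ∑ i, ∑ j, g i j ^ 2) := by
  obtain ⟨hf, a, ha, hfa⟩ := hf
  refine ((integrable_exp_neg_mul_sum_sq (ι := ι) (κ := κ) (half_pos hc)).const_mul
    (Real.exp (a + a ^ 2 / (2 * c)))).mono' (by fun_prop) (.of_forall fun g => ?_)
  rw [norm_mul, Real.norm_eq_abs (Real.exp _), Real.abs_exp, ← Real.exp_add]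
  refine (mul_le_mul_of_nonneg_right (hfa g) (Real.exp_nonneg _)).trans ?_
  rw [← Real.exp_add, Real.exp_le_exp]
  have h1 := sq_norm_le_sum_sq g
  have h2 : a * ‖g‖ ≤ a ^ 2 / (2 * c) + c / 2 * ‖g‖ ^ 2 := by
    have : a ^ 2 / (2 * c) + c / 2 * ‖g‖ ^ 2 - a * ‖g‖ = (a - c * ‖g‖) ^ 2 / (2 * c) := by
      field_simp; ring
    have : 0 ≤ (a - c * ‖g‖) ^ 2 / (2 * c) := by positivity
    linarith
  nlinarith

end

theorem hasDerivAt_integral_mul_exp_neg_sq_mul {X : Type*} [MeasurableSpace X] {μ : Measure X}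
    {f S : X → ℝ} (hf : AEStronglyMeasurable f μ) (hS : AEStronglyMeasurable S μ)
    (hS0 : ∀ x, 0 ≤ S x) (hInt : Integrable (fun x => f x * Real.exp (-(1 ^ 2 / 2) * S x)) μ)
    (hInt' : Integrable (fun x => ‖f x * S x‖ * Real.exp (-(1 / 8) * S x)) μ) :
    HasDerivAt (fun R : ℝ => ∫ x, f x * Real.exp (-(R ^ 2 / 2) * S x) ∂μ)
      (-∫ x, f x * S x * Real.exp (-(1 / 2) * S x) ∂μ) 1 := by
  have hmeas : ∀ c : ℝ, AEStronglyMeasurable (fun x => Real.exp (c * S x)) μ := fun c =>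
    Real.continuous_exp.comp_aestronglyMeasurable (hS.const_mul c)
  have hbound : ∀ x, ∀ R ∈ Set.Ioo (1 / 2 : ℝ) 2,
      ‖-R * (f x * S x * Real.exp (-(R ^ 2 / 2) * S x))‖ ≤
        2 * (‖f x * S x‖ * Real.exp (-(1 / 8) * S x)) := by
    intro x R hR
    have he : Real.exp (-(R ^ 2 / 2) * S x) ≤ Real.exp (-(1 / 8) * S x) :=
      Real.exp_le_exp.2 (mul_le_mul_of_nonneg_right (by nlinarith [hR.1]) (hS0 x))
    have hR0 : 0 < R := by linarith [hR.1]
    rw [norm_mul, norm_neg, norm_mul (f x * S x), Real.norm_of_nonneg hR0.le,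
      Real.norm_of_nonneg (Real.exp_nonneg _)]
    have hR2 := hR.2.le
    gcongr
  have hderiv : ∀ x R, HasDerivAt (fun R : ℝ => f x * Real.exp (-(R ^ 2 / 2) * S x))
      (-R * (f x * S x * Real.exp (-(R ^ 2 / 2) * S x))) R := by
    intro x R
    have h : HasDerivAt (fun R : ℝ => -(R ^ 2 / 2) * S x) (-R * S x) R := by
      refine ((((hasDerivAt_pow 2 R).div_const 2).fun_neg).mul_const (S x)).congr_deriv ?_
      simp
    exact (h.exp.const_mul (f x)).congr_deriv (by ring)
  have h := (hasDerivAt_integral_of_dominated_loc_of_deriv_le (𝕜 := ℝ) (μ := μ)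
    (F := fun R x => f x * Real.exp (-(R ^ 2 / 2) * S x))
    (F' := fun R x => -R * (f x * S x * Real.exp (-(R ^ 2 / 2) * S x)))
    (Ioo_mem_nhds (by norm_num : (1 / 2 : ℝ) < 1) (by norm_num : (1 : ℝ) < 2))
    (.of_forall fun R => hf.mul (hmeas _)) hInt (((hf.mul hS).mul (hmeas _)).const_mul _)
    (.of_forall hbound) (hInt'.const_mul 2) (.of_forall fun x R _ => hderiv x R)).2
  rw [integral_const_mul, neg_one_mul] at h
  simpa only [one_pow] using h

theorem HasExpGrowth.norm {V 𝕜 : Type*} [NormedAddCommGroup V] [NormedField 𝕜] {f : V → 𝕜}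
    (hf : HasExpGrowth f) : HasExpGrowth fun v => ‖f v‖ := by
  obtain ⟨hf, a, ha, hfa⟩ := hf
  exact ⟨hf.norm, a, ha, fun v => by simpa using hfa v⟩

section
variable {N : ℕ} {α : ℝ}

theorem hasExpGrowth_det_mul_transpose_rpow (hα : 0 ≤ α) :
    HasExpGrowth fun g : Fin N → Fin N → ℝ =>
      (Matrix.of g * (Matrix.of g)ᵀ).det ^ α := by
  refine HasExpGrowth.rpow (HasExpGrowth.det fun i j => ?_) hα
  simp only [Matrix.mul_apply, Matrix.transpose_apply, Matrix.of_apply]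
  exact HasExpGrowth.sum _ fun k => (HasExpGrowth.entry _ _).mul (HasExpGrowth.entry _ _)

theorem trace_of_mul_transpose (g : Fin N → Fin N → ℝ) :
    (Matrix.of g * (Matrix.of g)ᵀ).trace = ∑ i, ∑ j, g i j ^ 2 := by
  simp [Matrix.trace, Matrix.mul_apply, sq]

theorem inducedRealGinibreWeight_eq (g : Fin N → Fin N → ℝ) :
    inducedRealGinibreWeight N α g = (Matrix.of g * (Matrix.of g)ᵀ).det ^ α *
      Real.exp (-(1 / 2) * ∑ i, ∑ j, g i j ^ 2) := by
  rw [inducedRealGinibreWeight, trace_of_mul_transpose]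
  congr 2
  ring

theorem inducedRealGinibreWeight_nonneg (g : Fin N → Fin N → ℝ) :
    0 ≤ inducedRealGinibreWeight N α g := by
  rw [inducedRealGinibreWeight, Matrix.det_mul, Matrix.det_transpose]
  exact mul_nonneg (Real.rpow_nonneg (mul_self_nonneg _) _) (Real.exp_nonneg _)

theorem continuous_inducedRealGinibreWeight (hα : 0 ≤ α) :
    Continuous (inducedRealGinibreWeight N α) := by
  have := (hasExpGrowth_det_mul_transpose_rpow (N := N) hα).1
  simp only [funext inducedRealGinibreWeight_eq]
  fun_prop

theorem integrable_inducedRealGinibreWeight_mul (hα : 0 ≤ α) {f : (Fin N → Fin N → ℝ) → ℝ}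
    (hf : HasExpGrowth f) : Integrable fun g => inducedRealGinibreWeight N α g * f g := by
  refine (((hasExpGrowth_det_mul_transpose_rpow hα).mul hf).integrable_mul_exp
    one_half_pos).congr (.of_forall fun g => ?_)
  simp only [inducedRealGinibreWeight_eq]
  ring

theorem integrable_ofReal_inducedRealGinibreWeight_mul (hα : 0 ≤ α)
    {f : (Fin N → Fin N → ℝ) → ℂ} (hf : HasExpGrowth f) :
    Integrable fun g => (inducedRealGinibreWeight N α g : ℂ) * f g := by
  have h := continuous_inducedRealGinibreWeight (N := N) hα
  have h2 := hf.1
  refine (integrable_inducedRealGinibreWeight_mul hα hf.norm).mono'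
    (by fun_prop) (.of_forall fun g => ?_)
  rw [norm_mul, Complex.norm_real, Real.norm_of_nonneg (inducedRealGinibreWeight_nonneg g)]

theorem integral_inducedRealGinibreWeight_pos (hα : 0 ≤ α) :
    0 < ∫ g, inducedRealGinibreWeight N α g := by
  refine integral_pos_of_integrable_nonneg_nonzero 
    (x := fun i j => (1 : Matrix (Fin N) (Fin N) ℝ) i j)
    (continuous_inducedRealGinibreWeight hα) ?_ inducedRealGinibreWeight_nonneg ?_
  · simpa using integrable_inducedRealGinibreWeight_mul (N := N) hα (HasExpGrowth.const (1 : ℝ))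
  · have : Matrix.of (fun i j => (1 : Matrix (Fin N) (Fin N) ℝ) i j) = 1 := rfl
    rw [inducedRealGinibreWeight, this]
    simp

/-- Flipping the signs of the rows of a matrix. -/
def flipRows (ε : Fin N → ℤˣ) (g : Fin N → Fin N → ℝ) : Fin N → Fin N → ℝ :=
  fun i j => ((ε i : ℤ) : ℝ) * g i j

theorem of_flipRows (ε : Fin N → ℤˣ) (g : Fin N → Fin N → ℝ) :
    Matrix.of (flipRows ε g) = Matrix.diagonal (fun i => ((ε i : ℤ) : ℝ)) * Matrix.of g := by
  ext i j
  simp [flipRows, Matrix.diagonal_mul]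

theorem sq_units_cast (s : ℤˣ) : ((s : ℤ) : ℝ) ^ 2 = 1 := by
  rcases Int.units_eq_one_or s with rfl | rfl <;> simp

theorem inducedRealGinibreWeight_flipRows (ε : Fin N → ℤˣ) (g : Fin N → Fin N → ℝ) :
    inducedRealGinibreWeight N α (flipRows ε g) = inducedRealGinibreWeight N α g := by
  have h : (Matrix.diagonal (fun i => ((ε i : ℤ) : ℝ))).det ^ 2 = 1 := by
    rw [Matrix.det_diagonal, ← Finset.prod_pow]
    simp [sq_units_cast]
  rw [inducedRealGinibreWeight_eq, inducedRealGinibreWeight_eq]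
  congr 2
  · simp only [of_flipRows, Matrix.det_mul, Matrix.det_transpose]
    linear_combination (Matrix.of g).det ^ 2 * h
  · simp [flipRows, mul_pow, sq_units_cast]

theorem measurePreserving_flipRows (ε : Fin N → ℤˣ) :
    MeasurePreserving (flipRows ε) := by
  refine volume_preserving_pi (f := fun i (x : Fin N → ℝ) j => ((ε i : ℤ) : ℝ) * x j)
    fun i => ?_
  rcases Int.units_eq_one_or (ε i) with h | h
  · convert MeasurePreserving.id (volume : Measure (Fin N → ℝ)) using 1
    ext x j
    simp [h]
  · convert Measure.measurePreserving_neg (volume : Measure (Fin N → ℝ)) using 1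
    ext x j
    simp [h]

theorem measurableEmbedding_flipRows (ε : Fin N → ℤˣ) :
    MeasurableEmbedding (flipRows (N := N) ε) := by
  have hinv : Function.Involutive (flipRows ε) := fun g => by
    ext i j
    simp only [flipRows]
    linear_combination g i j * sq_units_cast (ε i)
  exact (MeasurableEquiv.mk hinv.toPerm (measurePreserving_flipRows ε).measurable
    (measurePreserving_flipRows ε).measurable).measurableEmbedding

theorem two_pow_mul_integral_inducedRealGinibreWeight (hα : 0 ≤ α)
    {f : (Fin N → Fin N → ℝ) → ℂ} (hf : HasExpGrowth f) :
    2 ^ N * ∫ g, (inducedRealGinibreWeight N α g : ℂ) * f g =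
      ∫ g, (inducedRealGinibreWeight N α g : ℂ) * ∑ ε : Fin N → ℤˣ, f (flipRows ε g) := by
  have hInt := integrable_ofReal_inducedRealGinibreWeight_mul hα hf
  have hflip : ∀ ε : Fin N → ℤˣ,
      ∫ g, (inducedRealGinibreWeight N α g : ℂ) * f (flipRows ε g) =
        ∫ g, (inducedRealGinibreWeight N α g : ℂ) * f g := fun ε => by
    simpa only [inducedRealGinibreWeight_flipRows] using
      (measurePreserving_flipRows ε).integral_comp (measurableEmbedding_flipRows ε)
        fun g => (inducedRealGinibreWeight N α g : ℂ) * f g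
  have hInt' : ∀ ε : Fin N → ℤˣ,
      Integrable fun g => (inducedRealGinibreWeight N α g : ℂ) * f (flipRows ε g) := fun ε => by
    simpa only [Function.comp_def, inducedRealGinibreWeight_flipRows] using
      ((measurePreserving_flipRows ε).integrable_comp hInt.aestronglyMeasurable).2 hInt
  simp only [Finset.mul_sum]
  rw [integral_finsetSum _ fun ε _ => hInt' ε]
  simp [hflip]

theorem hasExpGrowth_det_smul_one_sub (z : ℂ) :
    HasExpGrowth fun g : Fin N → Fin N → ℝ => (z • (1 : Matrix (Fin N) (Fin N) ℂ)
      - (Matrix.of g).map ((↑) : ℝ → ℂ)).det := by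
  refine HasExpGrowth.det fun i j => ?_
  have := (HasExpGrowth.const (V := Fin N → Fin N → ℝ)
    ((z • (1 : Matrix (Fin N) (Fin N) ℂ)) i j)).add
    ((HasExpGrowth.const (-1 : ℂ)).mul (HasExpGrowth.entry i j).ofReal)
  simpa [sub_eq_add_neg] using this

theorem hasExpGrowth_trace :
    HasExpGrowth fun g : Fin N → Fin N → ℝ => ((Matrix.of g).trace : ℂ) := by
  simp only [Matrix.trace]
  exact (HasExpGrowth.sum _ fun i => HasExpGrowth.entry i i).ofReal

theorem map_ofReal_flipRows (ε : Fin N → ℤˣ) (g : Fin N → Fin N → ℝ) :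
    (Matrix.of (flipRows ε g)).map ((↑) : ℝ → ℂ) =
      Matrix.diagonal (fun i => ((ε i : ℤ) : ℂ)) * (Matrix.of g).map ((↑) : ℝ → ℂ) := by
  ext i j
  simp [flipRows, Matrix.diagonal_mul]

theorem ofReal_trace (A : Matrix (Fin N) (Fin N) ℝ) :
    (A.trace : ℂ) = (A.map ((↑) : ℝ → ℂ)).trace := by
  simp [Matrix.trace]

theorem integral_inducedRealGinibreWeight_mul_det (hα : 0 ≤ α) (z : ℂ) :
    ∫ g, (inducedRealGinibreWeight N α g : ℂ) *
      (z • (1 : Matrix (Fin N) (Fin N) ℂ) - (Matrix.of g).map ((↑) : ℝ → ℂ)).det =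
    z ^ N * ((∫ g, inducedRealGinibreWeight N α g : ℝ) : ℂ) := by
  have h := two_pow_mul_integral_inducedRealGinibreWeight (N := N) hα
    (hasExpGrowth_det_smul_one_sub z)
  simp only [map_ofReal_flipRows, Matrix.sum_det_sub_diagonal_units_mul, Fintype.card_fin] at h
  rw [integral_mul_const, integral_complex_ofReal] at h
  refine mul_left_cancel₀ (pow_ne_zero N (two_ne_zero (α := ℂ))) (h.trans ?_)
  ring

theorem integral_inducedRealGinibreWeight_mul_det_mul_trace (hα : 0 ≤ α) (z : ℂ) :
    ∫ g, (inducedRealGinibreWeight N α g : ℂ) *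
      ((z • (1 : Matrix (Fin N) (Fin N) ℂ) - (Matrix.of g).map ((↑) : ℝ → ℂ)).det *
        ((Matrix.of g).trace : ℂ)) =
    -z ^ (N - 1) * ((∫ g, inducedRealGinibreWeight N α g * ∑ i, g i i ^ 2 : ℝ) : ℂ) := by
  have h := two_pow_mul_integral_inducedRealGinibreWeight (N := N) hα
    ((hasExpGrowth_det_smul_one_sub z).mul hasExpGrowth_trace)
  simp only [ofReal_trace, map_ofReal_flipRows,
    Matrix.sum_det_sub_diagonal_units_mul_mul_trace, Fintype.card_fin] at h ⊢
  refine mul_left_cancel₀ (pow_ne_zero N (two_ne_zero (α := ℂ))) (h.trans ?_)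
  rw [← integral_complex_ofReal, ← integral_const_mul, ← integral_const_mul]
  congr 1 with g
  simp
  ring

theorem measurePreserving_comp_perm (σ : Equiv.Perm (Fin N)) :
    MeasurePreserving (MeasurableEquiv.arrowCongr' (Equiv.refl (Fin N))
      (MeasurableEquiv.arrowCongr' σ (MeasurableEquiv.refl ℝ))) :=
  volume_preserving_arrowCongr' _ _ (volume_preserving_arrowCongr' _ _ (MeasurePreserving.id _))

theorem inducedRealGinibreWeight_comp_perm (σ : Equiv.Perm (Fin N)) (g : Fin N → Fin N → ℝ) :
    inducedRealGinibreWeight N α (fun i j => g i (σ j)) = inducedRealGinibreWeight N α g := by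
  have h : Matrix.of (fun i j => g i (σ j)) * (Matrix.of (fun i j => g i (σ j)))ᵀ
      = Matrix.of g * (Matrix.of g)ᵀ := by
    ext i j
    simpa [Matrix.mul_apply] using Equiv.sum_comp σ fun k => g i k * g j k
  rw [inducedRealGinibreWeight, inducedRealGinibreWeight, h]

theorem integral_inducedRealGinibreWeight_comp_perm (σ : Equiv.Perm (Fin N))
    (f : (Fin N → Fin N → ℝ) → ℝ) :
    ∫ g, inducedRealGinibreWeight N α g * f (fun i j => g i (σ j)) =
      ∫ g, inducedRealGinibreWeight N α g * f g := by
  have h := (measurePreserving_comp_perm σ.symm).integral_comp'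
    fun g => inducedRealGinibreWeight N α g * f g
  have h2 : ∀ g, MeasurableEquiv.arrowCongr' (Equiv.refl (Fin N))
      (MeasurableEquiv.arrowCongr' σ.symm (MeasurableEquiv.refl ℝ)) g = fun i j => g i (σ j) :=
    fun g => rfl
  simpa only [h2, inducedRealGinibreWeight_comp_perm] using h

theorem integral_inducedRealGinibreWeight_mul_sum_sq [NeZero N] (hα : 0 ≤ α) :
    ∫ g, inducedRealGinibreWeight N α g * ∑ i, ∑ j, g i j ^ 2 =
      N * ∫ g, inducedRealGinibreWeight N α g * ∑ i, g i i ^ 2 := by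
  have h1 : ∀ g : Fin N → Fin N → ℝ,
      inducedRealGinibreWeight N α g * ∑ i, ∑ j, g i j ^ 2 =
        ∑ k : Fin N, inducedRealGinibreWeight N α g * ∑ i, g i (i + k) ^ 2 := fun g => by
    rw [← Finset.mul_sum, Finset.sum_comm (f := fun k i : Fin N => g i (i + k) ^ 2)]
    congr 1
    exact Finset.sum_congr rfl fun i _ =>
      (Equiv.sum_comp (Equiv.addLeft i) fun j => g i j ^ 2).symm
  simp only [h1]
  rw [integral_finsetSum]
  · have h2 : ∀ k : Fin N, ∫ g, inducedRealGinibreWeight N α g * ∑ i, g i (i + k) ^ 2 =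
        ∫ g, inducedRealGinibreWeight N α g * ∑ i, g i i ^ 2 := fun k =>
      integral_inducedRealGinibreWeight_comp_perm (Equiv.addRight k) fun g => ∑ i, g i i ^ 2
    simp [h2]
  · exact fun k _ => integrable_inducedRealGinibreWeight_mul hα
      (HasExpGrowth.sum _ fun i => (HasExpGrowth.entry _ _).pow 2)

theorem det_smul_mul_transpose_rpow {R : ℝ} (hR : 0 < R) (g : Fin N → Fin N → ℝ) :
    (Matrix.of (R • g) * (Matrix.of (R • g))ᵀ).det ^ α =
      R ^ (2 * N * α) * (Matrix.of g * (Matrix.of g)ᵀ).det ^ α := by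
  have h : Matrix.of (R • g) = R • Matrix.of g := rfl
  have h2 : (Matrix.of (R • g) * (Matrix.of (R • g))ᵀ).det =
      R ^ (2 * N : ℝ) * ((Matrix.of g).det * (Matrix.of g).det) := by
    rw [h, Matrix.det_mul, Matrix.det_transpose, Matrix.det_smul, Fintype.card_fin]
    have : R ^ (2 * N : ℝ) = (R ^ N) ^ 2 := by
      rw [← pow_mul, ← Real.rpow_natCast]; push_cast; ring_nf
    rw [this]; ring
  rw [h2, Matrix.det_mul, Matrix.det_transpose,
    Real.mul_rpow (Real.rpow_nonneg hR.le _) (mul_self_nonneg _), ← Real.rpow_mul hR.le]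

theorem integral_det_rpow_mul_exp {R : ℝ} (hR : 0 < R) :
    ∫ g : Fin N → Fin N → ℝ, (Matrix.of g * (Matrix.of g)ᵀ).det ^ α *
      Real.exp (-(R ^ 2 / 2) * ∑ i, ∑ j, g i j ^ 2) =
    R ^ (-(N * (N + 2 * α))) * ∫ g, inducedRealGinibreWeight N α g := by
  have h := Measure.integral_comp_smul (volume : Measure (Fin N → Fin N → ℝ))
    (inducedRealGinibreWeight N α) R
  have h1 : ∀ g, inducedRealGinibreWeight N α (R • g) = R ^ (2 * N * α) *
      ((Matrix.of g * (Matrix.of g)ᵀ).det ^ α *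
        Real.exp (-(R ^ 2 / 2) * ∑ i, ∑ j, g i j ^ 2)) := fun g => by
    rw [inducedRealGinibreWeight_eq, det_smul_mul_transpose_rpow hR]
    simp only [Pi.smul_apply, smul_eq_mul, mul_pow, ← Finset.mul_sum]
    ring_nf
  simp only [h1] at h
  have hfr : Module.finrank ℝ (Fin N → Fin N → ℝ) = N * N := by
    simp [Module.finrank_pi_fintype]
  rw [integral_const_mul, hfr, abs_of_pos (by positivity), smul_eq_mul,
    ← Real.rpow_natCast R (N * N),
    ← Real.rpow_neg hR.le] at h
  rw [show -((N : ℝ) * (N + 2 * α)) = -((N * N : ℕ) : ℝ) - 2 * N * α by push_cast; ring,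
    Real.rpow_sub hR, div_mul_eq_mul_div, ← h]
  field_simp

theorem integral_inducedRealGinibreWeight_mul_sum_sq_eq (hα : 0 ≤ α) :
    ∫ g, inducedRealGinibreWeight N α g * ∑ i, ∑ j, g i j ^ 2 =
      N * (N + 2 * α) * ∫ g, inducedRealGinibreWeight N α g := by
  have hW := hasExpGrowth_det_mul_transpose_rpow (N := N) hα
  have hS : HasExpGrowth fun g : Fin N → Fin N → ℝ => ∑ i, ∑ j, g i j ^ 2 :=
    HasExpGrowth.sum _ fun i => HasExpGrowth.sum _ fun j => (HasExpGrowth.entry i j).pow 2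
  have h1 := hasDerivAt_integral_mul_exp_neg_sq_mul hW.1.aestronglyMeasurable
    hS.1.aestronglyMeasurable (fun g => by positivity)
    (hW.integrable_mul_exp (by norm_num)) ((hW.mul hS).norm.integrable_mul_exp (by norm_num))
  have h2 : HasDerivAt (fun R : ℝ => R ^ (-(N * (N + 2 * α))) *
      ∫ g, inducedRealGinibreWeight N α g)
      (-(N * (N + 2 * α)) * (1 : ℝ) ^ (-(N * (N + 2 * α)) - 1) *
        ∫ g, inducedRealGinibreWeight N α g) 1 :=
    (Real.hasDerivAt_rpow_const (Or.inl one_ne_zero)).mul_const _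
  have h3 := h1.unique (h2.congr_of_eventuallyEq
    ((lt_mem_nhds one_pos).mono fun R hR => integral_det_rpow_mul_exp hR))
  rw [Real.one_rpow, mul_one, neg_mul, neg_inj] at h3
  rw [← h3]
  congr 1 with g
  rw [inducedRealGinibreWeight_eq]
  ring

theorem integral_inducedRealGinibreWeight_mul_sum_diag_sq [NeZero N] (hα : 0 ≤ α) :
    ∫ g, inducedRealGinibreWeight N α g * ∑ i, g i i ^ 2 =
      (N + 2 * α) * ∫ g, inducedRealGinibreWeight N α g := by
  have h := (integral_inducedRealGinibreWeight_mul_sum_sq (N := N) hα).symm.trans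
    (integral_inducedRealGinibreWeight_mul_sum_sq_eq hα)
  rw [mul_assoc] at h
  exact mul_left_cancel₀ (Nat.cast_ne_zero.2 (NeZero.ne N)) h

end

/-- For the induced real Ginibre ensemble of size `2n` with parameter `α`:
`⟨det (z I - G) Tr G⟩ = -2(n+α) z^(2n-1)`, and consequently the odd-degree skew
orthogonal polynomial `Q_{2n+1}(z) = z ⟨det (z I - G)⟩ + ⟨det (z I - G) Tr G⟩`
equals `z^(2n+1) - 2(n+α) z^(2n-1)`. -/
theorem inducedRealGinibre_odd_skew_orthogonal_poly (n : ℕ) (hn : 0 < n)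
    (α : ℝ) (hα : 0 ≤ α) (z : ℂ) :
    (∫ g : Fin (2 * n) → Fin (2 * n) → ℝ,
          (inducedRealGinibreWeight (2 * n) α g : ℂ) *
            ((z • (1 : Matrix (Fin (2 * n)) (Fin (2 * n)) ℂ)
              - (Matrix.of g).map ((↑) : ℝ → ℂ)).det * ((Matrix.of g).trace : ℂ))) /
        ((∫ g : Fin (2 * n) → Fin (2 * n) → ℝ, inducedRealGinibreWeight (2 * n) α g : ℝ) : ℂ)
      = -(2 * ((n : ℂ) + (α : ℂ))) * z ^ (2 * n - 1) ∧
    z * ((∫ g : Fin (2 * n) → Fin (2 * n) → ℝ,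
          (inducedRealGinibreWeight (2 * n) α g : ℂ) *
            (z • (1 : Matrix (Fin (2 * n)) (Fin (2 * n)) ℂ)
              - (Matrix.of g).map ((↑) : ℝ → ℂ)).det) /
        ((∫ g : Fin (2 * n) → Fin (2 * n) → ℝ, inducedRealGinibreWeight (2 * n) α g : ℝ) : ℂ))
      + (∫ g : Fin (2 * n) → Fin (2 * n) → ℝ,
          (inducedRealGinibreWeight (2 * n) α g : ℂ) *
            ((z • (1 : Matrix (Fin (2 * n)) (Fin (2 * n)) ℂ)
              - (Matrix.of g).map ((↑) : ℝ → ℂ)).det * ((Matrix.of g).trace : ℂ))) /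
        ((∫ g : Fin (2 * n) → Fin (2 * n) → ℝ, inducedRealGinibreWeight (2 * n) α g : ℝ) : ℂ)
      = z ^ (2 * n + 1) - 2 * ((n : ℂ) + (α : ℂ)) * z ^ (2 * n - 1) := by
  have : NeZero (2 * n) := ⟨by omega⟩
  have hZ : ((∫ g, inducedRealGinibreWeight (2 * n) α g : ℝ) : ℂ) ≠ 0 :=
    Complex.ofReal_ne_zero.2 (integral_inducedRealGinibreWeight_pos hα).ne'
  rw [integral_inducedRealGinibreWeight_mul_det hα,
    integral_inducedRealGinibreWeight_mul_det_mul_trace hα,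
    integral_inducedRealGinibreWeight_mul_sum_diag_sq hα]
  push_cast
  constructor
  · field_simp
  · field_simp
    ring
end

section
/- Let n be a positive integer and let α ≥ 0 be a real number. For G drawn from the induced quaternion real Ginibre ensemble of size 2n with parameter α, and for every complex number z, ⟨det(z·I − G)⟩ = 2^n · Γ(n+1+α) · Σ_{l=0}^{n} z^{2l}/(2^l · Γ(l+1+α)); that is, the even-degree skew orthogonal polynomial is Q_{2n}(z) = 2^n Γ(n+1+α) Σ_{l=0}^n z^{2l}/(2^l Γ(l+1+α)). -/
open MeasureTheory Matrix

/-- The `2n × 2n` complex matrix (indexed by `Fin n × Fin 2`) whose `(j,k)`-th `2 × 2`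
block is `[[z_{jk}, w_{jk}], [-conj w_{jk}, conj z_{jk}]]`. -/
noncomputable def quatMatrix (n : ℕ) (x : Fin n → Fin n → ℂ × ℂ) :
    Matrix (Fin n × Fin 2) (Fin n × Fin 2) ℂ :=
  Matrix.of fun a b =>
    if a.2 = 0 then
      (if b.2 = 0 then (x a.1 b.1).1 else (x a.1 b.1).2)
    else
      (if b.2 = 0 then -(starRingEnd ℂ) ((x a.1 b.1).2)
        else (starRingEnd ℂ) ((x a.1 b.1).1))

/-- The (unnormalized) density of the induced quaternion real Ginibre ensemble of size
`2n` with parameter `α`: `det(G G†)^α exp(-Tr(G G†)/2)` (both `det(G G†)` and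
`Tr(G G†)` are real, so we take real parts). -/
noncomputable def inducedQuatGinibreWeight (n : ℕ) (α : ℝ) (x : Fin n → Fin n → ℂ × ℂ) : ℝ :=
  ((quatMatrix n x * (quatMatrix n x)ᴴ).det.re) ^ α *
    Real.exp (-(quatMatrix n x * (quatMatrix n x)ᴴ).trace.re / 2)

namespace QuatGinibre

open Complex

variable {n : ℕ}

/-- The quadratic form `Tr(G G†) / 2` in the entries of the quaternion matrix. -/
noncomputable def halfTrace (x : Fin n → Fin n → ℂ × ℂ) : ℝ :=
  ∑ i, ∑ j, (normSq (x i j).1 + normSq (x i j).2)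

/-- The weight `(det(G)² + ε)^α exp(-Tr(G G†)/2)`, a regularization of the ensemble's weight. -/
noncomputable def regWeight (α ε : ℝ) (x : Fin n → Fin n → ℂ × ℂ) : ℝ :=
  ((quatMatrix n x).det.re ^ 2 + ε) ^ α * Real.exp (-halfTrace x)

/-- The matrix `G` with the rows outside `T × {0, 1}` replaced by those of the identity. -/
def keepRows (T : Finset (Fin n)) (G : Matrix (Fin n × Fin 2) (Fin n × Fin 2) ℂ) :
    Matrix (Fin n × Fin 2) (Fin n × Fin 2) ℂ :=
  fun a => if a.1 ∈ T then G a else Pi.single a 1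

lemma conj_det_quatMatrix (x : Fin n → Fin n → ℂ × ℂ) :
    (starRingEnd ℂ) (quatMatrix n x).det = (quatMatrix n x).det := by
  let s : Fin n × Fin 2 → ℂ := fun a => if a.2 = 0 then 1 else -1
  let e : Fin n × Fin 2 ≃ Fin n × Fin 2 := Equiv.prodCongr (Equiv.refl _) (Equiv.swap 0 1)
  have h : (quatMatrix n x).map (starRingEnd ℂ)
      = of fun a b => s a * (of fun a b => s b * (quatMatrix n x).submatrix e e a b) a b := by
    ext ⟨a, i⟩ ⟨b, j⟩
    fin_cases i <;> fin_cases j <;> simp [quatMatrix, s, e]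
  have hs : (∏ a, s a) * (∏ a, s a) = 1 := by
    rw [← Finset.prod_mul_distrib]
    refine Finset.prod_eq_one fun a _ => ?_
    by_cases h : a.2 = 0 <;> simp [s, h]
  rw [RingHom.map_det, RingHom.mapMatrix_apply, h, det_mul_column, det_mul_row, ← mul_assoc, hs,
    one_mul, det_submatrix_equiv_self]

lemma ofReal_re_det_quatMatrix (x : Fin n → Fin n → ℂ × ℂ) :
    (((quatMatrix n x).det.re : ℝ) : ℂ) = (quatMatrix n x).det :=
  conj_eq_iff_re.1 (conj_det_quatMatrix x)

lemma inducedQuatGinibreWeight_eq (α : ℝ) (x : Fin n → Fin n → ℂ × ℂ) :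
    inducedQuatGinibreWeight n α x = regWeight α 0 x := by
  have h1 : (quatMatrix n x * (quatMatrix n x)ᴴ).det.re = (quatMatrix n x).det.re ^ 2 + 0 := by
    have : star (quatMatrix n x).det = (quatMatrix n x).det := conj_det_quatMatrix x
    rw [det_mul, det_conjTranspose, this, ← ofReal_re_det_quatMatrix, ← ofReal_mul, ofReal_re,
      ofReal_re]
    ring
  have h2 : (quatMatrix n x * (quatMatrix n x)ᴴ).trace.re = 2 * halfTrace x := by
    simp only [trace, diag, mul_apply, conjTranspose_apply, re_sum, Fintype.sum_prod_type,
      halfTrace, Finset.mul_sum]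
    refine Finset.sum_congr rfl fun i _ => ?_
    rw [Fin.sum_univ_two, ← Finset.sum_add_distrib]
    refine Finset.sum_congr rfl fun j _ => ?_
    simp only [quatMatrix, Fin.sum_univ_two, of_apply, normSq_apply]
    simp
    ring
  rw [inducedQuatGinibreWeight, regWeight, h1, h2]
  congr 2
  ring

/-- The direction of the entry `z_{rc}` (for `i = 0`) or `w_{rc}` (for `i = 1`). -/
noncomputable def entryDir (r c : Fin n) (i : Fin 2) : Fin n → Fin n → ℂ × ℂ :=
  Pi.single r (Pi.single c (if i = 0 then (1, 0) else (0, 1)))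

lemma quatMatrix_add_smul_of_ne (x : Fin n → Fin n → ℂ × ℂ) (r c : Fin n) (i : Fin 2) (t : ℂ)
    (a : Fin n × Fin 2) (ha : a.1 ≠ r) :
    quatMatrix n (x + t • entryDir r c i) a = quatMatrix n x a := by
  ext b
  simp [quatMatrix, entryDir, Pi.single_eq_of_ne ha]

lemma quatMatrix_add_smul_fst (x : Fin n → Fin n → ℂ × ℂ) (r c : Fin n) (i : Fin 2) (t : ℂ) :
    quatMatrix n (x + t • entryDir r c i) (r, 0)
      = quatMatrix n x (r, 0) + t • Pi.single (c, i) 1 := by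
  ext ⟨b, j⟩
  by_cases hb : b = c
  · subst hb
    fin_cases i <;> fin_cases j <;> simp [quatMatrix, entryDir, Pi.single_apply]
  · simp [quatMatrix, entryDir, hb]

lemma exists_quatMatrix_add_smul_snd (r c : Fin n) (i : Fin 2) :
    ∃ u : Fin n × Fin 2 → ℂ, ∀ (x : Fin n → Fin n → ℂ × ℂ) (t : ℂ),
    quatMatrix n (x + t • entryDir r c i) (r, 1)
      = quatMatrix n x (r, 1) + (starRingEnd ℂ t) • u := by
  refine ⟨if i = 0 then Pi.single (c, 1) 1 else - Pi.single (c, 0) 1, fun x t => ?_⟩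
  ext ⟨b, j⟩
  by_cases hb : b = c
  · subst hb
    fin_cases i <;> fin_cases j <;> simp [quatMatrix, entryDir, Pi.single_apply] <;> ring
  · simp only [quatMatrix, entryDir, of_apply, Pi.add_apply, Pi.smul_apply, Pi.single_eq_same,
      Pi.single_eq_of_ne hb]
    fin_cases i <;> simp [hb]

lemma exists_det_quatMatrix_add_smul (x : Fin n → Fin n → ℂ × ℂ) (r c : Fin n) (i : Fin 2) :
    ∃ c₀ c₂ c₃ : ℂ, ∀ t : ℂ, (quatMatrix n (x + t • entryDir r c i)).det
      = c₀ + ((quatMatrix n x).updateRow (r, 0) (Pi.single (c, i) 1)).det * t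
        + c₂ * starRingEnd ℂ t + c₃ * (t * starRingEnd ℂ t) := by
  obtain ⟨u, hu⟩ := exists_quatMatrix_add_smul_snd r c i
  set G := quatMatrix n x with hG
  set e : Fin n × Fin 2 → ℂ := Pi.single (c, i) 1
  refine ⟨G.det, (G.updateRow (r, 1) u).det, ((G.updateRow (r, 0) e).updateRow (r, 1) u).det,
    fun t => ?_⟩
  have h : quatMatrix n (x + t • entryDir r c i)
      = (G.updateRow (r, 0) (G (r, 0) + t • e)).updateRow (r, 1)
          (G (r, 1) + (starRingEnd ℂ t) • u) := by
    refine funext fun a => ?_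
    obtain ⟨a, k⟩ := a
    by_cases ha : a = r
    · subst ha
      fin_cases k
      · simpa using quatMatrix_add_smul_fst x a c i t
      · simpa using hu x t
    · have h0 : ((a, k) : Fin n × Fin 2) ≠ (r, 0) := by simp [ha]
      have h1 : ((a, k) : Fin n × Fin 2) ≠ (r, 1) := by simp [ha]
      rw [updateRow_ne h1, updateRow_ne h0]
      exact quatMatrix_add_smul_of_ne x r c i t (a, k) ha
  have h01 : ((r, 0) : Fin n × Fin 2) ≠ (r, 1) := by simp
  have e1 : (G.updateRow (r, 1) (G (r, 1))) = G := updateRow_eq_self _ _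
  have e2 : (G.updateRow (r, 0) (G (r, 0))) = G := updateRow_eq_self _ _
  have e3 : ((G.updateRow (r, 0) e).updateRow (r, 1) (G (r, 1))) = G.updateRow (r, 0) e := by
    rw [updateRow_comm _ h01, e1]
  rw [h, det_updateRow_add, det_updateRow_smul, updateRow_comm _ h01, updateRow_comm _ h01, e1,
    det_updateRow_add, det_updateRow_smul, det_updateRow_add, det_updateRow_smul,
    e2, updateRow_comm _ h01.symm, updateRow_comm _ h01.symm, e2]
  ring

lemma exists_halfTrace_add_smul (x : Fin n → Fin n → ℂ × ℂ) (r c : Fin n) (i : Fin 2) :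
    ∃ c₀ c₂ c₃ : ℂ, ∀ t : ℂ, ((halfTrace (x + t • entryDir r c i) : ℝ) : ℂ)
      = c₀ + starRingEnd ℂ (quatMatrix n x (r, 0) (c, i)) * t
        + c₂ * starRingEnd ℂ t + c₃ * (t * starRingEnd ℂ t) := by
  refine ⟨halfTrace x, quatMatrix n x (r, 0) (c, i), 1, fun t => ?_⟩
  have h : ∀ y : Fin n → Fin n → ℂ × ℂ, ((halfTrace y : ℝ) : ℂ)
      = ∑ p : Fin n × Fin n, (starRingEnd ℂ (y p.1 p.2).1 * (y p.1 p.2).1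
        + starRingEnd ℂ (y p.1 p.2).2 * (y p.1 p.2).2) := by
    intro y
    simp [halfTrace, Fintype.sum_prod_type, normSq_eq_conj_mul_self]
  rw [h, h, Fintype.sum_eq_add_sum_compl (r, c), Fintype.sum_eq_add_sum_compl (r, c),
    Finset.sum_congr rfl (g := fun p : Fin n × Fin n =>
      (starRingEnd ℂ (x p.1 p.2).1 * (x p.1 p.2).1
        + starRingEnd ℂ (x p.1 p.2).2 * (x p.1 p.2).2))]
  · fin_cases i <;> simp [entryDir, quatMatrix] <;> ring
  · rintro ⟨a, b⟩ hp
    have : (entryDir r c i : Fin n → Fin n → ℂ × ℂ) a b = 0 := by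
      by_cases ha : a = r
      · subst ha
        have hb : b ≠ c := by rintro rfl; simp at hp
        simp [entryDir, hb]
      · simp [entryDir, ha]
    simp [this]

lemma exists_det_keepRows_updateRow_add_smul (T : Finset (Fin n)) (x : Fin n → Fin n → ℂ × ℂ)
    (r c : Fin n) (i : Fin 2) (hr : r ∉ T) (hc : c ∉ T) :
    ∃ c₀ c₂ c₃ : ℂ, ∀ t : ℂ,
      ((keepRows T (quatMatrix n (x + t • entryDir r c i))).updateRow (c, i)
          (quatMatrix n (x + t • entryDir r c i) (r, 0))).det
      = c₀ + (keepRows T (quatMatrix n x)).det * t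
        + c₂ * starRingEnd ℂ t + c₃ * (t * starRingEnd ℂ t) := by
  refine ⟨((keepRows T (quatMatrix n x)).updateRow (c, i) (quatMatrix n x (r, 0))).det, 0, 0,
    fun t => ?_⟩
  have h : keepRows T (quatMatrix n (x + t • entryDir r c i)) = keepRows T (quatMatrix n x) := by
    refine funext fun a => ?_
    by_cases ha : a.1 ∈ T
    · have : a.1 ≠ r := fun h => hr (h ▸ ha)
      simp only [keepRows, ha, if_true]
      exact quatMatrix_add_smul_of_ne x r c i t a this
    · simp [keepRows, ha]
  have h2 : (keepRows T (quatMatrix n x)).updateRow (c, i) (Pi.single (c, i) 1)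
      = keepRows T (quatMatrix n x) := by
    conv_rhs => rw [← updateRow_eq_self (keepRows T (quatMatrix n x)) (c, i)]
    simp [keepRows, hc]
  rw [h, quatMatrix_add_smul_fst, det_updateRow_add, det_updateRow_smul, h2]
  ring

/-- Eliminating the rows kept by `keepRows T` by Cramer's rule. -/
lemma sum_det_updateRow_mul_det_updateRow (T : Finset (Fin n)) (r : Fin n) (hr : r ∉ T)
    (G : Matrix (Fin n × Fin 2) (Fin n × Fin 2) ℂ) :
    ∑ c ∈ Tᶜ, ∑ i, ((keepRows T G).updateRow (c, i) (G (r, 0))).det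
        * (G.updateRow (r, 0) (Pi.single (c, i) 1)).det
      = (keepRows T G).det * G.det := by
  set H := keepRows T G with hH
  set μ : Fin n × Fin 2 → ℂ := fun j => (H.updateRow j (G (r, 0))).det with hμ
  have h1 : ∑ j, μ j • H j = H.det • G (r, 0) := by
    have : Hᵀ *ᵥ (cramer Hᵀ (G (r, 0))) = H.det • G (r, 0) := by
      rw [mulVec_cramer, det_transpose]
    rw [← this]
    ext b
    simp [mulVec, dotProduct, hμ, cramer_transpose_apply, mul_comm]
  let φ : (Fin n × Fin 2 → ℂ) →ₗ[ℂ] ℂ :=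
    { toFun := fun u => (G.updateRow (r, 0) u).det
      map_add' := fun u v => det_updateRow_add _ _ _ _
      map_smul' := fun u v => det_updateRow_smul _ _ _ _ }
  have h2 := congrArg φ h1
  have h3 : φ (G (r, 0)) = G.det := by simp [φ]
  rw [map_sum, map_smul, h3, Fintype.sum_prod_type, ← Finset.sum_add_sum_compl T,
    Finset.sum_eq_zero, zero_add] at h2
  · rw [← smul_eq_mul, ← h2]
    refine Finset.sum_congr rfl fun c hc => Finset.sum_congr rfl fun i _ => ?_
    have : H (c, i) = Pi.single (c, i) 1 := by simp [hH, keepRows, Finset.mem_compl.1 hc]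
    rw [map_smul, this]
    rfl
  · intro c hc
    refine Finset.sum_eq_zero fun i _ => ?_
    have h4 : H (c, i) = G (c, i) := by simp [hH, keepRows, hc]
    have h5 : φ (G (c, i)) = 0 :=
      det_updateRow_eq_zero (fun h => hr ((Prod.ext_iff.1 h).1 ▸ hc : (r, (0 : Fin 2)).1 ∈ T))
    rw [map_smul, h4, h5, smul_zero]

section TemperateGrowth

open Function Filter Topology

lemma hasTemperateGrowth_fderiv_apply {E F : Type*} [NormedAddCommGroup E] [NormedSpace ℝ E]
    [NormedAddCommGroup F] [NormedSpace ℝ F] {f : E → F} (hf : f.HasTemperateGrowth) (v : E) :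
    (fun x => fderiv ℝ f x v).HasTemperateGrowth := by
  have h : (fderiv ℝ f).HasTemperateGrowth := by
    refine ⟨hf.1.fderiv_right (by simp), fun m => ?_⟩
    obtain ⟨k, C, h⟩ := hf.2 (m + 1)
    exact ⟨k, C, fun x => by rw [norm_iteratedFDeriv_fderiv]; exact h x⟩
  exact (ContinuousLinearMap.apply ℝ F v).hasTemperateGrowth.comp h

lemma hasTemperateGrowth_prod {E ι : Type*} [NormedAddCommGroup E] [NormedSpace ℝ E]
    (s : Finset ι) {f : ι → E → ℂ} (hf : ∀ i ∈ s, (f i).HasTemperateGrowth) :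
    (fun x => ∏ i ∈ s, f i x).HasTemperateGrowth := by
  classical
  induction s using Finset.induction_on with
  | empty => simp
  | insert a s ha ih =>
    simp only [Finset.prod_insert ha]
    exact (hf a (by simp)).fun_mul (ih fun i hi => hf i (by simp [hi]))

lemma hasTemperateGrowth_det {E m : Type*} [NormedAddCommGroup E] [NormedSpace ℝ E]
    [Fintype m] [DecidableEq m] {M : E → Matrix m m ℂ}
    (hM : ∀ i j, (fun x => M x i j).HasTemperateGrowth) :
    (fun x => (M x).det).HasTemperateGrowth := by
  simp only [det_apply']
  exact HasTemperateGrowth.sum fun σ _ =>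
    (HasTemperateGrowth.const _).fun_mul (hasTemperateGrowth_prod _ fun i _ => hM _ _)

lemma hasTemperateGrowth_conj {E : Type*} [NormedAddCommGroup E] [NormedSpace ℝ E] {f : E → ℂ}
    (hf : f.HasTemperateGrowth) : (fun x => starRingEnd ℂ (f x)).HasTemperateGrowth :=
  (conjCLE : ℂ →L[ℝ] ℂ).hasTemperateGrowth.comp hf

lemma hasTemperateGrowth_fst (i j : Fin n) :
    (fun x : Fin n → Fin n → ℂ × ℂ => (x i j).1).HasTemperateGrowth :=
  ((ContinuousLinearMap.fst ℝ ℂ ℂ).comp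
    ((ContinuousLinearMap.proj j : (Fin n → ℂ × ℂ) →L[ℝ] ℂ × ℂ).comp
      (ContinuousLinearMap.proj i :
        (Fin n → Fin n → ℂ × ℂ) →L[ℝ] (Fin n → ℂ × ℂ)))).hasTemperateGrowth

lemma hasTemperateGrowth_snd (i j : Fin n) :
    (fun x : Fin n → Fin n → ℂ × ℂ => (x i j).2).HasTemperateGrowth :=
  ((ContinuousLinearMap.snd ℝ ℂ ℂ).comp
    ((ContinuousLinearMap.proj j : (Fin n → ℂ × ℂ) →L[ℝ] ℂ × ℂ).comp
      (ContinuousLinearMap.proj i :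
        (Fin n → Fin n → ℂ × ℂ) →L[ℝ] (Fin n → ℂ × ℂ)))).hasTemperateGrowth

lemma hasTemperateGrowth_entry (a b : Fin n × Fin 2) :
    (fun x => quatMatrix n x a b).HasTemperateGrowth := by
  obtain ⟨a, i⟩ := a
  obtain ⟨b, j⟩ := b
  fin_cases i <;> fin_cases j <;> simp [quatMatrix]
  · exact hasTemperateGrowth_fst a b
  · exact hasTemperateGrowth_snd a b
  · exact (hasTemperateGrowth_conj (hasTemperateGrowth_snd a b)).fun_neg
  · exact hasTemperateGrowth_conj (hasTemperateGrowth_fst a b)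

lemma hasTemperateGrowth_det_quatMatrix :
    (fun x => (quatMatrix n x).det).HasTemperateGrowth :=
  hasTemperateGrowth_det hasTemperateGrowth_entry

lemma hasTemperateGrowth_keepRows (T : Finset (Fin n)) (a b : Fin n × Fin 2) :
    (fun x => keepRows T (quatMatrix n x) a b).HasTemperateGrowth := by
  by_cases h : a.1 ∈ T
  · simpa [keepRows, h] using hasTemperateGrowth_entry a b
  · simp [keepRows, h]

lemma hasTemperateGrowth_updateRow {E m : Type*} [NormedAddCommGroup E] [NormedSpace ℝ E]
    [DecidableEq m] {M : E → Matrix m m ℂ} {u : E → m → ℂ} (k : m)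
    (hM : ∀ i j, (fun x => M x i j).HasTemperateGrowth)
    (hu : ∀ j, (fun x => u x j).HasTemperateGrowth) (i j : m) :
    (fun x => (M x).updateRow k (u x) i j).HasTemperateGrowth := by
  by_cases h : i = k
  · subst h; simpa using hu j
  · simpa [updateRow_ne h] using hM i j

lemma hasTemperateGrowth_halfTrace :
    (fun x : Fin n → Fin n → ℂ × ℂ => ((halfTrace x : ℝ) : ℂ)).HasTemperateGrowth := by
  simp only [halfTrace, ofReal_sum, ofReal_add, normSq_eq_conj_mul_self]
  exact HasTemperateGrowth.sum fun i _ => HasTemperateGrowth.sum fun j _ =>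
    ((hasTemperateGrowth_conj (hasTemperateGrowth_fst i j)).fun_mul
      (hasTemperateGrowth_fst i j)).fun_add
    ((hasTemperateGrowth_conj (hasTemperateGrowth_snd i j)).fun_mul (hasTemperateGrowth_snd i j))

lemma sq_norm_le_halfTrace (x : Fin n → Fin n → ℂ × ℂ) : ‖x‖ ^ 2 ≤ halfTrace x := by
  have h0 : 0 ≤ halfTrace x :=
    Finset.sum_nonneg fun i _ => Finset.sum_nonneg fun j _ =>
      add_nonneg (normSq_nonneg _) (normSq_nonneg _)
  refine (Real.le_sqrt (norm_nonneg _) h0).1 ?_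
  refine (pi_norm_le_iff_of_nonneg (Real.sqrt_nonneg _)).2 fun i =>
    (pi_norm_le_iff_of_nonneg (Real.sqrt_nonneg _)).2 fun j => ?_
  have h1 : normSq (x i j).1 + normSq (x i j).2 ≤ halfTrace x := by
    refine le_trans ?_ (Finset.single_le_sum (f := fun i => ∑ j, (normSq (x i j).1
      + normSq (x i j).2)) (fun i _ => Finset.sum_nonneg fun j _ =>
      add_nonneg (normSq_nonneg _) (normSq_nonneg _)) (Finset.mem_univ i))
    exact Finset.single_le_sum (f := fun j => normSq (x i j).1 + normSq (x i j).2)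
      (fun j _ => add_nonneg (normSq_nonneg _) (normSq_nonneg _)) (Finset.mem_univ j)
  have h2 := normSq_nonneg (x i j).1
  have h3 := normSq_nonneg (x i j).2
  rw [normSq_eq_norm_sq] at h1 h2
  rw [normSq_eq_norm_sq] at h1 h3
  refine max_le ?_ ?_ <;> refine Real.le_sqrt_of_sq_le ?_ <;> linarith

lemma continuous_halfTrace : Continuous (halfTrace (n := n)) := by
  unfold halfTrace
  have := Complex.continuous_normSq
  fun_prop

lemma continuous_re_det_quatMatrix :
    Continuous fun x : Fin n → Fin n → ℂ × ℂ => (quatMatrix n x).det.re :=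
  continuous_re.comp hasTemperateGrowth_det_quatMatrix.1.continuous

instance : (volume : Measure (ℂ × ℂ)).IsAddHaarMeasure :=
  Measure.prod.instIsAddHaarMeasure _ _

instance : (volume : Measure (Fin n → ℂ × ℂ)).IsAddHaarMeasure :=
  Measure.pi.isAddHaarMeasure _

instance : (volume : Measure (Fin n → Fin n → ℂ × ℂ)).IsAddHaarMeasure :=
  Measure.pi.isAddHaarMeasure _

lemma exists_one_add_pow_mul_exp_le (m : ℕ) :
    ∃ C : ℝ, ∀ t : ℝ, 0 ≤ t → (1 + t) ^ m * Real.exp (-t ^ 2) ≤ C := by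
  refine ⟨m.factorial * Real.exp (5 / 4), fun t ht => ?_⟩
  have h1 : (1 + t) ^ m ≤ m.factorial * Real.exp (1 + t) := by
    have := Real.pow_div_factorial_le_exp (1 + t) (by linarith) m
    rwa [div_le_iff₀' (by positivity)] at this
  calc (1 + t) ^ m * Real.exp (-t ^ 2)
      ≤ m.factorial * Real.exp (1 + t) * Real.exp (-t ^ 2) := by gcongr
    _ = m.factorial * Real.exp (1 + t - t ^ 2) := by rw [mul_assoc, ← Real.exp_add]; ring_nf
    _ ≤ _ := by gcongr; nlinarith [sq_nonneg (t - 1 / 2)]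

lemma integrable_mul_exp_neg_halfTrace {f : (Fin n → Fin n → ℂ × ℂ) → ℂ}
    (hf : f.HasTemperateGrowth) :
    Integrable fun x => f x * (Real.exp (-halfTrace x) : ℂ) := by
  obtain ⟨k, C, hC⟩ := hf.2 0
  simp only [norm_iteratedFDeriv_zero] at hC
  set d := Module.finrank ℝ (Fin n → Fin n → ℂ × ℂ) + 1
  obtain ⟨C', hC'⟩ := exists_one_add_pow_mul_exp_le (k + d)
  have hintegrable : Integrable (fun x : Fin n → Fin n → ℂ × ℂ => (1 + ‖x‖) ^ (-(d : ℝ))) :=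
    integrable_one_add_norm (by simp [d])
  refine (hintegrable.const_mul (C * C')).mono' ?_ (Filter.Eventually.of_forall fun x => ?_)
  · refine Continuous.aestronglyMeasurable (hf.1.continuous.mul ?_)
    exact continuous_ofReal.comp (Real.continuous_exp.comp continuous_halfTrace.neg)
  have hC0 : 0 ≤ C := by
    have := (norm_nonneg _).trans (hC 0)
    simpa using this
  have hp : 0 < 1 + ‖x‖ := by positivity
  have h3 : Real.exp (-halfTrace x) ≤ Real.exp (-‖x‖ ^ 2) := by
    gcongr
    exact sq_norm_le_halfTrace x
  rw [norm_mul, norm_real, Real.norm_eq_abs, Real.abs_exp, Real.rpow_neg hp.le, Real.rpow_natCast,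
    ← div_eq_mul_inv, le_div_iff₀ (by positivity)]
  calc ‖f x‖ * Real.exp (-halfTrace x) * (1 + ‖x‖) ^ d
      ≤ (C * (1 + ‖x‖) ^ k) * Real.exp (-‖x‖ ^ 2) * (1 + ‖x‖) ^ d := by
        gcongr
        exact hC x
    _ = C * ((1 + ‖x‖) ^ (k + d) * Real.exp (-‖x‖ ^ 2)) := by ring
    _ ≤ C * C' := by
        gcongr
        exact hC' _ (norm_nonneg _)

lemma regWeight_nonneg (α : ℝ) {ε : ℝ} (hε : 0 ≤ ε) (x : Fin n → Fin n → ℂ × ℂ) :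
    0 ≤ regWeight α ε x := by
  unfold regWeight
  positivity

lemma measurable_regWeight (α ε : ℝ) : Measurable (regWeight (n := n) α ε) := by
  unfold regWeight
  have h1 := (continuous_re_det_quatMatrix (n := n)).measurable
  have h2 := (continuous_halfTrace (n := n)).measurable
  fun_prop

lemma integrable_mul_regWeight {α ε : ℝ} (hα : 0 ≤ α) (hε : 0 ≤ ε)
    {f : (Fin n → Fin n → ℂ × ℂ) → ℂ} (hf : f.HasTemperateGrowth) :
    Integrable fun x => f x * (regWeight α ε x : ℂ) := by
  have h1 : (fun x => f x * (1 + (quatMatrix n x).det ^ 2 + ε) ^ ⌈α⌉₊).HasTemperateGrowth :=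
    hf.fun_mul ((((HasTemperateGrowth.const 1).fun_add
      (hasTemperateGrowth_det_quatMatrix.fun_pow 2)).fun_add (HasTemperateGrowth.const _)).fun_pow _)
  refine (integrable_mul_exp_neg_halfTrace h1).mono ?_ (Filter.Eventually.of_forall fun x => ?_)
  · exact hf.1.continuous.aestronglyMeasurable.mul
      (measurable_ofReal.comp (measurable_regWeight α ε)).aestronglyMeasurable
  have h2 : (1 + (quatMatrix n x).det ^ 2 + ε)
      = ((1 + (quatMatrix n x).det.re ^ 2 + ε : ℝ) : ℂ) := by
    push_cast
    rw [ofReal_re_det_quatMatrix]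
  have h3 : 0 ≤ 1 + (quatMatrix n x).det.re ^ 2 + ε := by positivity
  rw [h2, norm_mul, norm_mul, norm_mul, norm_pow, norm_real, norm_real, norm_real,
    Real.norm_of_nonneg (regWeight_nonneg α hε x), Real.norm_of_nonneg h3,
    Real.norm_of_nonneg (Real.exp_pos _).le, mul_assoc, regWeight]
  gcongr
  calc ((quatMatrix n x).det.re ^ 2 + ε) ^ α ≤ (1 + (quatMatrix n x).det.re ^ 2 + ε) ^ α := by
        gcongr
        linarith
    _ ≤ (1 + (quatMatrix n x).det.re ^ 2 + ε) ^ (⌈α⌉₊ : ℝ) := by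
        refine Real.rpow_le_rpow_of_exponent_le ?_ (Nat.le_ceil α)
        nlinarith [sq_nonneg (quatMatrix n x).det.re]
    _ = _ := Real.rpow_natCast _ _

lemma regWeight_sub_one (α : ℝ) {ε : ℝ} (hε : 0 < ε) (x : Fin n → Fin n → ℂ × ℂ) :
    regWeight (α - 1) ε x = regWeight α ε x / ((quatMatrix n x).det.re ^ 2 + ε) := by
  rw [regWeight, Real.rpow_sub_one (by positivity), regWeight]
  ring

lemma integrable_mul_regWeight_sub_one {α ε : ℝ} (hα : 0 ≤ α) (hε : 0 < ε)
    {f : (Fin n → Fin n → ℂ × ℂ) → ℂ} (hf : f.HasTemperateGrowth) :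
    Integrable fun x => f x * (regWeight (α - 1) ε x : ℂ) := by
  refine ((integrable_mul_regWeight hα hε.le hf).norm.mul_const ε⁻¹).mono' ?_
    (Filter.Eventually.of_forall fun x => ?_)
  · exact hf.1.continuous.aestronglyMeasurable.mul
      (measurable_ofReal.comp (measurable_regWeight _ ε)).aestronglyMeasurable
  rw [norm_mul, norm_mul, norm_real, norm_real, Real.norm_of_nonneg (regWeight_nonneg α hε.le x),
    Real.norm_of_nonneg (regWeight_nonneg _ hε.le x), regWeight_sub_one α hε, div_eq_mul_inv,
    ← mul_assoc]
  have := regWeight_nonneg α hε.le x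
  gcongr
  nlinarith [sq_nonneg (quatMatrix n x).det.re]

end TemperateGrowth

/-- The Wirtinger derivative of a function that is of bidegree at most `(1, 1)` in `t, conj t`. -/
lemma fderiv_sub_I_mul_fderiv {E : Type*} [NormedAddCommGroup E] [NormedSpace ℝ E] [Module ℂ E]
    [IsScalarTower ℝ ℂ E] {f : E → ℂ} {x v : E} (hf : DifferentiableAt ℝ f x) {c₀ c₁ c₂ c₃ : ℂ}
    (h : ∀ t : ℂ, f (x + t • v) = c₀ + c₁ * t + c₂ * starRingEnd ℂ t
      + c₃ * (t * starRingEnd ℂ t)) :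
    fderiv ℝ f x v - I * fderiv ℝ f x (I • v) = 2 * c₁ := by
  have key : ∀ w : ℂ, fderiv ℝ f x (w • v) = c₁ * w + c₂ * starRingEnd ℂ w := by
    intro w
    refine (hf.hasFDerivAt.hasLineDerivAt (w • v)).unique ?_
    have h1 : ∀ s : ℝ, f (x + s • (w • v)) = c₀ + c₁ * w * s + c₂ * starRingEnd ℂ w * s
        + c₃ * (w * starRingEnd ℂ w) * (s * s) := by
      intro s
      have : s • (w • v) = ((s : ℂ) * w) • v := by
        rw [mul_smul, ← Complex.coe_algebraMap, algebraMap_smul]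
      rw [this, h]
      simp
      ring
    unfold HasLineDerivAt
    simp only [h1]
    have hs : HasDerivAt (fun s : ℝ => (s : ℂ)) 1 0 := ofRealCLM.hasDerivAt
    have := ((((hasDerivAt_const (0 : ℝ) c₀).add (hs.const_mul (c₁ * w))).add
      (hs.const_mul (c₂ * starRingEnd ℂ w))).add
      ((hs.mul hs).const_mul (c₃ * (w * starRingEnd ℂ w))))
    convert! this using 1
    simp
  have h1 := key 1
  rw [one_smul] at h1
  rw [h1, key I, conj_I, map_one]
  linear_combination (c₂ - c₁) * I_mul_I

section IntegrationByParts

open Function Filter Topology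

lemma ofReal_re_fderiv {E : Type*} [NormedAddCommGroup E] [NormedSpace ℝ E] {f : E → ℂ}
    (hreal : ∀ x, ((f x).re : ℂ) = f x) {x : E} (hf : DifferentiableAt ℝ f x) (v : E) :
    ((fderiv ℝ f x v).re : ℂ) = fderiv ℝ f x v := by
  have h1 : HasFDerivAt (fun y => (f y).re) (reCLM.comp (fderiv ℝ f x)) x :=
    reCLM.hasFDerivAt.comp x hf.hasFDerivAt
  have h2 : HasFDerivAt f (ofRealCLM.comp (reCLM.comp (fderiv ℝ f x))) x := by
    refine (ofRealCLM.hasFDerivAt.comp x h1).congr_of_eventuallyEq (Eventually.of_forall fun y => ?_)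
    exact (hreal y).symm
  conv_rhs => rw [h2.fderiv]
  simp

lemma hasFDerivAt_re {E : Type*} [NormedAddCommGroup E] [NormedSpace ℝ E] {f : E → ℂ} {x : E}
    (hf : DifferentiableAt ℝ f x) :
    HasFDerivAt (fun y => (f y).re) (reCLM.comp (fderiv ℝ f x)) x :=
  reCLM.hasFDerivAt.comp x hf.hasFDerivAt

lemma differentiable_det_quatMatrix : Differentiable ℝ fun x => (quatMatrix n x).det :=
  hasTemperateGrowth_det_quatMatrix.1.differentiable (by simp)

lemma differentiable_halfTrace :
    Differentiable ℝ fun x : Fin n → Fin n → ℂ × ℂ => ((halfTrace x : ℝ) : ℂ) :=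
  hasTemperateGrowth_halfTrace.1.differentiable (by simp)

lemma hasFDerivAt_regWeight (α : ℝ) {ε : ℝ} (hε : 0 < ε) (x : Fin n → Fin n → ℂ × ℂ) :
    ∃ L : (Fin n → Fin n → ℂ × ℂ) →L[ℝ] ℂ,
      HasFDerivAt (fun x => (regWeight α ε x : ℂ)) L x ∧ ∀ v,
      L v = 2 * α * (quatMatrix n x).det * fderiv ℝ (fun x => (quatMatrix n x).det) x v
          * regWeight (α - 1) ε x
        - fderiv ℝ (fun x => ((halfTrace x : ℝ) : ℂ)) x v * regWeight α ε x := by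
  have hD := hasFDerivAt_re (differentiable_det_quatMatrix (n := n) x)
  have hq := hasFDerivAt_re (differentiable_halfTrace (n := n) x)
  simp only [ofReal_re] at hq
  have hpos : (quatMatrix n x).det.re ^ 2 + ε ≠ 0 := by positivity
  have h1 := (((hD.pow 2).add_const ε).rpow_const (p := α) (Or.inl hpos)).mul hq.fun_neg.exp
  have h2 := (ofRealCLM.hasFDerivAt (x := regWeight α ε x)).comp x h1
  refine ⟨_, h2, fun v => ?_⟩
  rw [← ofReal_re_fderiv (fun x => ofReal_re_det_quatMatrix x) (differentiable_det_quatMatrix x) v,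
    ← ofReal_re_fderiv (fun x => by simp) (differentiable_halfTrace x) v,
    ← ofReal_re_det_quatMatrix x]
  simp only [regWeight, ContinuousLinearMap.comp_apply, ofRealCLM_apply, reCLM_apply,
    _root_.add_apply, _root_.smul_apply, smul_eq_mul,
    _root_.neg_apply]
  push_cast
  simp
  ring

/-- The determinant of `keepRows T G` with the row `(c, i)` replaced by the row `(r, 0)` of `G`. -/
noncomputable def exchangeDet (T : Finset (Fin n)) (r c : Fin n) (i : Fin 2)
    (x : Fin n → Fin n → ℂ × ℂ) : ℂ :=
  ((keepRows T (quatMatrix n x)).updateRow (c, i) (quatMatrix n x (r, 0))).det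

lemma hasTemperateGrowth_exchangeDet (T : Finset (Fin n)) (r c : Fin n) (i : Fin 2) :
    (exchangeDet T r c i).HasTemperateGrowth :=
  hasTemperateGrowth_det (hasTemperateGrowth_updateRow _ (hasTemperateGrowth_keepRows T)
    (hasTemperateGrowth_entry _))

lemma hasTemperateGrowth_det_keepRows (T : Finset (Fin n)) :
    (fun x => (keepRows T (quatMatrix n x)).det).HasTemperateGrowth :=
  hasTemperateGrowth_det (hasTemperateGrowth_keepRows T)

/-- The determinant of `G` with the row `(r, 0)` replaced by a basis vector. -/
noncomputable def cofactor (r c : Fin n) (i : Fin 2) (x : Fin n → Fin n → ℂ × ℂ) : ℂ :=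
  ((quatMatrix n x).updateRow (r, 0) (Pi.single (c, i) 1)).det

lemma hasTemperateGrowth_cofactor (r c : Fin n) (i : Fin 2) :
    (cofactor r c i).HasTemperateGrowth :=
  hasTemperateGrowth_det (hasTemperateGrowth_updateRow _ hasTemperateGrowth_entry
    (fun _ => HasTemperateGrowth.const _))

lemma integral_exchangeDet_byParts {α ε : ℝ} (hα : 0 ≤ α) (hε : 0 < ε) (T : Finset (Fin n))
    (r c : Fin n) (i : Fin 2) (hr : r ∉ T) (hc : c ∉ T) :
    (∫ x, starRingEnd ℂ (quatMatrix n x (r, 0) (c, i)) * exchangeDet T r c i x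
        * (regWeight α ε x : ℂ))
      - 2 * α * ∫ x, exchangeDet T r c i x * cofactor r c i x * (quatMatrix n x).det
        * (regWeight (α - 1) ε x : ℂ)
      = ∫ x, (keepRows T (quatMatrix n x)).det * (regWeight α ε x : ℂ) := by
  choose L hL hLv using hasFDerivAt_regWeight (n := n) α hε
  set V := exchangeDet T r c i with hV
  have hVt : V.HasTemperateGrowth := hasTemperateGrowth_exchangeDet T r c i
  have hVd : Differentiable ℝ V := hVt.1.differentiable (by simp)
  have hDt := hasTemperateGrowth_det_quatMatrix (n := n)
  have hgd : Differentiable ℝ (fun x : Fin n → Fin n → ℂ × ℂ => (regWeight α ε x : ℂ)) :=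
    fun x => (hL x).differentiableAt
  have hg : ∀ v, Integrable (fun x => V x * fderiv ℝ (fun x => (regWeight α ε x : ℂ)) x v) := by
    intro v
    have i1 := (integrable_mul_regWeight_sub_one hα hε ((hVt.fun_mul hDt).fun_mul
      (hasTemperateGrowth_fderiv_apply hDt v))).const_mul (2 * α : ℂ)
    have i2 := integrable_mul_regWeight hα hε.le
      (hVt.fun_mul (hasTemperateGrowth_fderiv_apply hasTemperateGrowth_halfTrace v))
    refine (i1.sub i2).congr (Eventually.of_forall fun x => ?_)
    simp only [(hL x).fderiv, hLv, Pi.sub_apply]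
    ring
  have hf : ∀ v, Integrable (fun x => fderiv ℝ V x v * (regWeight α ε x : ℂ)) := fun v =>
    integrable_mul_regWeight hα hε.le (hasTemperateGrowth_fderiv_apply hVt v)
  have key : ∀ v, ∫ x, V x * fderiv ℝ (fun x => (regWeight α ε x : ℂ)) x v
      = - ∫ x, fderiv ℝ V x v * (regWeight α ε x : ℂ) := fun v =>
    integral_mul_fderiv_eq_neg_fderiv_mul_of_integrable (hf v) (hg v)
      (integrable_mul_regWeight hα hε.le hVt) (fun x _ => hVd x) (fun x _ => hgd x)
  have h1 := key (entryDir r c i)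
  have h2 := key (I • entryDir r c i)
  have h3 : (∫ x, V x * fderiv ℝ (fun x => (regWeight α ε x : ℂ)) x (entryDir r c i))
      - I * ∫ x, V x * fderiv ℝ (fun x => (regWeight α ε x : ℂ)) x (I • entryDir r c i)
      = 2 * (2 * α * (∫ x, V x * cofactor r c i x * (quatMatrix n x).det
        * (regWeight (α - 1) ε x : ℂ))
        - ∫ x, starRingEnd ℂ (quatMatrix n x (r, 0) (c, i)) * V x * (regWeight α ε x : ℂ)) := by
    rw [← integral_const_mul, ← integral_sub (hg _) ((hg _).const_mul _), ← integral_const_mul,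
      ← integral_sub, ← integral_const_mul]
    · refine integral_congr_ae (Eventually.of_forall fun x => ?_)
      obtain ⟨a₀, a₂, a₃, ha⟩ := exists_det_quatMatrix_add_smul x r c i
      obtain ⟨b₀, b₂, b₃, hb⟩ := exists_halfTrace_add_smul x r c i
      have hD := fderiv_sub_I_mul_fderiv (differentiable_det_quatMatrix x) ha
      have hq := fderiv_sub_I_mul_fderiv (differentiable_halfTrace x) hb
      simp only [(hL x).fderiv, hLv, cofactor]
      linear_combination (V x * 2 * α * (quatMatrix n x).det * (regWeight (α - 1) ε x : ℂ)) * hD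
        - (V x * (regWeight α ε x : ℂ)) * hq
    · exact (integrable_mul_regWeight_sub_one hα hε ((hVt.fun_mul
        (hasTemperateGrowth_cofactor r c i)).fun_mul hDt)).const_mul _
    · exact integrable_mul_regWeight hα hε.le
        ((hasTemperateGrowth_conj (hasTemperateGrowth_entry _ _)).fun_mul hVt)
  have h4 : (∫ x, fderiv ℝ V x (entryDir r c i) * (regWeight α ε x : ℂ))
      - I * ∫ x, fderiv ℝ V x (I • entryDir r c i) * (regWeight α ε x : ℂ)
      = 2 * ∫ x, (keepRows T (quatMatrix n x)).det * (regWeight α ε x : ℂ) := by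
    rw [← integral_const_mul, ← integral_sub (hf _) ((hf _).const_mul _), ← integral_const_mul]
    refine integral_congr_ae (Eventually.of_forall fun x => ?_)
    obtain ⟨a₀, a₂, a₃, ha⟩ := exists_det_keepRows_updateRow_add_smul T x r c i hr hc
    have hD := fderiv_sub_I_mul_fderiv (hVd x) ha
    simp only
    linear_combination (regWeight α ε x : ℂ) * hD
  rw [h1, h2] at h3
  linear_combination (1 / 2 : ℂ) * h3 + (1 / 2 : ℂ) * h4

/-- The pairing of the functions `exchangeDet` with the conjugates of the entries `(r, 0)`, `(c, i)`. -/
noncomputable def exchangeTerm (T : Finset (Fin n)) (r c : Fin n)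
    (x : Fin n → Fin n → ℂ × ℂ) : ℂ :=
  ∑ i, starRingEnd ℂ (quatMatrix n x (r, 0) (c, i)) * exchangeDet T r c i x

lemma hasTemperateGrowth_exchangeTerm (T : Finset (Fin n)) (r c : Fin n) :
    (exchangeTerm T r c).HasTemperateGrowth :=
  HasTemperateGrowth.sum fun i _ => (hasTemperateGrowth_conj
      (hasTemperateGrowth_entry _ _)).fun_mul (hasTemperateGrowth_exchangeDet T r c i)

/-- The vector field with components `exchangeDet T r c i`, for `c ∉ T`, applied to
`Tr(G G†) / 2`. -/
noncomputable def exchangeSum (T : Finset (Fin n)) (r : Fin n) (x : Fin n → Fin n → ℂ × ℂ) : ℂ :=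
  ∑ c ∈ Tᶜ, exchangeTerm T r c x

lemma integral_exchangeSum_regWeight {α ε : ℝ} (hα : 0 ≤ α) (hε : 0 < ε) (T : Finset (Fin n))
    (r : Fin n) (hr : r ∉ T) :
    (∫ x, exchangeSum T r x * (regWeight α ε x : ℂ))
      - 2 * α * ∫ x, (keepRows T (quatMatrix n x)).det * (quatMatrix n x).det ^ 2
        * (regWeight (α - 1) ε x : ℂ)
      = 2 * (Tᶜ.card : ℂ) * ∫ x, (keepRows T (quatMatrix n x)).det * (regWeight α ε x : ℂ) := by
  have h := Finset.sum_congr rfl fun c (hc : c ∈ Tᶜ) =>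
    Finset.sum_congr rfl fun i (_ : i ∈ (Finset.univ : Finset (Fin 2))) =>
      integral_exchangeDet_byParts hα hε T r c i hr (Finset.mem_compl.1 hc)
  simp only [Finset.sum_sub_distrib, ← Finset.mul_sum, Finset.sum_const, Finset.card_univ,
    Fintype.card_fin, nsmul_eq_mul] at h
  have e1 : ∫ x, exchangeSum T r x * (regWeight α ε x : ℂ)
      = ∑ c ∈ Tᶜ, ∑ i, ∫ x, starRingEnd ℂ (quatMatrix n x (r, 0) (c, i)) * exchangeDet T r c i x
        * (regWeight α ε x : ℂ) := by
    have hintegrable : ∀ c i, Integrable fun x => starRingEnd ℂ (quatMatrix n x (r, 0) (c, i))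
        * exchangeDet T r c i x * (regWeight α ε x : ℂ) := fun c i =>
      integrable_mul_regWeight hα hε.le ((hasTemperateGrowth_conj
        (hasTemperateGrowth_entry _ _)).fun_mul (hasTemperateGrowth_exchangeDet T r c i))
    simp only [exchangeSum, exchangeTerm, Finset.sum_mul]
    rw [integral_finsetSum _ fun c _ => integrable_finsetSum _ fun i _ => hintegrable c i]
    exact Finset.sum_congr rfl fun c _ => integral_finsetSum _ fun i _ => hintegrable c i
  have e2 : ∫ x, (keepRows T (quatMatrix n x)).det * (quatMatrix n x).det ^ 2
        * (regWeight (α - 1) ε x : ℂ)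
      = ∑ c ∈ Tᶜ, ∑ i, ∫ x, exchangeDet T r c i x * cofactor r c i x * (quatMatrix n x).det
        * (regWeight (α - 1) ε x : ℂ) := by
    have hintegrable : ∀ c i, Integrable fun x => exchangeDet T r c i x * cofactor r c i x
        * (quatMatrix n x).det * (regWeight (α - 1) ε x : ℂ) := fun c i =>
      integrable_mul_regWeight_sub_one hα hε (((hasTemperateGrowth_exchangeDet T r c i).fun_mul
        (hasTemperateGrowth_cofactor r c i)).fun_mul hasTemperateGrowth_det_quatMatrix)
    rw [Finset.sum_congr rfl fun c _ => (integral_finsetSum _ fun i _ => hintegrable c i).symm,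
      ← integral_finsetSum _ fun c _ => integrable_finsetSum _ fun i _ => hintegrable c i]
    refine integral_congr_ae (Eventually.of_forall fun x => ?_)
    have := sum_det_updateRow_mul_det_updateRow T r hr (quatMatrix n x)
    simp only [← Finset.sum_mul, exchangeDet, cofactor]
    rw [this]
    ring
  rw [e1, e2, h]
  push_cast
  ring

lemma regWeight_mono {α ε δ : ℝ} (hα : 0 ≤ α) (hε : 0 ≤ ε) (h : ε ≤ δ)
    (x : Fin n → Fin n → ℂ × ℂ) : regWeight α ε x ≤ regWeight α δ x := by
  unfold regWeight
  gcongr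

lemma tendsto_regWeight {α : ℝ} (hα : 0 ≤ α) (x : Fin n → Fin n → ℂ × ℂ) :
    Tendsto (fun ε => regWeight α ε x) (𝓝[>] 0) (𝓝 (regWeight α 0 x)) := by
  have : Continuous fun ε => regWeight α ε x := by
    unfold regWeight
    exact ((continuous_const.add continuous_id).rpow_const fun _ => Or.inr hα).mul continuous_const
  exact (this.tendsto 0).mono_left nhdsWithin_le_nhds

lemma tendsto_integral_regWeight {α : ℝ} (hα : 0 ≤ α) {f : (Fin n → Fin n → ℂ × ℂ) → ℂ}
    (hf : f.HasTemperateGrowth) :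
    Tendsto (fun ε => ∫ x, f x * (regWeight α ε x : ℂ)) (𝓝[>] 0)
      (𝓝 (∫ x, f x * (regWeight α 0 x : ℂ))) := by
  refine tendsto_integral_filter_of_dominated_convergence
    (fun x => ‖f x * (regWeight α 1 x : ℂ)‖) ?_ ?_
    (integrable_mul_regWeight hα zero_le_one hf).norm ?_
  · filter_upwards [self_mem_nhdsWithin] with ε hε
    exact (integrable_mul_regWeight hα (le_of_lt hε) hf).aestronglyMeasurable
  · filter_upwards [Ioc_mem_nhdsGT (zero_lt_one (α := ℝ))] with ε hε
    refine Eventually.of_forall fun x => ?_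
    rw [norm_mul, norm_mul, norm_real, norm_real, Real.norm_of_nonneg (regWeight_nonneg α hε.1.le x),
      Real.norm_of_nonneg (regWeight_nonneg α zero_le_one x)]
    gcongr
    exact regWeight_mono hα hε.1.le hε.2 x
  · refine Eventually.of_forall fun x => ?_
    exact ((continuous_ofReal.tendsto _).comp (tendsto_regWeight hα x)).const_mul (f x)

lemma tendsto_integral_regWeight_sub_one {α : ℝ} (hα : 0 < α)
    {f : (Fin n → Fin n → ℂ × ℂ) → ℂ} (hf : f.HasTemperateGrowth) :
    Tendsto (fun ε => ∫ x, f x * (quatMatrix n x).det ^ 2 * (regWeight (α - 1) ε x : ℂ)) (𝓝[>] 0)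
      (𝓝 (∫ x, f x * (regWeight α 0 x : ℂ))) := by
  have heq : ∀ ε > 0, ∀ x : Fin n → Fin n → ℂ × ℂ,
      f x * (quatMatrix n x).det ^ 2 * (regWeight (α - 1) ε x : ℂ)
      = f x * (((quatMatrix n x).det.re ^ 2 / ((quatMatrix n x).det.re ^ 2 + ε)
        * regWeight α ε x : ℝ) : ℂ) := by
    intro ε hε x
    rw [regWeight_sub_one α hε, ← ofReal_re_det_quatMatrix]
    push_cast
    rw [ofReal_re]
    ring
  refine tendsto_integral_filter_of_dominated_convergence
    (fun x => ‖f x * (regWeight α 1 x : ℂ)‖) ?_ ?_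
    (integrable_mul_regWeight hα.le zero_le_one hf).norm ?_
  · filter_upwards [self_mem_nhdsWithin] with ε hε
    exact (integrable_mul_regWeight_sub_one hα.le hε
      (hf.fun_mul (hasTemperateGrowth_det_quatMatrix.fun_pow 2))).aestronglyMeasurable
  · filter_upwards [Ioc_mem_nhdsGT (zero_lt_one (α := ℝ))] with ε hε
    refine Eventually.of_forall fun x => ?_
    have h0 := regWeight_nonneg α hε.1.le x
    have hε0 := hε.1
    have h1 : (quatMatrix n x).det.re ^ 2 / ((quatMatrix n x).det.re ^ 2 + ε) ≤ 1 :=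
      div_le_one_of_le₀ (by linarith) (by positivity)
    rw [heq ε hε.1, norm_mul, norm_mul, norm_real, norm_real,
      Real.norm_of_nonneg (by positivity), Real.norm_of_nonneg (regWeight_nonneg α zero_le_one x)]
    gcongr
    exact (mul_le_of_le_one_left h0 h1).trans (regWeight_mono hα.le hε.1.le hε.2 x)
  · refine Eventually.of_forall fun x => ?_
    suffices h : Tendsto (fun ε => (quatMatrix n x).det.re ^ 2 / ((quatMatrix n x).det.re ^ 2 + ε)
        * regWeight α ε x) (𝓝[>] 0) (𝓝 (regWeight α 0 x)) by
      refine (((continuous_ofReal.tendsto _).comp h).const_mul (f x)).congr' ?_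
      filter_upwards [self_mem_nhdsWithin] with ε hε
      exact (heq ε hε x).symm
    by_cases hd : (quatMatrix n x).det.re = 0
    · simp [regWeight, hd, Real.zero_rpow hα.ne']
    · have h1 : Tendsto (fun ε => (quatMatrix n x).det.re ^ 2 / ((quatMatrix n x).det.re ^ 2 + ε))
          (𝓝[>] 0) (𝓝 1) := by
        have h2 : Tendsto (fun ε => (quatMatrix n x).det.re ^ 2 / ((quatMatrix n x).det.re ^ 2 + ε))
            (𝓝 0) (𝓝 ((quatMatrix n x).det.re ^ 2 / ((quatMatrix n x).det.re ^ 2 + 0))) :=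
          tendsto_const_nhds.div (tendsto_const_nhds.add tendsto_id) (by simp [hd])
        rw [add_zero, div_self (by simp [hd])] at h2
        exact h2.mono_left nhdsWithin_le_nhds
      simpa using h1.mul (tendsto_regWeight hα.le x)

lemma integral_exchangeSum {α : ℝ} (hα : 0 ≤ α) (T : Finset (Fin n)) (r : Fin n) (hr : r ∉ T) :
    ∫ x, exchangeSum T r x * (regWeight α 0 x : ℂ)
      = 2 * ((Tᶜ.card : ℂ) + α)
        * ∫ x, (keepRows T (quatMatrix n x)).det * (regWeight α 0 x : ℂ) := by
  have hB : (exchangeSum T r).HasTemperateGrowth :=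
    HasTemperateGrowth.sum fun c _ => hasTemperateGrowth_exchangeTerm T r c
  have hK := hasTemperateGrowth_det_keepRows T
  have h2 : Tendsto (fun ε => 2 * (α : ℂ) * ∫ x, (keepRows T (quatMatrix n x)).det
      * (quatMatrix n x).det ^ 2 * (regWeight (α - 1) ε x : ℂ)) (𝓝[>] 0)
      (𝓝 (2 * α * ∫ x, (keepRows T (quatMatrix n x)).det * (regWeight α 0 x : ℂ))) := by
    rcases hα.eq_or_lt with rfl | hα'
    · simp
    · exact (tendsto_integral_regWeight_sub_one hα' hK).const_mul _
  have h3 := ((tendsto_integral_regWeight hα hB).sub h2)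
  have h4 := (tendsto_integral_regWeight hα hK).const_mul (2 * (Tᶜ.card : ℂ))
  have h5 := tendsto_nhds_unique (h3.congr' (by
    filter_upwards [self_mem_nhdsWithin] with ε hε
    exact integral_exchangeSum_regWeight hα hε T r hr)) h4
  linear_combination h5

end IntegrationByParts

section Symmetry

open Function

lemma integral_comp_permCols (σ : Equiv.Perm (Fin n)) (f : (Fin n → Fin n → ℂ × ℂ) → ℂ) :
    ∫ x : Fin n → Fin n → ℂ × ℂ, f (fun i j => x i (σ j)) = ∫ x, f x := by
  have h : MeasurePreserving (MeasurableEquiv.piCongrRight fun _ : Fin n =>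
      MeasurableEquiv.piCongrLeft (fun _ : Fin n => ℂ × ℂ) σ.symm) :=
    volume_preserving_pi (f := fun _ : Fin n =>
      MeasurableEquiv.piCongrLeft (fun _ : Fin n => ℂ × ℂ) σ.symm)
      fun _ => volume_measurePreserving_piCongrLeft _ _
  rw [← h.integral_comp' f]
  refine integral_congr_ae (Filter.Eventually.of_forall fun x => congrArg f ?_)
  funext i j
  have := Equiv.piCongrLeft_apply_apply (fun _ : Fin n => ℂ × ℂ) σ.symm (x i) (σ j)
  rw [Equiv.symm_apply_apply] at this
  exact this.symm

lemma integral_comp_negRow (r : Fin n) (f : (Fin n → Fin n → ℂ × ℂ) → ℂ) :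
    ∫ x : Fin n → Fin n → ℂ × ℂ, f (fun i => if i = r then -x i else x i) = ∫ x, f x := by
  have h : MeasurePreserving (MeasurableEquiv.piCongrRight fun i : Fin n =>
      if i = r then MeasurableEquiv.neg (Fin n → ℂ × ℂ) else MeasurableEquiv.refl _) := by
    refine volume_preserving_pi fun i => ?_
    by_cases hi : i = r
    · have : (volume : Measure (Fin n → ℂ × ℂ)).IsNegInvariant := Measure.pi.isNegInvariant _
      simpa [hi] using! Measure.measurePreserving_neg (volume : Measure (Fin n → ℂ × ℂ))
    · have : (volume : Measure (Fin n → ℂ × ℂ)).IsNegInvariant := Measure.pi.isNegInvariant _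
      simpa [hi] using! MeasurePreserving.id (volume : Measure (Fin n → ℂ × ℂ))
  rw [← h.integral_comp' f]
  refine integral_congr_ae (Filter.Eventually.of_forall fun x => congrArg f ?_)
  funext i
  by_cases hi : i = r <;> simp [MeasurableEquiv.piCongrRight, hi]

/-- The exchange of the column pairs `c` and `r`. -/
def pairSwap (c r : Fin n) : Equiv.Perm (Fin n × Fin 2) :=
  Equiv.prodCongrLeft fun _ => Equiv.swap c r

lemma sign_pairSwap (c r : Fin n) : Equiv.Perm.sign (pairSwap c r) = 1 := by
  rw [pairSwap, Equiv.Perm.sign_prodCongrLeft, Fin.prod_univ_two, Int.units_mul_self]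

lemma quatMatrix_swapCols (c r : Fin n) (x : Fin n → Fin n → ℂ × ℂ) :
    quatMatrix n (fun i j => x i (Equiv.swap c r j))
      = (quatMatrix n x).submatrix id (pairSwap c r) := rfl

lemma halfTrace_swapCols (c r : Fin n) (x : Fin n → Fin n → ℂ × ℂ) :
    halfTrace (fun i j => x i (Equiv.swap c r j)) = halfTrace x :=
  Finset.sum_congr rfl fun i _ =>
    Equiv.sum_comp (Equiv.swap c r) fun j => normSq (x i j).1 + normSq (x i j).2

lemma regWeight_swapCols (α ε : ℝ) (c r : Fin n) (x : Fin n → Fin n → ℂ × ℂ) :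
    regWeight α ε (fun i j => x i (Equiv.swap c r j)) = regWeight α ε x := by
  rw [regWeight, regWeight, halfTrace_swapCols, quatMatrix_swapCols, det_permute', sign_pairSwap]
  simp

lemma single_comp_pairSwap (c r : Fin n) (a : Fin n × Fin 2) :
    (fun b => (Pi.single (pairSwap c r a) 1 : Fin n × Fin 2 → ℂ) (pairSwap c r b))
      = Pi.single a 1 := by
  funext b
  simp [Pi.single_apply]

lemma pairSwap_of_ne {c r : Fin n} {a : Fin n × Fin 2} (hc : a.1 ≠ c) (hr : a.1 ≠ r) :
    pairSwap c r a = a :=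
  Prod.ext (Equiv.swap_apply_of_ne_of_ne hc hr) rfl

lemma keepRows_submatrix_pairSwap (T : Finset (Fin n)) {r c : Fin n} (hr : r ∉ T) (hc : c ∉ T)
    (G : Matrix (Fin n × Fin 2) (Fin n × Fin 2) ℂ) :
    keepRows T (G.submatrix id (pairSwap c r))
      = (keepRows T G).submatrix (pairSwap c r) (pairSwap c r) := by
  refine funext fun a => ?_
  by_cases ha : a.1 ∈ T
  · have h : pairSwap c r a = a :=
      pairSwap_of_ne (fun h => hc (h ▸ ha)) (fun h => hr (h ▸ ha))
    funext b
    simp [keepRows, ha, h]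
  · have h : (pairSwap c r a).1 ∉ T := by
      change Equiv.swap c r a.1 ∉ T
      rw [Equiv.swap_apply_def]
      split_ifs <;> assumption
    rw [keepRows, if_neg ha, ← single_comp_pairSwap c r a]
    funext b
    simp [keepRows, h]

lemma exchangeDet_swapCols (T : Finset (Fin n)) {r c : Fin n} (hr : r ∉ T) (hc : c ∉ T)
    (i : Fin 2) (x : Fin n → Fin n → ℂ × ℂ) :
    exchangeDet T r c i (fun i j => x i (Equiv.swap c r j)) = exchangeDet T r r i x := by
  have hci : pairSwap c r (c, i) = (r, i) := Prod.ext (Equiv.swap_apply_left c r) rfl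
  rw [exchangeDet, exchangeDet, quatMatrix_swapCols, keepRows_submatrix_pairSwap T hr hc,
    ← det_submatrix_equiv_self (pairSwap c r) ((keepRows T _).updateRow _ _)]
  congr 1
  refine funext fun a => ?_
  by_cases ha : a = (c, i)
  · subst ha
    funext b
    simp [hci]
  · have : pairSwap c r a ≠ (r, i) := fun h => ha ((pairSwap c r).injective (h.trans hci.symm))
    funext b
    simp [ha, this]

lemma exchangeTerm_swapCols (T : Finset (Fin n)) {r c : Fin n} (hr : r ∉ T) (hc : c ∉ T)
    (x : Fin n → Fin n → ℂ × ℂ) :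
    exchangeTerm T r c (fun i j => x i (Equiv.swap c r j)) = exchangeTerm T r r x := by
  refine Finset.sum_congr rfl fun i _ => ?_
  rw [exchangeDet_swapCols T hr hc]
  simp [quatMatrix]

lemma card_compl_mul_integral_exchangeTerm {α : ℝ} (hα : 0 ≤ α) (T : Finset (Fin n)) (r : Fin n)
    (hr : r ∉ T) :
    (Tᶜ.card : ℂ) * ∫ x, exchangeTerm T r r x * (regWeight α 0 x : ℂ)
      = 2 * ((Tᶜ.card : ℂ) + α)
        * ∫ x, (keepRows T (quatMatrix n x)).det * (regWeight α 0 x : ℂ) := by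
  rw [← integral_exchangeSum hα T r hr]
  have h : ∀ x, exchangeSum T r x * (regWeight α 0 x : ℂ)
      = ∑ c ∈ Tᶜ, exchangeTerm T r c x * (regWeight α 0 x : ℂ) := fun x => by
    rw [← Finset.sum_mul]
    rfl
  simp only [h]
  rw [integral_finsetSum _ fun c _ =>
      integrable_mul_regWeight hα le_rfl (hasTemperateGrowth_exchangeTerm T r c),
    ← nsmul_eq_mul, ← Finset.sum_const]
  refine Finset.sum_congr rfl fun c hc => ?_
  rw [← integral_comp_permCols (Equiv.swap c r) fun x =>
    exchangeTerm T r c x * (regWeight α 0 x : ℂ)]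
  simp only [regWeight_swapCols, exchangeTerm_swapCols T hr (Finset.mem_compl.1 hc)]

/-- The determinant of `keepRows (insert r T) G` with the row `(r, 1)` replaced by a
basis vector. -/
noncomputable def insertCofactor (T : Finset (Fin n)) (r : Fin n) (b : Fin n × Fin 2)
    (x : Fin n → Fin n → ℂ × ℂ) : ℂ :=
  ((keepRows (insert r T) (quatMatrix n x)).updateRow (r, 1) (Pi.single b 1)).det

/-- The contribution of the column pair `c` to the Laplace expansion of
`det (keepRows (insert r T) G)` along the row `(r, 1)`. -/
noncomputable def laplaceTerm (T : Finset (Fin n)) (r c : Fin n)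
    (x : Fin n → Fin n → ℂ × ℂ) : ℂ :=
  ∑ i, quatMatrix n x (r, 1) (c, i) * insertCofactor T r (c, i) x

lemma det_keepRows_insert (T : Finset (Fin n)) (r : Fin n) (x : Fin n → Fin n → ℂ × ℂ) :
    (keepRows (insert r T) (quatMatrix n x)).det = ∑ c, laplaceTerm T r c x := by
  rw [det_eq_sum_mul_adjugate_row _ (r, 1), Fintype.sum_prod_type]
  simp only [adjugate_apply, laplaceTerm, insertCofactor]
  simp [keepRows]

lemma hasTemperateGrowth_laplaceTerm (T : Finset (Fin n)) (r c : Fin n) :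
    (laplaceTerm T r c).HasTemperateGrowth :=
  HasTemperateGrowth.sum fun _ _ => (hasTemperateGrowth_entry _ _).fun_mul
    (hasTemperateGrowth_det (hasTemperateGrowth_updateRow _ (hasTemperateGrowth_keepRows _)
      (fun _ => HasTemperateGrowth.const _)))

lemma laplaceTerm_eq_zero (T : Finset (Fin n)) {r c : Fin n} (hc : c ∉ T) (hcr : c ≠ r)
    (x : Fin n → Fin n → ℂ × ℂ) : laplaceTerm T r c x = 0 := by
  refine Finset.sum_eq_zero fun i _ => ?_
  have hne : ((c, i) : Fin n × Fin 2) ≠ (r, 1) := by simp [hcr]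
  rw [insertCofactor, det_zero_of_row_eq hne, mul_zero]
  rw [updateRow_ne hne, updateRow_self]
  simp [keepRows, hc, hcr]

lemma laplaceTerm_self (T : Finset (Fin n)) {r : Fin n} (hr : r ∉ T)
    (x : Fin n → Fin n → ℂ × ℂ) : laplaceTerm T r r x = exchangeTerm T r r x := by
  have h0 : insertCofactor T r (r, 1) x = exchangeDet T r r 0 x := by
    rw [insertCofactor, exchangeDet]
    congr 1
    refine funext fun ⟨a, k⟩ => ?_
    by_cases ha : a = r
    · subst ha
      fin_cases k <;> simp [keepRows, hr]
    · simp [keepRows, ha]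
  have h1 : insertCofactor T r (r, 0) x = -exchangeDet T r r 1 x := by
    have hne : ((r, 0) : Fin n × Fin 2) ≠ (r, 1) := by simp
    have hp := det_permute (Equiv.swap ((r, 0) : Fin n × Fin 2) (r, 1))
      ((keepRows T (quatMatrix n x)).updateRow (r, 1) (quatMatrix n x (r, 0)))
    rw [Equiv.Perm.sign_swap hne] at hp
    rw [exchangeDet, insertCofactor]
    rw [Units.val_neg, Units.val_one, Int.cast_neg, Int.cast_one, neg_one_mul] at hp
    rw [← hp]
    congr 1
    refine funext fun ⟨a, k⟩ => ?_
    by_cases ha : a = r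
    · subst ha
      fin_cases k <;> funext b <;> simp [updateRow_apply, keepRows, hr]
    · have e0 : ((a, k) : Fin n × Fin 2) ≠ (r, 0) := by simp [ha]
      have e1 : ((a, k) : Fin n × Fin 2) ≠ (r, 1) := by simp [ha]
      funext b
      simp [keepRows, ha, Equiv.swap_apply_of_ne_of_ne e0 e1, updateRow_apply]
  rw [laplaceTerm, exchangeTerm, Fin.sum_univ_two, Fin.sum_univ_two, h0, h1]
  simp [quatMatrix]
  ring

lemma insertCofactor_swapCols (T : Finset (Fin n)) {r c : Fin n} (hc : c ∈ T)
    (i : Fin 2) (x : Fin n → Fin n → ℂ × ℂ) :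
    insertCofactor T r (c, i) (fun i j => x i (Equiv.swap c r j))
      = insertCofactor T r (r, i) x := by
  have hri : pairSwap c r (c, i) = (r, i) := Prod.ext (Equiv.swap_apply_left c r) rfl
  have h : (keepRows (insert r T) ((quatMatrix n x).submatrix id (pairSwap c r))).updateRow (r, 1)
      (Pi.single (c, i) 1) = ((keepRows (insert r T) (quatMatrix n x)).updateRow (r, 1)
      (Pi.single (r, i) 1)).submatrix id (pairSwap c r) := by
    refine funext fun a => ?_
    by_cases ha : a = (r, 1)
    · subst ha
      rw [updateRow_self, ← single_comp_pairSwap c r (c, i), hri]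
      funext b
      simp
    · by_cases hT : a.1 ∈ insert r T
      · funext b
        simp [ha, keepRows, hT]
      · have e : pairSwap c r a = a := pairSwap_of_ne
          (fun h => hT (h ▸ Finset.mem_insert_of_mem hc)) (fun h => hT (h ▸ Finset.mem_insert_self _ _))
        rw [updateRow_ne ha, keepRows, if_neg hT, ← single_comp_pairSwap c r a, e]
        funext b
        simp [ha, keepRows, hT]
  rw [insertCofactor, insertCofactor, quatMatrix_swapCols, h, det_permute', sign_pairSwap]
  simp

lemma laplaceTerm_swapCols (T : Finset (Fin n)) {r c : Fin n} (hc : c ∈ T)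
    (x : Fin n → Fin n → ℂ × ℂ) :
    laplaceTerm T r c (fun i j => x i (Equiv.swap c r j)) = laplaceTerm T r r x := by
  refine Finset.sum_congr rfl fun i _ => ?_
  rw [insertCofactor_swapCols T hc]
  simp [quatMatrix]

lemma integral_det_keepRows_insert_eq {α : ℝ} (hα : 0 ≤ α) (T : Finset (Fin n)) (r : Fin n)
    (hr : r ∉ T) :
    ∫ x, (keepRows (insert r T) (quatMatrix n x)).det * (regWeight α 0 x : ℂ)
      = ((T.card : ℂ) + 1) * ∫ x, exchangeTerm T r r x * (regWeight α 0 x : ℂ) := by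
  have hcard : (T.card : ℂ) + 1 = ((insert r T).card : ℕ) := by
    rw [Finset.card_insert_of_notMem hr]
    push_cast
    rfl
  simp only [det_keepRows_insert, Finset.sum_mul]
  rw [integral_finsetSum _ fun c _ =>
      integrable_mul_regWeight hα le_rfl (hasTemperateGrowth_laplaceTerm T r c),
    hcard, ← nsmul_eq_mul, ← Finset.sum_const, ← Finset.sum_subset (Finset.subset_univ (insert r T))]
  · refine Finset.sum_congr rfl fun c hc => ?_
    simp only [← laplaceTerm_self T hr]
    rcases Finset.mem_insert.1 hc with rfl | hc
    · rfl
    · rw [← integral_comp_permCols (Equiv.swap c r) fun x =>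
        laplaceTerm T r c x * (regWeight α 0 x : ℂ)]
      simp only [regWeight_swapCols, laplaceTerm_swapCols T hc]
  · intro c _ hc
    rw [Finset.mem_insert, not_or] at hc
    simp [laplaceTerm_eq_zero T hc.2 hc.1]

lemma integral_det_keepRows_insert {α : ℝ} (hα : 0 ≤ α) (T : Finset (Fin n)) (r : Fin n)
    (hr : r ∉ T) :
    (Tᶜ.card : ℂ) * ∫ x, (keepRows (insert r T) (quatMatrix n x)).det * (regWeight α 0 x : ℂ)
      = 2 * ((T.card : ℂ) + 1) * ((Tᶜ.card : ℂ) + α)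
        * ∫ x, (keepRows T (quatMatrix n x)).det * (regWeight α 0 x : ℂ) := by
  rw [integral_det_keepRows_insert_eq hα T r hr]
  linear_combination ((T.card : ℂ) + 1) * card_compl_mul_integral_exchangeTerm hα T r hr

end Symmetry

section Expansion

open Function

lemma continuous_regWeight {α : ℝ} (hα : 0 ≤ α) : Continuous (regWeight (n := n) α 0) :=
  (((continuous_re_det_quatMatrix.pow 2).add continuous_const).rpow_const fun _ => Or.inr hα).mul
    (Real.continuous_exp.comp continuous_halfTrace.neg)

lemma integral_regWeight_ne_zero {α : ℝ} (hα : 0 ≤ α) :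
    ∫ x : Fin n → Fin n → ℂ × ℂ, regWeight α 0 x ≠ 0 := by
  have hintegrable : Integrable (regWeight (n := n) α 0) := by
    have h := integrable_mul_regWeight (n := n) hα le_rfl (HasTemperateGrowth.const (1 : ℂ))
    simpa using h.re
  have hone : quatMatrix n (fun i j => if i = j then (1, 0) else 0) = 1 := by
    ext ⟨a, i⟩ ⟨b, j⟩
    by_cases hab : a = b <;> fin_cases i <;> fin_cases j <;>
      simp [quatMatrix, one_apply, hab]
  refine ((integral_pos_iff_support_of_nonneg (fun x => regWeight_nonneg α le_rfl x) hintegrable).2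
    ((continuous_regWeight hα).isOpen_support.measure_pos _
      ⟨fun i j => if i = j then (1, 0) else 0, ?_⟩)).ne'
  rw [mem_support, regWeight, hone]
  simp [Real.exp_ne_zero]

lemma choose_mul_integral_det_keepRows {α : ℝ} (hα : 0 ≤ α) (T : Finset (Fin n)) :
    (n.choose T.card : ℂ) * (Real.Gamma ((Tᶜ.card : ℝ) + 1 + α) : ℂ)
        * ∫ x, (keepRows T (quatMatrix n x)).det * (regWeight α 0 x : ℂ)
      = 2 ^ T.card * (Real.Gamma ((n : ℝ) + 1 + α) : ℂ)
        * ∫ x : Fin n → Fin n → ℂ × ℂ, (regWeight α 0 x : ℂ) := by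
  induction T using Finset.induction_on with
  | empty =>
    have h : ∀ x, (keepRows ∅ (quatMatrix n x)).det = 1 := fun x => by
      have : keepRows ∅ (quatMatrix n x) = 1 := by
        ext a b
        simp [keepRows, one_apply, Pi.single_apply, eq_comm]
      rw [this, det_one]
    simp [h]
  | insert r T hr ih =>
    have hstep := integral_det_keepRows_insert hα T r hr
    have hc : Tᶜ.card = (insert r T)ᶜ.card + 1 := by
      have h1 := Finset.card_add_card_compl T
      have h2 := Finset.card_add_card_compl (insert r T)
      rw [Finset.card_insert_of_notMem hr] at h2
      omega
    have hch : (n.choose (T.card + 1) : ℂ) * ((T.card : ℂ) + 1)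
        = n.choose T.card * (Tᶜ.card : ℂ) := by
      have h1 := Nat.choose_succ_right_eq n T.card
      have h2 : n - T.card = Tᶜ.card := by rw [Finset.card_compl, Fintype.card_fin]
      rw [h2] at h1
      exact_mod_cast h1
    have hG : (Real.Gamma ((Tᶜ.card : ℝ) + 1 + α) : ℂ)
        = ((Tᶜ.card : ℂ) + α) * (Real.Gamma (((insert r T)ᶜ.card : ℝ) + 1 + α) : ℂ) := by
      have hpos : (Tᶜ.card : ℝ) + α ≠ 0 := by
        rw [hc]
        positivity
      have h1 := Real.Gamma_add_one hpos
      rw [add_right_comm, h1, ofReal_mul, hc]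
      push_cast
      rfl
    have hk : (T.card : ℂ) + 1 ≠ 0 := by exact_mod_cast T.card.succ_ne_zero
    rw [hG] at ih
    rw [Finset.card_insert_of_notMem hr, pow_succ]
    refine mul_left_cancel₀ hk ?_
    set g := (Real.Gamma (((insert r T)ᶜ.card : ℝ) + 1 + α) : ℂ)
    set a := ∫ x, (keepRows (insert r T) (quatMatrix n x)).det * (regWeight α 0 x : ℂ)
    linear_combination (g * a) * hch + (n.choose T.card * g) * hstep
      + 2 * ((T.card : ℂ) + 1) * ih

/-- The matrix whose rows in `S` are those of `-G`, and whose other rows are those of `z • 1`. -/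
noncomputable def mixedRows (z : ℂ) (S : Finset (Fin n × Fin 2)) (x : Fin n → Fin n → ℂ × ℂ) :
    Matrix (Fin n × Fin 2) (Fin n × Fin 2) ℂ :=
  fun a => if a ∈ S then -quatMatrix n x a else z • Pi.single a 1

lemma hasTemperateGrowth_det_mixedRows (z : ℂ) (S : Finset (Fin n × Fin 2)) :
    (fun x => (mixedRows z S x).det).HasTemperateGrowth := by
  refine hasTemperateGrowth_det fun a b => ?_
  by_cases ha : a ∈ S
  · simpa [mixedRows, ha] using (hasTemperateGrowth_entry a b).fun_neg
  · simp [mixedRows, ha]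

lemma det_smul_one_sub_quatMatrix (z : ℂ) (x : Fin n → Fin n → ℂ × ℂ) :
    (z • (1 : Matrix (Fin n × Fin 2) (Fin n × Fin 2) ℂ) - quatMatrix n x).det
      = ∑ S, (mixedRows z S x).det := by
  have h := MultilinearMap.map_add_univ
    (detRowAlternating (R := ℂ) (n := Fin n × Fin 2)).toMultilinearMap
    (fun a => -quatMatrix n x a) (fun a => z • Pi.single a 1)
  have h1 : (z • (1 : Matrix (Fin n × Fin 2) (Fin n × Fin 2) ℂ) - quatMatrix n x)
      = (fun a => -quatMatrix n x a) + (fun a => z • Pi.single a 1) := by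
    ext a b
    change z * (1 : Matrix (Fin n × Fin 2) (Fin n × Fin 2) ℂ) a b - quatMatrix n x a b
      = -quatMatrix n x a b + z * (Pi.single a 1 : Fin n × Fin 2 → ℂ) b
    rw [one_apply, Pi.single_apply]
    simp only [eq_comm (a := b)]
    ring
  rw [h1]
  exact h

lemma det_mixedRows_product (z : ℂ) (T : Finset (Fin n)) (x : Fin n → Fin n → ℂ × ℂ) :
    (mixedRows z (T ×ˢ Finset.univ) x).det
      = z ^ (2 * Tᶜ.card) * (keepRows T (quatMatrix n x)).det := by
  have h : mixedRows z (T ×ˢ Finset.univ) x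
      = of fun a b => (if a.1 ∈ T then -1 else z) * keepRows T (quatMatrix n x) a b := by
    refine funext fun a => ?_
    by_cases ha : a.1 ∈ T <;> funext b <;> simp [mixedRows, ha, keepRows]
  rw [h, det_mul_column, Fintype.prod_prod_type]
  congr 1
  simp only [Fin.prod_univ_two]
  rw [← Finset.prod_mul_prod_compl T, Finset.prod_eq_one, one_mul,
    Finset.prod_congr rfl (g := fun _ => z ^ 2), Finset.prod_const, ← pow_mul]
  · intro r hr
    simp [Finset.mem_compl.1 hr, sq]
  · intro r hr
    simp [hr]

lemma quatMatrix_negRow (r : Fin n) (x : Fin n → Fin n → ℂ × ℂ) :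
    quatMatrix n (fun i => if i = r then -x i else x i)
      = of fun a b => (if a.1 = r then -1 else 1) * quatMatrix n x a b := by
  ext ⟨a, i⟩ b
  by_cases ha : a = r <;> fin_cases i <;> simp [quatMatrix, ha]

lemma regWeight_negRow (α ε : ℝ) (r : Fin n) (x : Fin n → Fin n → ℂ × ℂ) :
    regWeight α ε (fun i => if i = r then -x i else x i) = regWeight α ε x := by
  have h1 : halfTrace (fun i => if i = r then -x i else x i) = halfTrace x := by
    refine Finset.sum_congr rfl fun i _ => ?_
    by_cases hi : i = r <;> simp [hi]
  have h2 : ∏ a : Fin n × Fin 2, (if a.1 = r then -1 else 1 : ℂ) = 1 := by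
    rw [Fintype.prod_prod_type]
    refine Finset.prod_eq_one fun i _ => ?_
    by_cases hi : i = r <;> simp [hi]
  rw [regWeight, regWeight, h1, quatMatrix_negRow, det_mul_column, h2, one_mul]

lemma det_mixedRows_negRow (z : ℂ) (S : Finset (Fin n × Fin 2)) (r : Fin n)
    (h : ¬((r, 0) ∈ S ↔ (r, 1) ∈ S)) (x : Fin n → Fin n → ℂ × ℂ) :
    (mixedRows z S fun i => if i = r then -x i else x i).det = -(mixedRows z S x).det := by
  have h1 : mixedRows z S (fun i => if i = r then -x i else x i)
      = of fun a b => (if a ∈ S ∧ a.1 = r then -1 else 1) * mixedRows z S x a b := by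
    refine funext fun a => funext fun b => ?_
    by_cases ha : a ∈ S <;> by_cases hr : a.1 = r <;>
      simp [mixedRows, quatMatrix_negRow, ha, hr]
  have h2 : ∏ a : Fin n × Fin 2, (if a ∈ S ∧ a.1 = r then -1 else 1 : ℂ) = -1 := by
    rw [Fintype.prod_prod_type, Finset.prod_eq_single r]
    · rw [Fin.prod_univ_two]
      by_cases h0 : (r, (0 : Fin 2)) ∈ S <;> by_cases h1 : (r, (1 : Fin 2)) ∈ S <;>
        simp_all
    · intro i _ hi
      simp [hi]
    · simp
  rw [h1, det_mul_column, h2, neg_one_mul]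

lemma integral_det_mixedRows_eq_zero (α : ℝ) (z : ℂ) (S : Finset (Fin n × Fin 2)) (r : Fin n)
    (h : ¬((r, 0) ∈ S ↔ (r, 1) ∈ S)) :
    ∫ x, (mixedRows z S x).det * (regWeight α 0 x : ℂ) = 0 := by
  have h1 := integral_comp_negRow r fun x => (mixedRows z S x).det * (regWeight α 0 x : ℂ)
  simp only [det_mixedRows_negRow z S r h, regWeight_negRow, neg_mul, integral_neg] at h1
  exact self_eq_neg.1 h1.symm

lemma integral_det_smul_one_sub {α : ℝ} (hα : 0 ≤ α) (z : ℂ) :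
    ∫ x, (z • (1 : Matrix (Fin n × Fin 2) (Fin n × Fin 2) ℂ) - quatMatrix n x).det
        * (regWeight α 0 x : ℂ)
      = ∑ T : Finset (Fin n), z ^ (2 * Tᶜ.card)
        * ∫ x, (keepRows T (quatMatrix n x)).det * (regWeight α 0 x : ℂ) := by
  simp only [det_smul_one_sub_quatMatrix, Finset.sum_mul]
  rw [integral_finsetSum _ fun S _ =>
      integrable_mul_regWeight hα le_rfl (hasTemperateGrowth_det_mixedRows z S)]
  symm
  refine Finset.sum_of_injOn (fun T => T ×ˢ Finset.univ) ?_ (by simp) ?_ ?_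
  · intro T _ T' _ h
    ext r
    have := Finset.ext_iff.1 h (r, 0)
    simpa using this
  · intro S _ hS
    obtain ⟨r, hr⟩ : ∃ r, ¬((r, 0) ∈ S ↔ (r, 1) ∈ S) := by
      by_contra! hcon
      refine hS ⟨Finset.univ.filter fun r => (r, 0) ∈ S, by simp, ?_⟩
      ext ⟨r, k⟩
      fin_cases k
      · simp
      · simpa using hcon r
    exact integral_det_mixedRows_eq_zero α z S r hr
  · intro T _
    simp only [det_mixedRows_product, mul_assoc]
    rw [integral_const_mul]

lemma integral_det_smul_one_sub_eq {α : ℝ} (hα : 0 ≤ α) (z : ℂ) :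
    ∫ x, (z • (1 : Matrix (Fin n × Fin 2) (Fin n × Fin 2) ℂ) - quatMatrix n x).det
        * (regWeight α 0 x : ℂ)
      = (2 ^ n * (Real.Gamma ((n : ℝ) + 1 + α) : ℂ) * ∑ l ∈ Finset.range (n + 1),
          z ^ (2 * l) / (2 ^ l * (Real.Gamma ((l : ℝ) + 1 + α) : ℂ)))
        * ∫ x : Fin n → Fin n → ℂ × ℂ, (regWeight α 0 x : ℂ) := by
  set Z := ∫ x : Fin n → Fin n → ℂ × ℂ, (regWeight α 0 x : ℂ) with hZ
  have hΓ : ∀ l : ℕ, (Real.Gamma ((l : ℝ) + 1 + α) : ℂ) ≠ 0 := fun l =>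
    ofReal_ne_zero.2 (Real.Gamma_pos_of_pos (by positivity)).ne'
  have hterm : ∀ T : Finset (Fin n), z ^ (2 * T.card)
        * ∫ x, (keepRows Tᶜ (quatMatrix n x)).det * (regWeight α 0 x : ℂ)
      = z ^ (2 * T.card) * (2 ^ (n - T.card) * (Real.Gamma ((n : ℝ) + 1 + α) : ℂ) * Z
        / (n.choose T.card * (Real.Gamma ((T.card : ℝ) + 1 + α) : ℂ))) := by
    intro T
    have hT : T.card ≤ n := by simpa using T.card_le_univ
    have h := choose_mul_integral_det_keepRows hα Tᶜ
    rw [compl_compl, Finset.card_compl, Fintype.card_fin, Nat.choose_symm hT] at h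
    have hC : (n.choose T.card : ℂ) ≠ 0 := by exact_mod_cast (Nat.choose_pos hT).ne'
    rw [← hZ] at h
    rw [eq_div_of_mul_eq (mul_ne_zero hC (hΓ T.card)) ((mul_comm _ _).trans h)]
  rw [integral_det_smul_one_sub hα, ← (compl_involutive (α := Finset (Fin n))).bijective.sum_comp]
  simp only [compl_compl, hterm]
  have hsum := Finset.sum_powerset_apply_card (fun k => z ^ (2 * k)
    * (2 ^ (n - k) * (Real.Gamma ((n : ℝ) + 1 + α) : ℂ) * Z
        / (n.choose k * (Real.Gamma ((k : ℝ) + 1 + α) : ℂ)))) (x := (Finset.univ : Finset (Fin n)))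
  rw [Finset.powerset_univ, Finset.card_univ, Fintype.card_fin] at hsum
  rw [hsum, Finset.mul_sum, Finset.sum_mul]
  refine Finset.sum_congr rfl fun k hk => ?_
  have hkn : k ≤ n := Nat.lt_succ_iff.1 (Finset.mem_range.1 hk)
  have hC : (n.choose k : ℂ) ≠ 0 := by exact_mod_cast (Nat.choose_pos hkn).ne'
  have h2 : (2 : ℂ) ^ n = 2 ^ (n - k) * 2 ^ k := by rw [← pow_add, Nat.sub_add_cancel hkn]
  have := hΓ k
  rw [nsmul_eq_mul, h2]
  field_simp

end Expansion

end QuatGinibre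

/-- The even-degree skew orthogonal polynomial for the induced quaternion real Ginibre
ensemble: `⟨det (z I - G)⟩ = 2^n Γ(n+1+α) ∑_{l=0}^{n} z^{2l} / (2^l Γ(l+1+α))`. -/
theorem inducedQuatGinibre_even_skew_orthogonal_poly (n : ℕ) (hn : 0 < n)
    (α : ℝ) (hα : 0 ≤ α) (z : ℂ) :
    (∫ x : Fin n → Fin n → ℂ × ℂ,
        (inducedQuatGinibreWeight n α x : ℂ) *
          (z • (1 : Matrix (Fin n × Fin 2) (Fin n × Fin 2) ℂ) - quatMatrix n x).det) /
      ((∫ x : Fin n → Fin n → ℂ × ℂ, inducedQuatGinibreWeight n α x : ℝ) : ℂ)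
      = 2 ^ n * (Real.Gamma ((n : ℝ) + 1 + α) : ℂ) *
          ∑ l ∈ Finset.range (n + 1),
            z ^ (2 * l) / (2 ^ l * (Real.Gamma ((l : ℝ) + 1 + α) : ℂ)) := by
  have hZ : ((∫ x : Fin n → Fin n → ℂ × ℂ, QuatGinibre.regWeight α 0 x : ℝ) : ℂ) ≠ 0 :=
    Complex.ofReal_ne_zero.2 (QuatGinibre.integral_regWeight_ne_zero hα)
  simp only [QuatGinibre.inducedQuatGinibreWeight_eq]
  rw [div_eq_iff hZ, ← integral_complex_ofReal, ← QuatGinibre.integral_det_smul_one_sub_eq hα z]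
  simp only [mul_comm]
end

section
/- Let n be a positive integer and let α ≥ 0 be a real number. For G drawn from the induced quaternion real Ginibre ensemble of size 2n with parameter α, and for every complex number z, z·⟨det(z·I − G)⟩ + ⟨det(z·I − G)·Tr(G)⟩ = z^{2n+1}; that is, the odd-degree skew orthogonal polynomial for the induced quaternion real Ginibre ensemble is the monomial Q_{2n+1}(z) = z^{2n+1}. -/
open MeasureTheory Matrix

section Rows

variable {ι : Type*}

/-- Left multiplication of `G` by the monomial matrix with phases `u` and permutation `σ`. -/
def rowAction (u : ι → ℂ) (σ : Equiv.Perm ι) (G : Matrix ι ι ℂ) : Matrix ι ι ℂ :=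
  Matrix.of fun r c => u r * G (σ r) c

lemma rowAction_row (u : ι → ℂ) (σ : Equiv.Perm ι) (G : Matrix ι ι ℂ) (r : ι) :
    rowAction u σ G r = u r • G (σ r) := rfl

lemma perm_mem_iff {T : Finset ι} {σ : Equiv.Perm ι} (hσ : ∀ r ∉ T, σ r = r) (r : ι) :
    σ r ∈ T ↔ r ∈ T := by
  constructor
  · intro h
    by_contra hr
    rw [hσ r hr] at h
    exact hr h
  · intro h
    by_contra hr
    have := σ.injective (hσ _ hr)
    rw [this] at hr
    exact hr h

variable [DecidableEq ι]

/-- The matrix whose rows indexed by `T` are those of `G`, the others being those of `z • 1`. -/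
def mixedRows (z : ℂ) (T : Finset ι) (G : Matrix ι ι ℂ) : Matrix ι ι ℂ :=
  T.piecewise G (z • (1 : Matrix ι ι ℂ))

/-- The matrix `mixedRows z T G` in which row `l` is replaced by the part of row `l` of `G`
supported on column `c`. -/
def pinnedRow (z : ℂ) (T : Finset ι) (l c : ι) (G : Matrix ι ι ℂ) : Matrix ι ι ℂ :=
  (mixedRows z T G).updateRow l (Pi.single c (G l c))

lemma mixedRows_of_mem {z : ℂ} {T : Finset ι} {r : ι} (G : Matrix ι ι ℂ) (hr : r ∈ T) :
    mixedRows z T G r = G r := Finset.piecewise_eq_of_mem _ _ _ hr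

lemma mixedRows_of_notMem {z : ℂ} {T : Finset ι} {r : ι} (G : Matrix ι ι ℂ) (hr : r ∉ T) :
    mixedRows z T G r = (z • (1 : Matrix ι ι ℂ)) r := Finset.piecewise_eq_of_notMem _ _ _ hr

lemma mixedRows_rowAction (z : ℂ) {T : Finset ι} (u : ι → ℂ) {σ : Equiv.Perm ι}
    (hσ : ∀ r ∉ T, σ r = r) (G : Matrix ι ι ℂ) :
    mixedRows z T (rowAction u σ G) =
      rowAction (fun r => if r ∈ T then u r else 1) σ (mixedRows z T G) := by
  ext r c
  by_cases hr : r ∈ T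
  · rw [mixedRows_of_mem _ hr, rowAction_row, rowAction_row,
      mixedRows_of_mem _ ((perm_mem_iff hσ r).2 hr), if_pos hr]
  · rw [mixedRows_of_notMem _ hr, rowAction_row, hσ r hr, mixedRows_of_notMem _ hr, if_neg hr,
      one_smul]

lemma pinnedRow_rowAction (z : ℂ) {T : Finset ι} (u : ι → ℂ) {σ : Equiv.Perm ι}
    (hσ : ∀ r ∉ T, σ r = r) {l : ι} (hl : l ∈ T) (c : ι) (G : Matrix ι ι ℂ) :
    pinnedRow z T l c (rowAction u σ G) =
      rowAction (fun r => if r ∈ T then u r else 1) σ (pinnedRow z T (σ l) c G) := by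
  ext r k
  rw [pinnedRow, mixedRows_rowAction z u hσ, pinnedRow]
  by_cases hr : r = l
  · subst hr
    simp [rowAction, updateRow_apply, Pi.single_apply, hl]
  · simp [rowAction, updateRow_apply, hr]

variable [Fintype ι]

lemma rowAction_eq_diagonal_mul (u : ι → ℂ) (σ : Equiv.Perm ι) (G : Matrix ι ι ℂ) :
    rowAction u σ G = diagonal u * G.submatrix σ id := by
  ext r c; simp [rowAction, diagonal_mul]

lemma det_rowAction (u : ι → ℂ) (σ : Equiv.Perm ι) (G : Matrix ι ι ℂ) :
    (rowAction u σ G).det = (∏ r, u r) * (Equiv.Perm.sign σ : ℤ) * G.det := by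
  rw [rowAction_eq_diagonal_mul, det_mul, det_diagonal, det_permute, mul_assoc]

lemma det_mixedRows_rowAction (z : ℂ) {T : Finset ι} (u : ι → ℂ) {σ : Equiv.Perm ι}
    (hσ : ∀ r ∉ T, σ r = r) (G : Matrix ι ι ℂ) :
    (mixedRows z T (rowAction u σ G)).det =
      (∏ r ∈ T, u r) * (Equiv.Perm.sign σ : ℤ) * (mixedRows z T G).det := by
  rw [mixedRows_rowAction z u hσ, det_rowAction, Finset.prod_ite_mem, Finset.univ_inter]

lemma det_pinnedRow_rowAction (z : ℂ) {T : Finset ι} (u : ι → ℂ) {σ : Equiv.Perm ι}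
    (hσ : ∀ r ∉ T, σ r = r) {l : ι} (hl : l ∈ T) (c : ι) (G : Matrix ι ι ℂ) :
    (pinnedRow z T l c (rowAction u σ G)).det =
      (∏ r ∈ T, u r) * (Equiv.Perm.sign σ : ℤ) * (pinnedRow z T (σ l) c G).det := by
  rw [pinnedRow_rowAction z u hσ hl, det_rowAction, Finset.prod_ite_mem, Finset.univ_inter]

lemma det_smul_one_add (z : ℂ) (G : Matrix ι ι ℂ) :
    (z • (1 : Matrix ι ι ℂ) + G).det = ∑ T : Finset ι, (mixedRows z T G).det := by
  rw [add_comm]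
  exact MultilinearMap.map_add_univ (detRowAlternating (n := ι) (R := ℂ)).toMultilinearMap G
    (z • (1 : Matrix ι ι ℂ))

lemma det_mixedRows_empty (z : ℂ) (G : Matrix ι ι ℂ) :
    (mixedRows z ∅ G).det = z ^ Fintype.card ι := by
  have h : mixedRows z ∅ G = z • (1 : Matrix ι ι ℂ) :=
    funext fun r => mixedRows_of_notMem G (Finset.notMem_empty r)
  rw [h, det_smul, det_one, mul_one]

lemma det_pinnedRow_of_notMem (z : ℂ) {T : Finset ι} {l c : ι} (hl : l ∈ T) (hc : c ∉ T)
    (G : Matrix ι ι ℂ) : (pinnedRow z T l c G).det = 0 := by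
  have hlc : l ≠ c := fun h => hc (h ▸ hl)
  have hrow : mixedRows z T G c = z • (Pi.single c 1 : ι → ℂ) := by
    rw [mixedRows_of_notMem _ hc]
    ext k
    simp [Matrix.one_apply, Pi.single_apply, eq_comm]
  by_cases hz : z = 0
  · refine det_eq_zero_of_row_eq_zero c fun k => ?_
    rw [pinnedRow, updateRow_ne hlc.symm, hrow, hz, zero_smul, Pi.zero_apply]
  · have : (Pi.single c (G l c) : ι → ℂ) = (G l c / z) • mixedRows z T G c := by
      rw [hrow, smul_smul, div_mul_cancel₀ _ hz]
      ext k
      simp [Pi.single_apply]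
    rw [pinnedRow, this, det_updateRow_smul]
    exact mul_eq_zero_of_right _ (det_updateRow_eq_zero hlc.symm)

lemma sum_det_pinnedRow (z : ℂ) {T : Finset ι} {l : ι} (hl : l ∈ T) (G : Matrix ι ι ℂ) :
    ∑ c ∈ T, (pinnedRow z T l c G).det = (mixedRows z T G).det := by
  rw [Finset.sum_subset (Finset.subset_univ T)
    fun c _ hc => det_pinnedRow_of_notMem z hl hc G]
  refine (MultilinearMap.map_update_sum
    (detRowAlternating (n := ι) (R := ℂ)).toMultilinearMap Finset.univ l
    (fun c => (Pi.single c (G l c) : ι → ℂ)) (mixedRows z T G)).symm.trans ?_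
  rw [Finset.univ_sum_single, ← mixedRows_of_mem (z := z) G hl]
  exact congrArg det (updateRow_eq_self (mixedRows z T G) l)

lemma det_mixedRows_mul_apply (z : ℂ) {T : Finset ι} {c : ι} (hc : c ∉ T) (G : Matrix ι ι ℂ) :
    (mixedRows z T G).det * G c c = z * (pinnedRow z (insert c T) c c G).det := by
  have hrow : mixedRows z T G c = z • (Pi.single c 1 : ι → ℂ) := by
    rw [mixedRows_of_notMem _ hc]
    ext k
    simp [Matrix.one_apply, Pi.single_apply, eq_comm]
  have h1 : mixedRows z T G = (mixedRows z (insert c T) G).updateRow c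
      (z • (Pi.single c 1 : ι → ℂ)) := by
    rw [← hrow]
    ext r k
    by_cases hr : r = c
    · subst hr; rw [updateRow_self]
    · rw [updateRow_ne hr]
      by_cases hT : r ∈ T
      · rw [mixedRows_of_mem _ hT, mixedRows_of_mem _ (Finset.mem_insert_of_mem hT)]
      · rw [mixedRows_of_notMem _ hT, mixedRows_of_notMem _ (by simp [hr, hT])]
  have h2 : (Pi.single c (G c c) : ι → ℂ) = G c c • (Pi.single c 1 : ι → ℂ) := by
    ext k; simp [Pi.single_apply]
  rw [h1, pinnedRow, h2, det_updateRow_smul, det_updateRow_smul]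
  ring

end Rows
instance isAddHaarMeasure_volume_quatEntries (n : ℕ) :
    (volume : Measure (Fin n → Fin n → ℂ × ℂ)).IsAddHaarMeasure :=
  have _ : (volume : Measure (ℂ × ℂ)).IsAddHaarMeasure := Measure.prod.instIsAddHaarMeasure _ _
  have _ : (volume : Measure (Fin n → ℂ × ℂ)).IsAddHaarMeasure := Measure.pi.isAddHaarMeasure _
  Measure.pi.isAddHaarMeasure fun _ => volume

lemma integrable_exp_neg_half_norm_sq :
    Integrable (fun v : ℂ => Real.exp (-(‖v‖ ^ 2 / 2))) := by
  have := (GaussianFourier.integrable_cexp_neg_mul_sq_norm_add (V := ℂ) (b := 1 / 2)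
    (by norm_num) 0 0).re
  refine this.congr (.of_forall fun v => ?_)
  simp only [zero_mul, add_zero]
  rw [show (-(1 / 2) * (‖v‖ : ℂ) ^ 2 : ℂ) = ((-(‖v‖ ^ 2 / 2) : ℝ) : ℂ) by push_cast; ring,
    ← Complex.ofReal_exp]
  rfl

lemma integrable_exp_neg_half_sum (n : ℕ) : Integrable (fun x : Fin n → Fin n → ℂ × ℂ =>
    Real.exp (-((∑ j, ∑ k, (‖(x j k).1‖ ^ 2 + ‖(x j k).2‖ ^ 2)) / 2))) := by
  have h2 : Integrable (fun p : ℂ × ℂ =>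
      Real.exp (-(‖p.1‖ ^ 2 / 2)) * Real.exp (-(‖p.2‖ ^ 2 / 2))) :=
    integrable_exp_neg_half_norm_sq.mul_prod integrable_exp_neg_half_norm_sq
  have h3 := Integrable.fintype_prod (ι := Fin n) (f := fun _ => _) (μ := fun _ => volume)
    fun _ => h2
  have h4 := Integrable.fintype_prod (ι := Fin n) (f := fun _ => _) (μ := fun _ => volume)
    fun _ => h3
  refine h4.congr (.of_forall fun x => ?_)
  simp only [← Real.exp_add, ← Real.exp_sum]
  congr 1
  simp only [Finset.sum_div, ← Finset.sum_neg_distrib]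
  refine Finset.sum_congr rfl fun j _ => Finset.sum_congr rfl fun k _ => by ring

lemma trace_quatMatrix_mul_conjTranspose_re (n : ℕ) (x : Fin n → Fin n → ℂ × ℂ) :
    (quatMatrix n x * (quatMatrix n x)ᴴ).trace.re =
      2 * ∑ j, ∑ k, (‖(x j k).1‖ ^ 2 + ‖(x j k).2‖ ^ 2) := by
  simp only [trace, diag_apply, mul_apply, conjTranspose_apply, Fintype.sum_prod_type,
    Fin.sum_univ_two, quatMatrix, of_apply, Complex.re_sum, Finset.mul_sum]
  refine Finset.sum_congr rfl fun j _ => ?_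
  rw [Complex.add_re, Complex.re_sum, Complex.re_sum, ← Finset.sum_add_distrib]
  refine Finset.sum_congr rfl fun k _ => ?_
  simp [← Complex.normSq_eq_norm_sq, Complex.normSq_apply]
  ring

lemma det_mul_conjTranspose_re {ι : Type*} [Fintype ι] [DecidableEq ι] (G : Matrix ι ι ℂ) :
    (G * Gᴴ).det.re = ‖G.det‖ ^ 2 := by
  rw [det_mul, det_conjTranspose, Complex.star_def, Complex.mul_conj, Complex.ofReal_re,
    Complex.normSq_eq_norm_sq]

lemma inducedQuatGinibreWeight_eq (n : ℕ) (α : ℝ) (x : Fin n → Fin n → ℂ × ℂ) :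
    inducedQuatGinibreWeight n α x = (‖(quatMatrix n x).det‖ ^ 2) ^ α *
      Real.exp (-∑ j, ∑ k, (‖(x j k).1‖ ^ 2 + ‖(x j k).2‖ ^ 2)) := by
  rw [inducedQuatGinibreWeight, det_mul_conjTranspose_re, trace_quatMatrix_mul_conjTranspose_re]
  congr 2
  ring

/-- The algebra of continuous complex functions of at most polynomial growth. -/
def polyGrowth (E : Type*) [NormedAddCommGroup E] : Subalgebra ℂ (E → ℂ) where
  carrier := {f | Continuous f ∧ ∃ (C : ℝ) (k : ℕ), ∀ x, ‖f x‖ ≤ C * (1 + ‖x‖) ^ k}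
  mul_mem' := by
    rintro f g ⟨hf, C, k, hC⟩ ⟨hg, D, l, hD⟩
    refine ⟨hf.mul hg, C * D, k + l, fun x => ?_⟩
    calc ‖(f * g) x‖ = ‖f x‖ * ‖g x‖ := norm_mul _ _
      _ ≤ (C * (1 + ‖x‖) ^ k) * (D * (1 + ‖x‖) ^ l) :=
        mul_le_mul (hC x) (hD x) (norm_nonneg _) ((norm_nonneg _).trans (hC x))
      _ = C * D * (1 + ‖x‖) ^ (k + l) := by ring
  add_mem' := by
    rintro f g ⟨hf, C, k, hC⟩ ⟨hg, D, l, hD⟩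
    refine ⟨hf.add hg, |C| + |D|, max k l, fun x => ?_⟩
    have h1 : 1 ≤ 1 + ‖x‖ := le_add_of_nonneg_right (norm_nonneg x)
    have h2 : C * (1 + ‖x‖) ^ k ≤ |C| * (1 + ‖x‖) ^ max k l :=
      mul_le_mul (le_abs_self C) (pow_le_pow_right₀ h1 (le_max_left k l)) (by positivity)
        (abs_nonneg C)
    have h3 : D * (1 + ‖x‖) ^ l ≤ |D| * (1 + ‖x‖) ^ max k l :=
      mul_le_mul (le_abs_self D) (pow_le_pow_right₀ h1 (le_max_right k l)) (by positivity)
        (abs_nonneg D)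
    calc ‖(f + g) x‖ ≤ ‖f x‖ + ‖g x‖ := norm_add_le _ _
      _ ≤ (|C| + |D|) * (1 + ‖x‖) ^ max k l := by
        rw [add_mul]; exact add_le_add ((hC x).trans h2) ((hD x).trans h3)
  algebraMap_mem' c := ⟨continuous_const, ‖c‖, 0, fun x => by simp⟩

lemma quatMatrix_apply_mem_polyGrowth (n : ℕ) (a b : Fin n × Fin 2) :
    (fun x => quatMatrix n x a b) ∈ polyGrowth (Fin n → Fin n → ℂ × ℂ) := by
  have hx (x : Fin n → Fin n → ℂ × ℂ) : ‖x a.1 b.1‖ ≤ 1 * (1 + ‖x‖) ^ 1 := by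
    have := (norm_le_pi_norm (x a.1) b.1).trans (norm_le_pi_norm x a.1)
    linarith
  have h1 (x : Fin n → Fin n → ℂ × ℂ) := (norm_fst_le (x a.1 b.1)).trans (hx x)
  have h2 (x : Fin n → Fin n → ℂ × ℂ) := (norm_snd_le (x a.1 b.1)).trans (hx x)
  simp only [quatMatrix, of_apply]
  split_ifs
  · exact ⟨by fun_prop, 1, 1, h1⟩
  · exact ⟨by fun_prop, 1, 1, h2⟩
  · exact ⟨by fun_prop, 1, 1, fun x => by simpa using h2 x⟩
  · exact ⟨by fun_prop, 1, 1, fun x => by simpa using h1 x⟩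

lemma det_mem_polyGrowth {E ι : Type*} [NormedAddCommGroup E] [Fintype ι] [DecidableEq ι]
    {M : E → Matrix ι ι ℂ} (hM : ∀ a b, (fun x => M x a b) ∈ polyGrowth E) :
    (fun x => (M x).det) ∈ polyGrowth E := by
  have h : (fun x => (M x).det) = ∑ σ : Equiv.Perm ι,
      ((Equiv.Perm.sign σ : ℤ) : ℂ) • ∏ i, fun x => M x (σ i) i := by
    ext x
    simp [det_apply']
  rw [h]
  exact sum_mem fun σ _ => Subalgebra.smul_mem _ (prod_mem fun i _ => hM _ _) _

lemma one_add_pow_le_exp (K : ℕ) {r : ℝ} (hr : 0 ≤ r) :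
    (1 + r) ^ K ≤ Real.exp ((K : ℝ) ^ 2 / 2) * Real.exp (r ^ 2 / 2) := by
  calc (1 + r) ^ K ≤ Real.exp r ^ K :=
        pow_le_pow_left₀ (by positivity) (by linarith [Real.add_one_le_exp r]) K
    _ = Real.exp (K * r) := (Real.exp_nat_mul r K).symm
    _ ≤ Real.exp ((K : ℝ) ^ 2 / 2 + r ^ 2 / 2) :=
        Real.exp_le_exp.2 (by nlinarith [sq_nonneg ((K : ℝ) - r)])
    _ = _ := Real.exp_add _ _

lemma norm_sq_le_sum (n : ℕ) (x : Fin n → Fin n → ℂ × ℂ) :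
    ‖x‖ ^ 2 ≤ ∑ j, ∑ k, (‖(x j k).1‖ ^ 2 + ‖(x j k).2‖ ^ 2) := by
  set R := ∑ j, ∑ k, (‖(x j k).1‖ ^ 2 + ‖(x j k).2‖ ^ 2) with hR
  have hle (j k) : ‖(x j k).1‖ ^ 2 + ‖(x j k).2‖ ^ 2 ≤ R :=
    (Finset.single_le_sum (f := fun k => ‖(x j k).1‖ ^ 2 + ‖(x j k).2‖ ^ 2)
      (fun _ _ => by positivity) (Finset.mem_univ k)).trans
    (Finset.single_le_sum (f := fun j => ∑ k, (‖(x j k).1‖ ^ 2 + ‖(x j k).2‖ ^ 2))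
      (fun _ _ => by positivity) (Finset.mem_univ j))
  have h0 : 0 ≤ R := by positivity
  rw [← Real.le_sqrt (norm_nonneg x) h0]
  refine (pi_norm_le_iff_of_nonneg (Real.sqrt_nonneg _)).2 fun j =>
    (pi_norm_le_iff_of_nonneg (Real.sqrt_nonneg _)).2 fun k => ?_
  rw [Prod.norm_def]
  refine max_le (Real.le_sqrt_of_sq_le ?_) (Real.le_sqrt_of_sq_le ?_)
  · exact (le_add_of_nonneg_right (by positivity)).trans (hle j k)
  · exact (le_add_of_nonneg_left (by positivity)).trans (hle j k)

lemma continuous_inducedQuatGinibreWeight (n : ℕ) {α : ℝ} (hα : 0 ≤ α) :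
    Continuous (inducedQuatGinibreWeight n α) := by
  have hd := (det_mem_polyGrowth (quatMatrix_apply_mem_polyGrowth n)).1
  rw [funext (inducedQuatGinibreWeight_eq n α)]
  refine ((hd.norm.pow 2).rpow_const fun _ => Or.inr hα).mul ?_
  fun_prop

lemma integrable_inducedQuatGinibreWeight_mul (n : ℕ) {α : ℝ} (hα : 0 ≤ α)
    {f : (Fin n → Fin n → ℂ × ℂ) → ℂ} (hf : f ∈ polyGrowth (Fin n → Fin n → ℂ × ℂ)) :
    Integrable fun x => (inducedQuatGinibreWeight n α x : ℂ) * f x := by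
  obtain ⟨-, D, l, hD⟩ := det_mem_polyGrowth (quatMatrix_apply_mem_polyGrowth n)
  obtain ⟨hfc, C, k, hC⟩ := hf
  have hcont := (Complex.continuous_ofReal.comp (continuous_inducedQuatGinibreWeight n hα)).mul hfc
  set K := 2 * l * ⌈α⌉₊ + k
  set B := (1 + D ^ 2) ^ ⌈α⌉₊ * C * Real.exp ((K : ℝ) ^ 2 / 2)
  refine ((integrable_exp_neg_half_sum n).const_mul B).mono' hcont.aestronglyMeasurable
    (.of_forall fun x => ?_)
  have h1 : 1 ≤ 1 + ‖x‖ := le_add_of_nonneg_right (norm_nonneg x)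
  have hdet : (‖(quatMatrix n x).det‖ ^ 2) ^ α ≤
      (1 + D ^ 2) ^ ⌈α⌉₊ * (1 + ‖x‖) ^ (2 * l * ⌈α⌉₊) := by
    have h2 : ‖(quatMatrix n x).det‖ ^ 2 ≤ (1 + D ^ 2) * (1 + ‖x‖) ^ (2 * l) := by
      calc ‖(quatMatrix n x).det‖ ^ 2 ≤ (D * (1 + ‖x‖) ^ l) ^ 2 :=
            pow_le_pow_left₀ (norm_nonneg _) (hD x) 2
        _ = D ^ 2 * (1 + ‖x‖) ^ (2 * l) := by ring
        _ ≤ _ := by gcongr; linarith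
    have h3 : 1 ≤ (1 + D ^ 2) * (1 + ‖x‖) ^ (2 * l) :=
      one_le_mul_of_one_le_of_one_le (le_add_of_nonneg_right (sq_nonneg D)) (one_le_pow₀ h1)
    calc (‖(quatMatrix n x).det‖ ^ 2) ^ α ≤ ((1 + D ^ 2) * (1 + ‖x‖) ^ (2 * l)) ^ α :=
          Real.rpow_le_rpow (by positivity) h2 hα
      _ ≤ ((1 + D ^ 2) * (1 + ‖x‖) ^ (2 * l)) ^ (⌈α⌉₊ : ℝ) :=
          Real.rpow_le_rpow_of_exponent_le h3 (Nat.le_ceil α)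
      _ = _ := by rw [Real.rpow_natCast, mul_pow, ← pow_mul]
  have hC0 : 0 ≤ C := by
    have := (norm_nonneg _).trans (hC 0)
    simpa using this
  set R := ∑ j, ∑ k, (‖(x j k).1‖ ^ 2 + ‖(x j k).2‖ ^ 2)
  calc ‖(inducedQuatGinibreWeight n α x : ℂ) * f x‖
      = (‖(quatMatrix n x).det‖ ^ 2) ^ α * Real.exp (-R) * ‖f x‖ := by
        rw [norm_mul, Complex.norm_real, inducedQuatGinibreWeight_eq,
          Real.norm_of_nonneg (by positivity)]
    _ ≤ ((1 + D ^ 2) ^ ⌈α⌉₊ * (1 + ‖x‖) ^ (2 * l * ⌈α⌉₊)) * Real.exp (-R) *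
          (C * (1 + ‖x‖) ^ k) := by
        gcongr
        exact hC x
    _ = (1 + D ^ 2) ^ ⌈α⌉₊ * C * (1 + ‖x‖) ^ K * Real.exp (-R) := by ring
    _ ≤ (1 + D ^ 2) ^ ⌈α⌉₊ * C * (Real.exp ((K : ℝ) ^ 2 / 2) * Real.exp (R / 2)) *
          Real.exp (-R) := by
        gcongr
        refine (one_add_pow_le_exp K (norm_nonneg x)).trans ?_
        gcongr
        exact norm_sq_le_sum n x
    _ = B * Real.exp (-(R / 2)) := by
        rw [show -(R / 2) = R / 2 + -R by ring, Real.exp_add]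
        ring

lemma integral_inducedQuatGinibreWeight_pos (n : ℕ) {α : ℝ} (hα : 0 ≤ α) :
    0 < ∫ x, inducedQuatGinibreWeight n α x := by
  have hint : Integrable (inducedQuatGinibreWeight n α) := by
    have := (integrable_inducedQuatGinibreWeight_mul n hα (one_mem _)).re
    simpa using this
  refine integral_pos_of_integrable_nonneg_nonzero
    (x := fun j k => if j = k then (1, 0) else (0, 0))
    (continuous_inducedQuatGinibreWeight n hα) hint (fun x => ?_) ?_
  · rw [inducedQuatGinibreWeight_eq, Pi.zero_apply]
    positivity
  · have h : quatMatrix n (fun j k => if j = k then (1, 0) else (0, 0)) = 1 := by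
      ext ⟨j, a⟩ ⟨k, b⟩
      fin_cases a <;> fin_cases b <;> by_cases hjk : j = k <;>
        simp [quatMatrix, hjk, Matrix.one_apply]
    rw [inducedQuatGinibreWeight_eq, h]
    simp [Real.exp_ne_zero]

/-- The unnormalized average of `f G` over the induced quaternion real Ginibre ensemble. -/
noncomputable def ginibreIntegral (n : ℕ) (α : ℝ)
    (f : Matrix (Fin n × Fin 2) (Fin n × Fin 2) ℂ → ℂ) : ℂ :=
  ∫ x : Fin n → Fin n → ℂ × ℂ, (inducedQuatGinibreWeight n α x : ℂ) * f (quatMatrix n x)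

lemma trace_rowAction_mul_conjTranspose {ι : Type*} [Fintype ι] {u : ι → ℂ}
    (hu : ∀ r, ‖u r‖ = 1) (σ : Equiv.Perm ι) (G : Matrix ι ι ℂ) :
    (rowAction u σ G * (rowAction u σ G)ᴴ).trace = (G * Gᴴ).trace := by
  simp only [trace, diag_apply, mul_apply, conjTranspose_apply, rowAction, of_apply]
  rw [← Equiv.sum_comp σ (fun r => ∑ c, G r c * star (G r c))]
  refine Finset.sum_congr rfl fun r _ => Finset.sum_congr rfl fun c _ => ?_
  have h : u r * star (u r) = 1 := by
    rw [Complex.star_def, Complex.mul_conj, Complex.normSq_eq_norm_sq, hu r]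
    norm_num
  rw [star_mul']
  linear_combination (G (σ r) c * star (G (σ r) c)) * h

lemma norm_det_rowAction {ι : Type*} [Fintype ι] [DecidableEq ι] {u : ι → ℂ}
    (hu : ∀ r, ‖u r‖ = 1) (σ : Equiv.Perm ι) (G : Matrix ι ι ℂ) :
    ‖(rowAction u σ G).det‖ = ‖G.det‖ := by
  have hs : ‖((Equiv.Perm.sign σ : ℤ) : ℂ)‖ = 1 := by
    rcases Int.units_eq_one_or (Equiv.Perm.sign σ) with h | h <;> simp [h]
  rw [det_rowAction, norm_mul, norm_mul, hs, norm_prod, Finset.prod_congr rfl fun r _ => hu r,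
    Finset.prod_const_one, one_mul, one_mul]

lemma inducedQuatGinibreWeight_congr {n : ℕ} (α : ℝ) {u : Fin n × Fin 2 → ℂ}
    (hu : ∀ r, ‖u r‖ = 1) {σ : Equiv.Perm (Fin n × Fin 2)} {x y : Fin n → Fin n → ℂ × ℂ}
    (h : quatMatrix n y = rowAction u σ (quatMatrix n x)) :
    inducedQuatGinibreWeight n α y = inducedQuatGinibreWeight n α x := by
  rw [inducedQuatGinibreWeight, inducedQuatGinibreWeight, h, det_mul_conjTranspose_re,
    det_mul_conjTranspose_re, norm_det_rowAction hu, trace_rowAction_mul_conjTranspose hu]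

lemma measurePreserving_of_pow_four_eq_one {E : Type*} [NormedAddCommGroup E] [NormedSpace ℝ E]
    [MeasurableSpace E] [BorelSpace E] [FiniteDimensional ℝ E] (μ : Measure E)
    [μ.IsAddHaarMeasure] {φ : E →ₗ[ℝ] E} (hφ : φ ^ 4 = 1) : MeasurePreserving φ μ μ := by
  have hdet : LinearMap.det φ ^ 4 = 1 := by rw [← map_pow, hφ, map_one]
  have habs : |LinearMap.det φ| = 1 :=
    (pow_eq_one_iff_of_nonneg (abs_nonneg _) four_ne_zero).1 (by rw [← abs_pow, hdet, abs_one])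
  have hne : LinearMap.det φ ≠ 0 := fun h => by simp [h] at habs
  refine ⟨φ.continuous_of_finiteDimensional.measurable, ?_⟩
  rw [Measure.map_linearMap_addHaar_eq_smul_addHaar μ hne, abs_inv, habs, inv_one,
    ENNReal.ofReal_one, one_smul]

lemma measurableEmbedding_of_pow_four_eq_one {E : Type*} [NormedAddCommGroup E] [NormedSpace ℝ E]
    [MeasurableSpace E] [BorelSpace E] [FiniteDimensional ℝ E] {φ : E →ₗ[ℝ] E}
    (hφ : φ ^ 4 = 1) : MeasurableEmbedding φ := by
  have h (x : E) : φ (φ (φ (φ x))) = x := LinearMap.congr_fun hφ x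
  have hc : Continuous φ := φ.continuous_of_finiteDimensional
  let e : E ≃ₜ E :=
    { toFun := φ
      invFun := fun x => φ (φ (φ x))
      left_inv := h
      right_inv := h
      continuous_toFun := hc
      continuous_invFun := hc.comp (hc.comp hc) }
  exact e.measurableEmbedding

lemma ginibreIntegral_rowAction {n : ℕ} (α : ℝ) {u : Fin n × Fin 2 → ℂ} (hu : ∀ r, ‖u r‖ = 1)
    (σ : Equiv.Perm (Fin n × Fin 2))
    (φ : (Fin n → Fin n → ℂ × ℂ) →ₗ[ℝ] (Fin n → Fin n → ℂ × ℂ)) (hφ : φ ^ 4 = 1)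
    (h : ∀ x, quatMatrix n (φ x) = rowAction u σ (quatMatrix n x))
    (f : Matrix (Fin n × Fin 2) (Fin n × Fin 2) ℂ → ℂ) :
    ginibreIntegral n α (fun G => f (rowAction u σ G)) = ginibreIntegral n α f := by
  rw [ginibreIntegral, ginibreIntegral,
    ← (measurePreserving_of_pow_four_eq_one volume hφ).integral_comp
      (measurableEmbedding_of_pow_four_eq_one hφ)
      (fun y => (inducedQuatGinibreWeight n α y : ℂ) * f (quatMatrix n y))]
  refine integral_congr_ae (.of_forall fun x => ?_)
  simp only [h x, inducedQuatGinibreWeight_congr α hu (h x)]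

lemma ginibreIntegral_neg (n : ℕ) (α : ℝ)
    (f : Matrix (Fin n × Fin 2) (Fin n × Fin 2) ℂ → ℂ) :
    ginibreIntegral n α (fun G => f (-G)) = ginibreIntegral n α f := by
  have h (G : Matrix (Fin n × Fin 2) (Fin n × Fin 2) ℂ) :
      -G = rowAction (fun _ => -1) (Equiv.refl _) G := by
    ext; simp [rowAction]
  simp only [h]
  refine ginibreIntegral_rowAction α (by simp) _ (-1) (LinearMap.ext fun x => neg_neg _ |>.trans (neg_neg x))
    (fun x => ?_) f
  ext r c
  simp [rowAction, quatMatrix]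

/-- The phases of left multiplication by the quaternion unit `I` in the `i`-th row of blocks. -/
noncomputable def blockPhase {n : ℕ} (i : Fin n) (r : Fin n × Fin 2) : ℂ :=
  if r.1 = i then (if r.2 = 0 then Complex.I else -Complex.I) else 1

lemma ginibreIntegral_blockPhase {n : ℕ} (α : ℝ) (i : Fin n)
    (f : Matrix (Fin n × Fin 2) (Fin n × Fin 2) ℂ → ℂ) :
    ginibreIntegral n α (fun G => f (rowAction (blockPhase i) (Equiv.refl _) G)) =
      ginibreIntegral n α f := by
  refine ginibreIntegral_rowAction α (fun r => ?_) _
    { toFun := fun x j k =>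
        if j = i then (Complex.I * (x j k).1, Complex.I * (x j k).2) else x j k
      map_add' := fun x y => by
        ext j k <;> by_cases hj : j = i <;> simp [hj, mul_add]
      map_smul' := fun a x => by
        ext j k <;> by_cases hj : j = i <;> simp [hj, mul_left_comm] } ?_ (fun x => ?_) f
  · unfold blockPhase
    split_ifs <;> simp
  · refine LinearMap.ext fun x => ?_
    change _ = x
    ext j k <;> by_cases hj : j = i <;> simp [pow_succ, hj, ← mul_assoc]
  · ext ⟨j, a⟩ ⟨k, b⟩
    by_cases hj : j = i <;> fin_cases a <;> fin_cases b <;>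
      simp [quatMatrix, rowAction, blockPhase, hj]

/-- The signs of left multiplication by the quaternion unit `J` in the `i`-th row of blocks. -/
noncomputable def blockSign {n : ℕ} (i : Fin n) (r : Fin n × Fin 2) : ℂ :=
  if r = (i, 1) then -1 else 1

lemma ginibreIntegral_blockSign {n : ℕ} (α : ℝ) (i : Fin n)
    (f : Matrix (Fin n × Fin 2) (Fin n × Fin 2) ℂ → ℂ) :
    ginibreIntegral n α (fun G => f (rowAction (blockSign i) (Equiv.swap (i, 0) (i, 1)) G)) =
      ginibreIntegral n α f := by
  refine ginibreIntegral_rowAction α (fun r => ?_) _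
    { toFun := fun x j k =>
        if j = i then (-(starRingEnd ℂ) (x j k).2, (starRingEnd ℂ) (x j k).1) else x j k
      map_add' := fun x y => by
        ext j k <;> by_cases hj : j = i <;> simp [hj, add_comm]
      map_smul' := fun a x => by
        ext j k <;> by_cases hj : j = i <;> simp [hj] } ?_ (fun x => ?_) f
  · unfold blockSign
    split_ifs <;> simp
  · refine LinearMap.ext fun x => ?_
    change _ = x
    ext j k <;> by_cases hj : j = i <;> simp [pow_succ, hj]
  · ext ⟨j, a⟩ ⟨k, b⟩
    by_cases hj : j = i <;> fin_cases a <;> fin_cases b <;>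
      simp [quatMatrix, rowAction, blockSign, hj, Equiv.swap_apply_def]

/-- The exchange of the `i`-th and the `j`-th rows of blocks. -/
def blockSwap {n : ℕ} (i j : Fin n) : Equiv.Perm (Fin n × Fin 2) :=
  Equiv.swap (i, 0) (j, 0) * Equiv.swap (i, 1) (j, 1)

lemma blockSwap_apply {n : ℕ} (i j : Fin n) (r : Fin n × Fin 2) :
    blockSwap i j r = (Equiv.swap i j r.1, r.2) := by
  obtain ⟨k, a⟩ := r
  fin_cases a <;> by_cases hi : k = i <;> by_cases hj : k = j <;>
    simp [blockSwap, Equiv.swap_apply_def, hi, hj]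

lemma ginibreIntegral_blockSwap {n : ℕ} (α : ℝ) (i j : Fin n)
    (f : Matrix (Fin n × Fin 2) (Fin n × Fin 2) ℂ → ℂ) :
    ginibreIntegral n α (fun G => f (rowAction (fun _ => 1) (blockSwap i j) G)) =
      ginibreIntegral n α f := by
  refine ginibreIntegral_rowAction α (by simp) _
    (LinearMap.funLeft ℝ (Fin n → ℂ × ℂ) (Equiv.swap i j)) ?_ (fun x => ?_) f
  · refine LinearMap.ext fun x => ?_
    change _ = x
    ext k l <;> simp [pow_succ, LinearMap.funLeft_apply]
  · ext r c
    simp [quatMatrix, rowAction, blockSwap_apply, LinearMap.funLeft_apply]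

lemma prod_blockPhase {n : ℕ} (i : Fin n) (T : Finset (Fin n × Fin 2)) :
    ∏ r ∈ T, blockPhase i r =
      (if (i, 0) ∈ T then Complex.I else 1) * (if (i, 1) ∈ T then -Complex.I else 1) := by
  rw [← Finset.univ_inter T, ← Finset.prod_ite_mem, Fintype.prod_prod_type,
    Finset.prod_eq_single i]
  · simp [Fin.prod_univ_two, blockPhase]
  · intro k _ hk
    simp [blockPhase, hk]
  · simp

lemma ginibreIntegral_eq_zero {n : ℕ} (α : ℝ) (i : Fin n)
    {f : Matrix (Fin n × Fin 2) (Fin n × Fin 2) ℂ → ℂ} {a : ℂ} (ha : a ≠ 1)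
    (h : ∀ G, f (rowAction (blockPhase i) (Equiv.refl _) G) = a * f G) :
    ginibreIntegral n α f = 0 := by
  have h1 := ginibreIntegral_blockPhase α i f
  simp only [h, ginibreIntegral, mul_left_comm _ a, integral_const_mul] at h1
  have h2 : (a - 1) * ginibreIntegral n α f = 0 := by
    rw [sub_mul, one_mul, ginibreIntegral, h1, sub_self]
  exact (mul_eq_zero.1 h2).resolve_left (sub_ne_zero.2 ha)

lemma ginibreIntegral_det_mul_apply_of_mem {n : ℕ} (α : ℝ) (z : ℂ)
    {T : Finset (Fin n × Fin 2)} {c : Fin n × Fin 2} (hc : c ∈ T) :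
    ginibreIntegral n α (fun G => (mixedRows z T G).det * G c c) = 0 := by
  refine ginibreIntegral_eq_zero α c.1 (a := (∏ r ∈ T, blockPhase c.1 r) * blockPhase c.1 c) ?_
    fun G => ?_
  · obtain ⟨i, a⟩ := c
    have hI : Complex.I ≠ 1 := fun h => by simpa using congrArg Complex.re h
    have hI' : -Complex.I ≠ 1 := fun h => by simpa using congrArg Complex.re h
    rw [prod_blockPhase]
    fin_cases a
    · replace hc : (i, 0) ∈ T := hc
      by_cases h : (i, 1) ∈ T <;> simp [hc, h, blockPhase, hI]
      norm_num
    · replace hc : (i, 1) ∈ T := hc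
      by_cases h : (i, 0) ∈ T <;> simp [hc, h, blockPhase, hI']
      norm_num
  · rw [det_mixedRows_rowAction z _ (by simp)]
    simp [rowAction]
    ring

lemma ginibreIntegral_det_pinnedRow_blockSign {n : ℕ} (α : ℝ) (z : ℂ)
    {T : Finset (Fin n × Fin 2)} {i : Fin n} (h0 : (i, 0) ∈ T) (h1 : (i, 1) ∈ T)
    (c : Fin n × Fin 2) :
    ginibreIntegral n α (fun G => (pinnedRow z T (i, 0) c G).det) =
      ginibreIntegral n α (fun G => (pinnedRow z T (i, 1) c G).det) := by
  rw [← ginibreIntegral_blockSign α i]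
  congr 1
  ext G
  rw [det_pinnedRow_rowAction z _ (fun r hr => Equiv.swap_apply_of_ne_of_ne
    (fun h => hr (h ▸ h0)) (fun h => hr (h ▸ h1))) h0, Equiv.swap_apply_left,
    Equiv.Perm.sign_swap (by simp)]
  simp [blockSign, Finset.prod_ite_eq', h1]

lemma ginibreIntegral_det_pinnedRow_blockSwap {n : ℕ} (α : ℝ) (z : ℂ)
    {T : Finset (Fin n × Fin 2)} {i j : Fin n} (hi : ∀ a, (i, a) ∈ T) (hj : ∀ a, (j, a) ∈ T)
    (a : Fin 2) (c : Fin n × Fin 2) :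
    ginibreIntegral n α (fun G => (pinnedRow z T (i, a) c G).det) =
      ginibreIntegral n α (fun G => (pinnedRow z T (j, a) c G).det) := by
  rcases eq_or_ne i j with rfl | hij
  · rfl
  rw [← ginibreIntegral_blockSwap α i j]
  congr 1
  ext G
  have hfix : ∀ r ∉ T, blockSwap i j r = r := by
    rintro ⟨k, b⟩ hr
    have hki : k ≠ i := fun h => hr (h ▸ hi b)
    have hkj : k ≠ j := fun h => hr (h ▸ hj b)
    rw [blockSwap_apply, Equiv.swap_apply_of_ne_of_ne hki hkj]
  rw [det_pinnedRow_rowAction z _ hfix (hi a), blockSwap_apply, Equiv.swap_apply_left, blockSwap,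
    Equiv.Perm.sign_mul, Equiv.Perm.sign_swap (by simp [hij]), Equiv.Perm.sign_swap (by simp [hij])]
  simp

/-- All rows contribute equally to the average of `pinnedRow` determinants. -/
lemma ginibreIntegral_det_pinnedRow {n : ℕ} (α : ℝ) (z : ℂ)
    {T : Finset (Fin n × Fin 2)} {l l' : Fin n × Fin 2} (hl : l ∈ T) (hl' : l' ∈ T)
    (c : Fin n × Fin 2) :
    ginibreIntegral n α (fun G => (pinnedRow z T l c G).det) =
      ginibreIntegral n α (fun G => (pinnedRow z T l' c G).det) := by
  by_cases hT : ∀ i : Fin n, (i, 0) ∈ T ↔ (i, 1) ∈ T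
  · have hfull {i : Fin n} {a : Fin 2} (h : (i, a) ∈ T) : ∀ b, (i, b) ∈ T := by
      intro b
      fin_cases a <;> fin_cases b <;> simp_all
    have hzero {i : Fin n} (a : Fin 2) (h : ∀ b, (i, b) ∈ T) :
        ginibreIntegral n α (fun G => (pinnedRow z T (i, a) c G).det) =
          ginibreIntegral n α (fun G => (pinnedRow z T (i, 0) c G).det) := by
      fin_cases a
      · rfl
      · exact (ginibreIntegral_det_pinnedRow_blockSign α z (h 0) (h 1) c).symm
    obtain ⟨i, a⟩ := l
    obtain ⟨j, b⟩ := l'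
    rw [hzero a (hfull hl), hzero b (hfull hl'),
      ginibreIntegral_det_pinnedRow_blockSwap α z (hfull hl) (hfull hl')]
  · push Not at hT
    obtain ⟨i, hi⟩ := hT
    have hI : Complex.I ≠ 1 := fun h => by simpa using congrArg Complex.re h
    have hI' : -Complex.I ≠ 1 := fun h => by simpa using congrArg Complex.re h
    have key {r : Fin n × Fin 2} (hr : r ∈ T) :
        ginibreIntegral n α (fun G => (pinnedRow z T r c G).det) = 0 := by
      refine ginibreIntegral_eq_zero α i (a := ∏ r ∈ T, blockPhase i r) ?_ fun G => ?_
      · rw [prod_blockPhase]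
        rcases hi with ⟨h0, h1⟩ | ⟨h0, h1⟩ <;> simp [h0, h1, hI, hI']
      · rw [det_pinnedRow_rowAction z _ (by simp) hr]
        simp
    rw [key hl, key hl']

lemma ginibreIntegral_sum {n : ℕ} {α : ℝ} (hα : 0 ≤ α) {κ : Type*} (s : Finset κ)
    {f : κ → Matrix (Fin n × Fin 2) (Fin n × Fin 2) ℂ → ℂ}
    (hf : ∀ k, (fun x => f k (quatMatrix n x)) ∈ polyGrowth (Fin n → Fin n → ℂ × ℂ)) :
    ginibreIntegral n α (fun G => ∑ k ∈ s, f k G) = ∑ k ∈ s, ginibreIntegral n α (f k) := by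
  simp only [ginibreIntegral, Finset.mul_sum]
  exact integral_finsetSum _ fun k _ => integrable_inducedQuatGinibreWeight_mul n hα (hf k)

lemma ginibreIntegral_const_mul {n : ℕ} (α : ℝ) (a : ℂ)
    (f : Matrix (Fin n × Fin 2) (Fin n × Fin 2) ℂ → ℂ) :
    ginibreIntegral n α (fun G => a * f G) = a * ginibreIntegral n α f := by
  simp only [ginibreIntegral, mul_left_comm _ a, integral_const_mul]

lemma const_mem_polyGrowth {E : Type*} [NormedAddCommGroup E] (a : ℂ) :
    (fun _ => a) ∈ polyGrowth E := (polyGrowth E).algebraMap_mem a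

lemma det_mixedRows_mem_polyGrowth {n : ℕ} (z : ℂ) (T : Finset (Fin n × Fin 2)) :
    (fun x => (mixedRows z T (quatMatrix n x)).det) ∈ polyGrowth (Fin n → Fin n → ℂ × ℂ) := by
  refine det_mem_polyGrowth fun r k => ?_
  by_cases hr : r ∈ T
  · simpa only [mixedRows_of_mem _ hr] using quatMatrix_apply_mem_polyGrowth n r k
  · simpa only [mixedRows_of_notMem _ hr] using const_mem_polyGrowth _

lemma det_pinnedRow_mem_polyGrowth {n : ℕ} (z : ℂ) (T : Finset (Fin n × Fin 2))
    (l c : Fin n × Fin 2) :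
    (fun x => (pinnedRow z T l c (quatMatrix n x)).det) ∈
      polyGrowth (Fin n → Fin n → ℂ × ℂ) := by
  refine det_mem_polyGrowth fun r k => ?_
  simp only [pinnedRow, updateRow_apply, Pi.single_apply]
  split_ifs
  · exact quatMatrix_apply_mem_polyGrowth n l c
  · exact const_mem_polyGrowth _
  · by_cases hT : r ∈ T
    · simpa only [mixedRows_of_mem _ hT] using quatMatrix_apply_mem_polyGrowth n r k
    · simpa only [mixedRows_of_notMem _ hT] using const_mem_polyGrowth _

lemma sum_ginibreIntegral_det_pinnedRow {n : ℕ} {α : ℝ} (hα : 0 ≤ α) (z : ℂ)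
    {T : Finset (Fin n × Fin 2)} (hT : T.Nonempty) :
    ∑ c ∈ T, ginibreIntegral n α (fun G => (pinnedRow z T c c G).det) =
      ginibreIntegral n α (fun G => (mixedRows z T G).det) := by
  obtain ⟨l, hl⟩ := hT
  rw [Finset.sum_congr rfl fun c hc => ginibreIntegral_det_pinnedRow α z hc hl c,
    ← ginibreIntegral_sum hα T fun c => det_pinnedRow_mem_polyGrowth z T l c]
  simp only [sum_det_pinnedRow z hl]

lemma ginibreIntegral_det_mul_trace {n : ℕ} {α : ℝ} (hα : 0 ≤ α) (z : ℂ) :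
    ginibreIntegral n α (fun G => (z • (1 : Matrix _ _ ℂ) + G).det * G.trace) =
      z * ∑ T ∈ Finset.univ.erase ∅, ginibreIntegral n α (fun G => (mixedRows z T G).det) := by
  have hmem (T : Finset (Fin n × Fin 2)) (c : Fin n × Fin 2) :
      (fun x => (mixedRows z T (quatMatrix n x)).det * quatMatrix n x c c) ∈
        polyGrowth (Fin n → Fin n → ℂ × ℂ) :=
    mul_mem (det_mixedRows_mem_polyGrowth z T) (quatMatrix_apply_mem_polyGrowth n c c)
  have hexp : ginibreIntegral n α (fun G => (z • (1 : Matrix _ _ ℂ) + G).det * G.trace) =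
      ∑ c, ∑ T, ginibreIntegral n α (fun G => (mixedRows z T G).det * G c c) := by
    simp only [det_smul_one_add, trace, diag_apply, Finset.mul_sum, Finset.sum_mul]
    rw [ginibreIntegral_sum hα]
    · exact Finset.sum_congr rfl fun c _ => ginibreIntegral_sum hα Finset.univ fun T => hmem T c
    · intro c
      convert sum_mem (S := polyGrowth (Fin n → Fin n → ℂ × ℂ)) (t := Finset.univ)
        fun T _ => hmem T c using 1
      ext x
      rw [Finset.sum_apply]
  have hcol (c : Fin n × Fin 2) :
      ∑ T, ginibreIntegral n α (fun G => (mixedRows z T G).det * G c c) =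
        ∑ T with c ∈ T, z * ginibreIntegral n α (fun G => (pinnedRow z T c c G).det) := by
    rw [← Finset.sum_filter_add_sum_filter_not Finset.univ (fun T => c ∈ T),
      Finset.sum_eq_zero fun T hT =>
        ginibreIntegral_det_mul_apply_of_mem α z (Finset.mem_filter.1 hT).2, zero_add]
    refine Finset.sum_nbij' (insert c) (fun T => T.erase c) ?_ ?_ ?_ ?_ ?_
    · simp
    · simp
    · intro T hT
      exact Finset.erase_insert (Finset.mem_filter.1 hT).2
    · intro T hT
      exact Finset.insert_erase (Finset.mem_filter.1 hT).2
    · intro T hT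
      simp only [det_mixedRows_mul_apply z (Finset.mem_filter.1 hT).2, ginibreIntegral_const_mul]
  rw [hexp, Finset.sum_congr rfl fun c _ => hcol c,
    Finset.sum_comm' (t' := Finset.univ.erase ∅) (s' := fun T => T)
      (fun c T => by
        simpa using fun h : c ∈ T => Finset.ne_empty_of_mem h), Finset.mul_sum]
  refine Finset.sum_congr rfl fun T hT => ?_
  rw [← Finset.mul_sum, sum_ginibreIntegral_det_pinnedRow hα z
    (Finset.nonempty_iff_ne_empty.2 (Finset.ne_of_mem_erase hT))]

lemma ginibreIntegral_det_smul_one_add {n : ℕ} {α : ℝ} (hα : 0 ≤ α) (z : ℂ) :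
    ginibreIntegral n α (fun G => (z • (1 : Matrix _ _ ℂ) + G).det) =
      ∑ T, ginibreIntegral n α (fun G => (mixedRows z T G).det) := by
  simp only [det_smul_one_add]
  exact ginibreIntegral_sum hα _ fun T => det_mixedRows_mem_polyGrowth z T

lemma ginibreIntegral_const (n : ℕ) (α : ℝ) (a : ℂ) :
    ginibreIntegral n α (fun _ => a) =
      ((∫ x, inducedQuatGinibreWeight n α x : ℝ) : ℂ) * a := by
  rw [ginibreIntegral, integral_mul_const, integral_complex_ofReal]

/-- The odd-degree skew orthogonal polynomial for the induced quaternion real Ginibre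
ensemble is a monomial: `z ⟨det (z I - G)⟩ + ⟨det (z I - G) Tr G⟩ = z^(2n+1)`. -/
theorem inducedQuatGinibre_odd_skew_orthogonal_poly (n : ℕ) (hn : 0 < n)
    (α : ℝ) (hα : 0 ≤ α) (z : ℂ) :
    z * ((∫ x : Fin n → Fin n → ℂ × ℂ,
          (inducedQuatGinibreWeight n α x : ℂ) *
            (z • (1 : Matrix (Fin n × Fin 2) (Fin n × Fin 2) ℂ) - quatMatrix n x).det) /
        ((∫ x : Fin n → Fin n → ℂ × ℂ, inducedQuatGinibreWeight n α x : ℝ) : ℂ))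
      + (∫ x : Fin n → Fin n → ℂ × ℂ,
          (inducedQuatGinibreWeight n α x : ℂ) *
            ((z • (1 : Matrix (Fin n × Fin 2) (Fin n × Fin 2) ℂ) - quatMatrix n x).det
              * (quatMatrix n x).trace)) /
        ((∫ x : Fin n → Fin n → ℂ × ℂ, inducedQuatGinibreWeight n α x : ℝ) : ℂ)
      = z ^ (2 * n + 1) := by
  have hZ : ((∫ x, inducedQuatGinibreWeight n α x : ℝ) : ℂ) ≠ 0 :=
    Complex.ofReal_ne_zero.2 (integral_inducedQuatGinibreWeight_pos n hα).ne'
  have hdet := ginibreIntegral_neg n α (fun G => (z • (1 : Matrix _ _ ℂ) - G).det)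
  have htr := ginibreIntegral_neg n α (fun G => (z • (1 : Matrix _ _ ℂ) - G).det * G.trace)
  have hneg := ginibreIntegral_const_mul α (-1)
    (fun G : Matrix (Fin n × Fin 2) (Fin n × Fin 2) ℂ =>
      (z • (1 : Matrix _ _ ℂ) + G).det * G.trace)
  simp only [sub_neg_eq_add, trace_neg, mul_neg, neg_one_mul] at hdet htr hneg
  rw [ginibreIntegral_det_smul_one_add hα] at hdet
  rw [hneg, ginibreIntegral_det_mul_trace hα] at htr
  have hempty : ginibreIntegral n α (fun G => (mixedRows z ∅ G).det) =
      ((∫ x, inducedQuatGinibreWeight n α x : ℝ) : ℂ) * z ^ (2 * n) := by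
    simp only [det_mixedRows_empty, ginibreIntegral_const]
    simp [mul_comm]
  have hsplit := Finset.add_sum_erase Finset.univ
    (fun T => ginibreIntegral n α (fun G => (mixedRows z T G).det)) (Finset.mem_univ ∅)
  rw [hempty] at hsplit
  rw [← hsplit] at hdet
  unfold ginibreIntegral at hdet htr
  rw [← hdet, ← htr]
  field_simp
  ring
end

section
/- Let n be a positive integer and let α₁, α₂ be real parameters with α₁ ≥ 0 and α₂ > α₁ + 3n + 1. For G drawn from the real spherical ensemble of size 2n with parameters (α₁, α₂), and for every complex number z, ⟨det(z·I − G)⟩ = z^{2n}. -/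
open MeasureTheory Matrix

/-- The (unnormalized) density of the real spherical ensemble of size `N` with
parameters `(α₁, α₂)`: `det(Gᵀ G)^{α₁} det(I + Gᵀ G)^{-α₂}`. -/
noncomputable def sphericalRealWeight (N : ℕ) (α₁ α₂ : ℝ) (g : Fin N → Fin N → ℝ) : ℝ :=
  ((Matrix.of g)ᵀ * Matrix.of g).det ^ α₁ *
    (1 + (Matrix.of g)ᵀ * Matrix.of g).det ^ (-α₂)

lemma Matrix.PosDef.exists_eq_transpose_mul_self {N : ℕ} {A : Matrix (Fin N) (Fin N) ℝ}
    (hA : A.PosDef) : ∃ B : Matrix (Fin N) (Fin N) ℝ, A = Bᵀ * B ∧ B.det ≠ 0 := by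
  open scoped MatrixOrder in
  obtain ⟨B, hB⟩ := CStarAlgebra.nonneg_iff_eq_star_mul_self.mp hA.posSemidef.nonneg
  have hB' : A = Bᵀ * B := by simpa [star_eq_conjTranspose] using hB
  refine ⟨B, hB', fun h => hA.det_pos.ne' ?_⟩
  rw [hB', det_mul, h, mul_zero]

lemma Matrix.det_transpose_mul_self_add_vecMulVec {N : ℕ} (B : Matrix (Fin N) (Fin N) ℝ)
    (u : Fin N → ℝ) :
    (Bᵀ * B + vecMulVec (Bᵀ *ᵥ u) (Bᵀ *ᵥ u)).det = (Bᵀ * B).det * (1 + u ⬝ᵥ u) := by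
  have h : Bᵀ * B + vecMulVec (Bᵀ *ᵥ u) (Bᵀ *ᵥ u) = Bᵀ * (1 + vecMulVec u u) * B := by
    rw [Matrix.mul_add, Matrix.add_mul, Matrix.mul_one, mul_vecMulVec, vecMulVec_mul,
      mulVec_transpose]
  rw [h, det_mul, det_mul, det_mul, vecMulVec_eq Unit, det_one_add_replicateCol_mul_replicateRow]
  ring

lemma Matrix.posSemidef_sum_vecMulVec {ι : Type*} {N : ℕ} (s : Finset ι) (g : ι → Fin N → ℝ) :
    (∑ i ∈ s, vecMulVec (g i) (g i)).PosSemidef :=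
  posSemidef_sum s fun i _ => by simpa using posSemidef_vecMulVec_self_star (g i)

lemma Matrix.PosDef.det_le_det_add_sum_vecMulVec {ι : Type*} {N : ℕ}
    {A : Matrix (Fin N) (Fin N) ℝ} (hA : A.PosDef) (s : Finset ι) (g : ι → Fin N → ℝ) :
    A.det ≤ (A + ∑ i ∈ s, vecMulVec (g i) (g i)).det := by
  classical
  induction s using Finset.induction_on with
  | empty => simp
  | insert a s ha ih =>
    refine ih.trans ?_
    have hP := hA.add_posSemidef (posSemidef_sum_vecMulVec s g)
    rw [Finset.sum_insert ha, add_comm (vecMulVec _ _), ← add_assoc]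
    obtain ⟨B, hB, hdet⟩ := hP.exists_eq_transpose_mul_self
    have hu : g a = Bᵀ *ᵥ (Bᵀ⁻¹ *ᵥ g a) := by
      rw [mulVec_mulVec, mul_nonsing_inv _ (by simpa using hdet), one_mulVec]
    rw [hu, hB, det_transpose_mul_self_add_vecMulVec]
    refine le_mul_of_one_le_right (hB ▸ hP.det_pos.le) ?_
    have := dotProduct_star_self_nonneg (Bᵀ⁻¹ *ᵥ g a)
    simp only [star_trivial] at this
    linarith

lemma Matrix.transpose_mul_self_eq_sum_vecMulVec {m : Type*} [Fintype m] {N : ℕ}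
    (M : Matrix m (Fin N) ℝ) : Mᵀ * M = ∑ i, vecMulVec (M i) (M i) := by
  ext j k
  simp [mul_apply, sum_apply, vecMulVec_apply]

/-- The integral of `(1 + u ⬝ᵥ u) ^ (-γ)` over `ℝ^N` is finite when `γ > N / 2`. -/
lemma lintegral_one_add_dotProduct_self_rpow_lt_top {N : ℕ} {γ : ℝ} (hγ : (N : ℝ) / 2 < γ) :
    ∫⁻ u : Fin N → ℝ, ENNReal.ofReal ((1 + u ⬝ᵥ u) ^ (-γ)) < ⊤ := by
  have hint := integrable_rpow_neg_one_add_norm_sq (E := Fin N → ℝ) (μ := volume) (r := 2 * γ)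
    (by simp; linarith)
  refine lt_of_le_of_lt (lintegral_mono fun u => ENNReal.ofReal_le_ofReal ?_)
    hint.lintegral_lt_top
  have hγ0 : 0 ≤ γ := le_trans (by positivity) hγ.le
  have hnorm : ‖u‖ ^ 2 ≤ u ⬝ᵥ u := by
    have hnn : 0 ≤ u ⬝ᵥ u := by simpa using dotProduct_star_self_nonneg u
    rw [← Real.le_sqrt (norm_nonneg _) hnn, pi_norm_le_iff_of_nonneg (Real.sqrt_nonneg _)]
    intro i
    rw [Real.norm_eq_abs]
    refine Real.abs_le_sqrt ?_
    rw [dotProduct, pow_two]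
    exact Finset.single_le_sum (f := fun i => u i * u i) (fun i _ => mul_self_nonneg _)
      (Finset.mem_univ i)
  rw [show -(2 * γ) / 2 = -γ by ring]
  exact Real.rpow_le_rpow_of_nonpos (by positivity) (by linarith) (by linarith)

lemma Matrix.PosDef.lintegral_det_add_vecMulVec_rpow {N : ℕ} {A : Matrix (Fin N) (Fin N) ℝ}
    (hA : A.PosDef) (γ : ℝ) :
    ∫⁻ g : Fin N → ℝ, ENNReal.ofReal ((A + vecMulVec g g).det ^ (-γ)) =
      ENNReal.ofReal (A.det ^ (-(γ - 1 / 2))) *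
        ∫⁻ u : Fin N → ℝ, ENNReal.ofReal ((1 + u ⬝ᵥ u) ^ (-γ)) := by
  obtain ⟨B, hB, hdet⟩ := hA.exists_eq_transpose_mul_self
  have hdetT : Bᵀ.det ≠ 0 := by simpa using hdet
  have hmap := Real.map_matrix_volume_pi_eq_smul_volume_pi hdetT
  have hvol : (volume : Measure (Fin N → ℝ)) =
      ENNReal.ofReal |B.det| • Measure.map (toLin' Bᵀ) volume := by
    rw [hmap, smul_smul, ← ENNReal.ofReal_mul (abs_nonneg _), det_transpose, ← abs_mul,
      mul_inv_cancel₀ hdet, abs_one, ENNReal.ofReal_one, one_smul]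
  have hpos := hA.det_pos
  have hsq : |B.det| = A.det ^ (1 / 2 : ℝ) := by
    rw [hB, det_mul, det_transpose, ← Real.sqrt_eq_rpow, Real.sqrt_mul_self_eq_abs]
  have hmeas : Measurable fun g : Fin N → ℝ =>
      ENNReal.ofReal ((A + vecMulVec g g).det ^ (-γ)) := by
    have hc : Continuous fun g : Fin N → ℝ => (A + vecMulVec g g).det := by fun_prop
    exact (hc.measurable.pow_const _).ennreal_ofReal
  conv_lhs => rw [hvol]
  rw [lintegral_smul_measure,
    lintegral_map hmeas (toLin' Bᵀ).continuous_of_finiteDimensional.measurable,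
    ← lintegral_const_mul' _ _ ENNReal.ofReal_ne_top, smul_eq_mul,
    ← lintegral_const_mul' _ _ ENNReal.ofReal_ne_top]
  refine lintegral_congr fun u => ?_
  have hnn : 0 ≤ u ⬝ᵥ u := by simpa using dotProduct_star_self_nonneg u
  rw [toLin'_apply, hB, det_transpose_mul_self_add_vecMulVec, ← hB,
    Real.mul_rpow hpos.le (by linarith), ← ENNReal.ofReal_mul (abs_nonneg _),
    ← ENNReal.ofReal_mul (by positivity), hsq, ← mul_assoc, ← Real.rpow_add hpos]
  congr 3
  ring_nf

lemma lintegral_det_add_sum_vecMulVec_rpow_lt_top {N : ℕ} (k : ℕ) {γ : ℝ}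
    (hγ : ((N : ℝ) + k) / 2 < γ + 1 / 2) {A : Matrix (Fin N) (Fin N) ℝ} (hA : A.PosDef) :
    ∫⁻ g : Fin k → Fin N → ℝ,
      ENNReal.ofReal ((A + ∑ i, vecMulVec (g i) (g i)).det ^ (-γ)) < ⊤ := by
  induction k generalizing γ with
  | zero =>
    simp [volume_pi]
  | succ k ih =>
    push_cast at hγ
    have hk : (0 : ℝ) ≤ k := k.cast_nonneg
    rw [(volume_preserving_piFinSuccAbove (fun _ : Fin (k + 1) => Fin N → ℝ) 0).symm
      |>.lintegral_map_equiv, Measure.volume_eq_prod, lintegral_prod_symm']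
    · have hstep : ∀ g : Fin k → Fin N → ℝ, ∫⁻ x : Fin N → ℝ, ENNReal.ofReal
          ((A + ∑ i, vecMulVec (((MeasurableEquiv.piFinSuccAbove
            (fun _ : Fin (k + 1) => Fin N → ℝ) 0).symm (x, g)) i)
            (((MeasurableEquiv.piFinSuccAbove
            (fun _ : Fin (k + 1) => Fin N → ℝ) 0).symm (x, g)) i)).det ^ (-γ)) =
          ENNReal.ofReal ((A + ∑ i, vecMulVec (g i) (g i)).det ^ (-(γ - 1 / 2))) *
            ∫⁻ u : Fin N → ℝ, ENNReal.ofReal ((1 + u ⬝ᵥ u) ^ (-γ)) := by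
        intro g
        rw [← (hA.add_posSemidef
          (posSemidef_sum_vecMulVec Finset.univ g)).lintegral_det_add_vecMulVec_rpow]
        refine lintegral_congr fun x => ?_
        simp [Fin.sum_univ_succ, MeasurableEquiv.piFinSuccAbove, add_comm,
          add_left_comm]
      have hfin : ∫⁻ u : Fin N → ℝ, ENNReal.ofReal ((1 + u ⬝ᵥ u) ^ (-γ)) < ⊤ :=
        lintegral_one_add_dotProduct_self_rpow_lt_top (by linarith)
      simp_rw [hstep]
      rw [lintegral_mul_const' _ _ hfin.ne]
      exact ENNReal.mul_lt_top (ih (by linarith)) hfin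
    · refine Measurable.comp (g := fun g : Fin (k + 1) → Fin N → ℝ =>
        ENNReal.ofReal ((A + ∑ i, vecMulVec (g i) (g i)).det ^ (-γ))) ?_
        (MeasurableEquiv.measurable _)
      have hc : Continuous fun g : Fin (k + 1) → Fin N → ℝ =>
        (A + ∑ i, vecMulVec (g i) (g i)).det := by fun_prop
      exact (hc.measurable.pow_const _).ennreal_ofReal

lemma one_add_transpose_mul_self_posDef {N : ℕ} (g : Fin N → Fin N → ℝ) :
    (1 + (of g)ᵀ * of g).PosDef := by
  rw [transpose_mul_self_eq_sum_vecMulVec]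
  exact PosDef.one.add_posSemidef (posSemidef_sum_vecMulVec _ _)

lemma integrable_det_one_add_transpose_mul_self_rpow {N : ℕ} {γ : ℝ} (hγ : (N : ℝ) < γ + 1 / 2) :
    Integrable fun g : Fin N → Fin N → ℝ => (1 + (of g)ᵀ * of g).det ^ (-γ) := by
  have hc : Continuous fun g : Fin N → Fin N → ℝ => (1 + (of g)ᵀ * of g).det :=
    Continuous.matrix_det (continuous_const.add
      ((Continuous.matrix_transpose continuous_id).matrix_mul continuous_id))
  refine ⟨(hc.measurable.pow_const _).aestronglyMeasurable, ?_⟩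
  rw [hasFiniteIntegral_iff_ofReal (.of_forall fun g =>
    Real.rpow_nonneg (one_add_transpose_mul_self_posDef g).det_pos.le _)]
  simp_rw [transpose_mul_self_eq_sum_vecMulVec]
  exact lintegral_det_add_sum_vecMulVec_rpow_lt_top N (by linarith) PosDef.one

lemma det_transpose_mul_self_le_det_one_add {N : ℕ} (g : Fin N → Fin N → ℝ) :
    ((of g)ᵀ * of g).det ≤ (1 + (of g)ᵀ * of g).det := by
  have hps : ((of g)ᵀ * of g).PosSemidef := by
    simpa using posSemidef_conjTranspose_mul_self (of g)
  by_cases h : ((of g)ᵀ * of g).det = 0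
  · exact h ▸ (one_add_transpose_mul_self_posDef g).det_pos.le
  · have := (hps.posDef_iff_det_ne_zero.mpr h).det_le_det_add_sum_vecMulVec Finset.univ
      (1 : Matrix (Fin N) (Fin N) ℝ)
    rwa [← transpose_mul_self_eq_sum_vecMulVec, transpose_one, one_mul, add_comm] at this

lemma one_add_sq_le_det_one_add {N : ℕ} (g : Fin N → Fin N → ℝ) (i j : Fin N) :
    1 + g i j ^ 2 ≤ (1 + (of g)ᵀ * of g).det := by
  have hps : (vecMulVec (g i) (g i)).PosSemidef := by
    simpa using posSemidef_vecMulVec_self_star (g i)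
  have h := (PosDef.one.add_posSemidef hps).det_le_det_add_sum_vecMulVec (Finset.univ.erase i) g
  rw [add_assoc, Finset.add_sum_erase _ (fun i => vecMulVec (g i) (g i)) (Finset.mem_univ i)] at h
  rw [transpose_mul_self_eq_sum_vecMulVec]
  refine le_trans ?_ h
  rw [vecMulVec_eq Unit, det_one_add_replicateCol_mul_replicateRow, dotProduct, pow_two]
  gcongr
  exact Finset.single_le_sum (f := fun j => g i j * g i j) (fun i _ => mul_self_nonneg _)
      (Finset.mem_univ j)

lemma sphericalRealWeight_nonneg {N : ℕ} (α₁ α₂ : ℝ) (g : Fin N → Fin N → ℝ) :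
    0 ≤ sphericalRealWeight N α₁ α₂ g := by
  have hps : ((of g)ᵀ * of g).PosSemidef := by
    simpa using posSemidef_conjTranspose_mul_self (of g)
  exact mul_nonneg (Real.rpow_nonneg hps.det_nonneg _)
    (Real.rpow_nonneg (one_add_transpose_mul_self_posDef g).det_pos.le _)

lemma continuous_sphericalRealWeight {N : ℕ} {α₁ : ℝ} (hα₁ : 0 ≤ α₁) (α₂ : ℝ) :
    Continuous (sphericalRealWeight N α₁ α₂) := by
  have hc : Continuous fun g : Fin N → Fin N → ℝ => (of g)ᵀ * of g :=
    (Continuous.matrix_transpose continuous_id).matrix_mul continuous_id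
  exact (hc.matrix_det.rpow_const fun _ => Or.inr hα₁).mul
    ((continuous_const.add hc).matrix_det.rpow_const fun g =>
      Or.inl (one_add_transpose_mul_self_posDef g).det_pos.ne')

lemma sphericalRealWeight_le {N : ℕ} {α₁ : ℝ} (hα₁ : 0 ≤ α₁) (α₂ : ℝ) (g : Fin N → Fin N → ℝ) :
    sphericalRealWeight N α₁ α₂ g ≤ (1 + (of g)ᵀ * of g).det ^ (-(α₂ - α₁)) := by
  have hps : ((of g)ᵀ * of g).PosSemidef := by
    simpa using posSemidef_conjTranspose_mul_self (of g)
  have hpos := (one_add_transpose_mul_self_posDef g).det_pos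
  rw [show -(α₂ - α₁) = α₁ + -α₂ by ring, Real.rpow_add hpos, sphericalRealWeight]
  gcongr
  · exact hps.det_nonneg
  · exact det_transpose_mul_self_le_det_one_add g

/-- The matrix `z I - G` with the rows of `G` indexed by `s` replaced by zero. -/
noncomputable def maskedCharmatrix {N : ℕ} (z : ℂ) (s : Finset (Fin N)) (g : Fin N → Fin N → ℝ) :
    Matrix (Fin N) (Fin N) ℂ :=
  of fun i j => z * (1 : Matrix (Fin N) (Fin N) ℂ) i j - if i ∈ s then 0 else (g i j : ℂ)

lemma continuous_det_maskedCharmatrix {N : ℕ} (z : ℂ) (s : Finset (Fin N)) :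
    Continuous fun g => (maskedCharmatrix z s g).det := by
  refine Continuous.matrix_det (continuous_matrix fun i j => ?_)
  simp only [maskedCharmatrix, of_apply]
  split_ifs <;> fun_prop

lemma norm_det_maskedCharmatrix_le {N : ℕ} (z : ℂ) (s : Finset (Fin N))
    (g : Fin N → Fin N → ℝ) :
    ‖(maskedCharmatrix z s g).det‖ ≤
      N.factorial * (‖z‖ + 1) ^ N * (1 + (of g)ᵀ * of g).det ^ ((N : ℝ) / 2) := by
  set D := (1 + (of g)ᵀ * of g).det with hD
  have hDpos : 0 < D := (one_add_transpose_mul_self_posDef g).det_pos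
  have hentry : ∀ i j, NormedField.toAbsoluteValue ℂ (maskedCharmatrix z s g i j) ≤
      (‖z‖ + 1) * √D := by
    intro i j
    have h1 := one_add_sq_le_det_one_add g i j
    rw [← hD] at h1
    have hg : |g i j| ≤ √D := Real.abs_le_sqrt (by linarith)
    have hone : 1 ≤ √D := Real.one_le_sqrt.mpr (by nlinarith [sq_nonneg (g i j)])
    have hz : ‖z * (1 : Matrix (Fin N) (Fin N) ℂ) i j‖ ≤ ‖z‖ := by
      rw [one_apply]; split_ifs <;> simp
    have hm : ‖(if i ∈ s then 0 else (g i j : ℂ))‖ ≤ √D := by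
      split_ifs
      · simp
      · simpa using hg
    change ‖z * (1 : Matrix (Fin N) (Fin N) ℂ) i j - if i ∈ s then 0 else (g i j : ℂ)‖ ≤ _
    nlinarith [norm_sub_le (z * (1 : Matrix (Fin N) (Fin N) ℂ) i j)
      (if i ∈ s then 0 else (g i j : ℂ)), norm_nonneg z]
  have h := det_le hentry
  rw [Fintype.card_fin, nsmul_eq_mul, mul_pow, Real.sqrt_eq_rpow, ← Real.rpow_natCast (D ^ _),
    ← Real.rpow_mul hDpos.le, ← mul_assoc] at h
  rw [show (N : ℝ) / 2 = 1 / 2 * N by ring]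
  exact h

lemma integrable_sphericalRealWeight {N : ℕ} {α₁ α₂ : ℝ} (hα₁ : 0 ≤ α₁)
    (hα₂ : α₁ + N < α₂ + 1 / 2) : Integrable (sphericalRealWeight N α₁ α₂) := by
  refine (integrable_det_one_add_transpose_mul_self_rpow (γ := α₂ - α₁) (by linarith)).mono'
    (continuous_sphericalRealWeight hα₁ α₂).aestronglyMeasurable (.of_forall fun g => ?_)
  rw [Real.norm_of_nonneg (sphericalRealWeight_nonneg _ _ g)]
  exact sphericalRealWeight_le hα₁ α₂ g

lemma integrable_sphericalRealWeight_mul_det {N : ℕ} {α₁ α₂ : ℝ} (hα₁ : 0 ≤ α₁)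
    (hα₂ : α₁ + 3 / 2 * N < α₂ + 1 / 2) (z : ℂ) (s : Finset (Fin N)) :
    Integrable fun g => (sphericalRealWeight N α₁ α₂ g : ℂ) * (maskedCharmatrix z s g).det := by
  refine ((integrable_det_one_add_transpose_mul_self_rpow (N := N) (γ := α₂ - α₁ - N / 2)
    (by linarith)).const_mul (N.factorial * (‖z‖ + 1) ^ N)).mono'
    ((Complex.continuous_ofReal.comp (continuous_sphericalRealWeight hα₁ α₂)).mul
      (continuous_det_maskedCharmatrix z s)).aestronglyMeasurable (.of_forall fun g => ?_)
  have hpos := (one_add_transpose_mul_self_posDef g).det_pos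
  rw [norm_mul, Complex.norm_real, Real.norm_of_nonneg (sphericalRealWeight_nonneg _ _ g)]
  refine (mul_le_mul (sphericalRealWeight_le hα₁ α₂ g) (norm_det_maskedCharmatrix_le z s g)
    (norm_nonneg _) (by positivity)).trans_eq ?_
  rw [show -(α₂ - α₁ - N / 2) = -(α₂ - α₁) + N / 2 by ring, Real.rpow_add hpos]
  ring

lemma integral_sphericalRealWeight_pos {N : ℕ} {α₁ α₂ : ℝ} (hα₁ : 0 ≤ α₁)
    (hα₂ : α₁ + N < α₂ + 1 / 2) : 0 < ∫ g, sphericalRealWeight N α₁ α₂ g := by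
  refine integral_pos_of_integrable_nonneg_nonzero (x := (1 : Matrix (Fin N) (Fin N) ℝ))
    (continuous_sphericalRealWeight hα₁ α₂) (integrable_sphericalRealWeight hα₁ hα₂)
    (sphericalRealWeight_nonneg α₁ α₂) ?_
  have hone : (of (1 : Matrix (Fin N) (Fin N) ℝ))ᵀ * of (1 : Matrix (Fin N) (Fin N) ℝ) = 1 := by
    simp [show of (1 : Matrix (Fin N) (Fin N) ℝ) = 1 from rfl]
  have hpos := (one_add_transpose_mul_self_posDef (1 : Matrix (Fin N) (Fin N) ℝ)).det_pos
  refine mul_ne_zero ?_ (Real.rpow_pos_of_pos hpos _).ne'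
  rw [hone, det_one, Real.one_rpow]
  exact one_ne_zero

/-- Negating the row `a`. -/
def negRow {N : ℕ} (a : Fin N) (g : Fin N → Fin N → ℝ) : Fin N → Fin N → ℝ :=
  fun i => if i = a then -g i else g i

lemma measurePreserving_negRow {N : ℕ} (a : Fin N) :
    MeasurePreserving (negRow a) := by
  refine volume_preserving_pi (f := fun i (x : Fin N → ℝ) => if i = a then -x else x) fun i => ?_
  by_cases h : i = a
  · simpa [h] using Measure.measurePreserving_neg (volume : Measure (Fin N → ℝ))
  · simpa [h, Function.id_def] using MeasurePreserving.id (volume : Measure (Fin N → ℝ))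

lemma sphericalRealWeight_negRow {N : ℕ} (α₁ α₂ : ℝ) (a : Fin N) (g : Fin N → Fin N → ℝ) :
    sphericalRealWeight N α₁ α₂ (negRow a g) = sphericalRealWeight N α₁ α₂ g := by
  have h : (of (negRow a g))ᵀ * of (negRow a g) = (of g)ᵀ * of g := by
    rw [transpose_mul_self_eq_sum_vecMulVec, transpose_mul_self_eq_sum_vecMulVec]
    refine Finset.sum_congr rfl fun i _ => ?_
    change vecMulVec (negRow a g i) (negRow a g i) = vecMulVec (g i) (g i)
    unfold negRow
    split_ifs <;> simp
  rw [sphericalRealWeight, sphericalRealWeight, h]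

lemma det_maskedCharmatrix_add_negRow {N : ℕ} (z : ℂ) {s : Finset (Fin N)} {a : Fin N}
    (ha : a ∉ s) (g : Fin N → Fin N → ℝ) :
    (maskedCharmatrix z s g).det + (maskedCharmatrix z s (negRow a g)).det =
      2 * (maskedCharmatrix z (insert a s) g).det := by
  set M := maskedCharmatrix z (insert a s) g with hM
  have h1 : maskedCharmatrix z s g = M.updateRow a (M a + fun j => -(g a j : ℂ)) := by
    ext i j
    by_cases h : i = a
    · subst h; simp [hM, maskedCharmatrix, ha, sub_eq_add_neg]
    · simp [hM, maskedCharmatrix, h, updateRow_ne]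
  have h2 : maskedCharmatrix z s (negRow a g) =
      M.updateRow a (M a + (-1 : ℂ) • fun j => -(g a j : ℂ)) := by
    ext i j
    by_cases h : i = a
    · subst h; simp [hM, maskedCharmatrix, ha, sub_eq_add_neg, negRow]
    · simp [hM, maskedCharmatrix, h, updateRow_ne, negRow]
  rw [h1, h2, det_updateRow_add, det_updateRow_add, det_updateRow_smul, updateRow_eq_self]
  ring

lemma integral_sphericalRealWeight_mul_det_maskedCharmatrix {N : ℕ} {α₁ α₂ : ℝ} (hα₁ : 0 ≤ α₁)
    (hα₂ : α₁ + 3 / 2 * N < α₂ + 1 / 2) (z : ℂ) (s : Finset (Fin N)) :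
    ∫ g, (sphericalRealWeight N α₁ α₂ g : ℂ) * (maskedCharmatrix z ∅ g).det =
      ∫ g, (sphericalRealWeight N α₁ α₂ g : ℂ) * (maskedCharmatrix z s g).det := by
  induction s using Finset.induction_on with
  | empty => rfl
  | insert a s ha ih =>
    rw [ih]
    have hint := integrable_sphericalRealWeight_mul_det hα₁ hα₂ z s
    have hmp := measurePreserving_negRow a
    have hflip : ∫ g, (sphericalRealWeight N α₁ α₂ g : ℂ) * (maskedCharmatrix z s g).det =
        ∫ g, (sphericalRealWeight N α₁ α₂ g : ℂ) *
          (maskedCharmatrix z s (negRow a g)).det := by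
      conv_lhs => rw [← hmp.map_eq]
      rw [integral_map hmp.measurable.aemeasurable (hmp.map_eq.symm ▸ hint.aestronglyMeasurable)]
      simp_rw [sphericalRealWeight_negRow]
    have hint' : Integrable fun g => (sphericalRealWeight N α₁ α₂ g : ℂ) *
        (maskedCharmatrix z s (negRow a g)).det := by
      have := hmp.integrable_comp_of_integrable hint
      simpa only [Function.comp_def, sphericalRealWeight_negRow] using this
    have hsum := integral_add hint hint'
    simp_rw [← mul_add, det_maskedCharmatrix_add_negRow z ha, mul_left_comm _ (2 : ℂ)] at hsum
    rw [integral_const_mul, ← hflip, ← two_mul] at hsum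
    exact (mul_left_cancel₀ two_ne_zero hsum).symm

/-- The even-degree skew orthogonal polynomial for the real spherical ensemble:
`⟨det (z I - G)⟩ = z^(2n)`. -/
theorem realSpherical_even_skew_orthogonal_poly (n : ℕ) (hn : 0 < n)
    (α₁ α₂ : ℝ) (hα₁ : 0 ≤ α₁) (hα₂ : α₁ + 3 * n + 1 < α₂) (z : ℂ) :
    (∫ g : Fin (2 * n) → Fin (2 * n) → ℝ,
        (sphericalRealWeight (2 * n) α₁ α₂ g : ℂ) *
          (z • (1 : Matrix (Fin (2 * n)) (Fin (2 * n)) ℂ)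
            - (Matrix.of g).map ((↑) : ℝ → ℂ)).det) /
      ((∫ g : Fin (2 * n) → Fin (2 * n) → ℝ, sphericalRealWeight (2 * n) α₁ α₂ g : ℝ) : ℂ)
      = z ^ (2 * n) := by
  have hN : (0 : ℝ) ≤ n := n.cast_nonneg
  have hβ : α₁ + 3 / 2 * ((2 * n : ℕ) : ℝ) < α₂ + 1 / 2 := by push_cast; linarith
  have hpos := integral_sphericalRealWeight_pos (N := 2 * n) (α₂ := α₂) hα₁
    (by push_cast; linarith)
  have hne : ((∫ g, sphericalRealWeight (2 * n) α₁ α₂ g : ℝ) : ℂ) ≠ 0 := by exact_mod_cast hpos.ne'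
  rw [div_eq_iff hne]
  have hempty : ∀ g : Fin (2 * n) → Fin (2 * n) → ℝ, maskedCharmatrix z ∅ g =
      z • (1 : Matrix (Fin (2 * n)) (Fin (2 * n)) ℂ) - (of g).map ((↑) : ℝ → ℂ) := by
    intro g
    ext i j
    simp [maskedCharmatrix]
  have huniv : ∀ g : Fin (2 * n) → Fin (2 * n) → ℝ,
      (maskedCharmatrix z Finset.univ g).det = z ^ (2 * n) := by
    intro g
    have : maskedCharmatrix z Finset.univ g =
        z • (1 : Matrix (Fin (2 * n)) (Fin (2 * n)) ℂ) := by
      ext i j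
      simp [maskedCharmatrix]
    simp [this]
  have h := integral_sphericalRealWeight_mul_det_maskedCharmatrix hα₁ hβ z Finset.univ
  simp_rw [hempty, huniv] at h
  rw [h, integral_mul_const, integral_complex_ofReal, mul_comm]
end
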